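/- Let $t \in (1,2)$ and let $B \subset \mathbb{R}^2$ be a Borel set with $\dim_H B > t$. Then the exceptional set $E$ of points $x\in\mathbb{R}^2$ for which $\mathcal{H}^1(\{e \in S^1 : \dim_H(B\cap\ell_{x,e}) \ge t-1\}) = 0$ satisfies $\dim_H E \le 2-t$. Here $\ell_{x,e}$ is the line through $x$ in direction $e$. -/

import Mathlib

/-!
The proof reduces to measures on points and lines in the coordinate plane `ℝ × ℝ`, a line being
recorded by a base point `x` and a slope `a`. Suppose the exceptional set `E` had dimension greater
than `2 - t`. After localising near distinct points of `E` and `B`, one of the coordinates separates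
them, so the lines that matter have bounded slope in suitable coordinates (`exists_directions`).
Frostman's lemma (`frostman`) gives a measure `μ` on a compact `K ⊆ B` with `μ(B(y, ρ)) ≲ ρ^t'`,
where `t' > t`, and, once `E` is enlarged to a Borel set with the same covering properties, a measure
`ν` there with `ν(B(x, ρ)) ≲ ρ^s'`, where `s' > s = 2 - t`.

The heart is an incidence estimate localised to balls (`ball_incidence`): for every family `G` of
lines through points of the support of `ν`, every ball `B(q, r)` of small radius and every
`0 < η ≤ 1`,
`(ν × μ) {(x, y) | y ∈ B(q, r), the line through x and y is in G} ≲ η μ(B(q, r)) + η⁻¹ r^(t'-1) Λ(G)`.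
Here `Λ` is the product of `ν` and the Lebesgue measure on slopes, with the density `1 + U`, where
`U(l)` is the Riesz potential of `ν` of exponent `s` at the line `l`. It is a finite measure because
`s < 1` and `s < s'` (`Lam_ne_top`). The estimate is proved by the high-low method: incidences are
blurred at scale `ρ`, and the change from `2ρ` to `ρ` (`inc_step`) is a product of the box averages
of `μ`, which are controlled in `L²` by the Frostman condition, and of the high-frequency part of
the lines. The square of the `L²` norm of the latter near `q` is a sum of correlations of pairs of
lines. Transversal lines are almost uncorrelated, and since all lines pass through the support of
`ν`, away from `B(q, r)`, the correlations of a given line `l` with all others, integrated against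
the unweighted product measure, amount to at most a constant times `r (ρ / r)^s U(l)`
(`lintegral_corr_le`). The errors at all scales form a geometric
series exactly because `t' + s > 2` (`inc_le_ball`), while at scale `r` the trivial bound suffices.

Through a point of `E`, the slice of `K` has dimension less than `t - 1` for almost every slope,
hence is covered by finitely many squares with `∑ side^(t-1) ≤ e`, for any prescribed `e > 0`; the
covering property passes to the Borel set that carries `ν`. The estimate in balls shows that almost every pair
of points of `ν × μ` spans such a line (`BallEst.null`). Applying it to each square, with `G` the
lines that use that square and with `η` decaying slowly in the side, and summing over the squares
(`BallEst.total_le`), the first terms add up to a small multiple of the mass of `μ` and the second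
ones to a multiple of `e Λ(univ)`. So `ν × μ` vanishes, a contradiction (`exists_slices`).
-/

open MeasureTheory Metric Real ENNReal

noncomputable section

abbrev E2 := EuclideanSpace ℝ (Fin 2)

/-- The line `ℓ_{x,e} = x + span(e)` through `x` in direction `e`. -/
def lineThrough (x e : E2) : Set E2 := {z | ∃ u : ℝ, z = x + u • e}

/-! ### Dyadic content -/

/-- The index of the half-open dyadic square of side `2⁻ᵏ` that contains `x`. -/
def cell (k : ℕ) (x : ℝ × ℝ) : ℤ × ℤ := (⌊2 ^ k * x.1⌋, ⌊2 ^ k * x.2⌋)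

/-- Indices of dyadic squares: `(k, m)` stands for `{x | cell k x = m}`, of side `2⁻ᵏ`. -/
abbrev Idx := ℕ × (ℤ × ℤ)

/-- The weight `(2⁻ᵏ)ᵗ` of a dyadic square of side `2⁻ᵏ`. -/
def wt (t : ℝ) (i : Idx) : ℝ≥0∞ := ENNReal.ofReal ((2 : ℝ) ^ (-(t * i.1)))

/-- The total weight of a family of dyadic squares, as a measure on the index set. -/
def costM (t : ℝ) : Measure Idx := Measure.sum fun i => wt t i • Measure.dirac i

/-- The union of a family of dyadic squares. -/
def covered (S : Set Idx) : Set (ℝ × ℝ) := {x | ∃ k, (k, cell k x) ∈ S}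

/-- The `t`-dimensional dyadic (net) content. -/
def content (t : ℝ) (A : Set (ℝ × ℝ)) : ℝ≥0∞ := ⨅ (S : Set Idx) (_ : A ⊆ covered S), costM t S

lemma content_le {t : ℝ} {A : Set (ℝ × ℝ)} {S : Set Idx} (h : A ⊆ covered S) :
    content t A ≤ costM t S := iInf₂_le S h

lemma measSet_idx (S : Set Idx) : MeasurableSet S := S.to_countable.measurableSet

lemma cell_succ {k : ℕ} {x y : ℝ × ℝ} (h : cell (k + 1) x = cell (k + 1) y) :
    cell k x = cell k y := by
  have aux : ∀ u : ℝ, ⌊2 ^ k * u⌋ = ⌊(2 : ℝ) ^ (k + 1) * u⌋ / 2 := by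
    intro u
    have h2 : (2 : ℝ) ^ k * u = (2 ^ (k + 1) * u) / (2 : ℕ) := by
      push_cast; rw [pow_succ]; ring
    rw [h2, Int.floor_div_natCast]; rfl
  simp only [cell, Prod.mk.injEq] at h ⊢
  rw [aux, aux, aux, aux, h.1, h.2]; exact ⟨rfl, rfl⟩

lemma cell_le {k k' : ℕ} (hk : k ≤ k') {x y : ℝ × ℝ} (h : cell k' x = cell k' y) :
    cell k x = cell k y := by
  induction hk with
  | refl => exact h
  | step _ ih => exact ih (cell_succ h)

/-- The maximal squares of a family. -/
def maxC (S : Set Idx) : Set Idx :=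
  {i | ∃ x, i.2 = cell i.1 x ∧ i ∈ S ∧ ∀ k < i.1, (k, cell k x) ∉ S}

lemma maxC_subset (S : Set Idx) : maxC S ⊆ S := fun _ ⟨_, _, h, _⟩ => h

open Classical in
lemma exists_maxC {S : Set Idx} {x : ℝ × ℝ} {k : ℕ} (h : (k, cell k x) ∈ S) :
    ∃ k' ≤ k, (k', cell k' x) ∈ maxC S := by
  have hex : ∃ k, (k, cell k x) ∈ S := ⟨k, h⟩
  exact ⟨Nat.find hex, Nat.find_min' hex h, x, rfl, Nat.find_spec hex,
    fun j hj => Nat.find_min hex hj⟩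

/-- Strong subadditivity of the cost: merging two covers of `A` into the family of maximal squares
leaves enough squares over to cover `A` a second time. -/
lemma costM_merge (t : ℝ) {A : Set (ℝ × ℝ)} {S₁ S₂ : Set Idx} (h₁ : A ⊆ covered S₁)
    (h₂ : A ⊆ covered S₂) :
    costM t (maxC (S₁ ∪ S₂)) + content t A ≤ costM t S₁ + costM t S₂ := by
  set U := S₁ ∪ S₂ with hU
  set V := maxC U with hV
  have hW : A ⊆ covered ((S₁ ∩ S₂) ∪ (U \ V)) := by
    intro x hx
    obtain ⟨k₁, hk₁⟩ := h₁ hx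
    obtain ⟨k₂, hk₂⟩ := h₂ hx
    have key : ∀ {k k' : ℕ}, k < k' → (k, cell k x) ∈ U → (k', cell k' x) ∈ U →
        x ∈ covered ((S₁ ∩ S₂) ∪ (U \ V)) := by
      intro k k' hlt hk hk'
      refine ⟨k', Or.inr ⟨hk', ?_⟩⟩
      rintro ⟨z, hz, -, hmin⟩
      have := cell_le hlt.le (x := x) (y := z) hz
      exact hmin k hlt (this ▸ hk)
    rcases lt_trichotomy k₁ k₂ with h | h | h
    · exact key h (Or.inl hk₁) (Or.inr hk₂)
    · subst h; exact ⟨k₁, Or.inl ⟨hk₁, hk₂⟩⟩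
    · exact key h (Or.inr hk₂) (Or.inl hk₁)
  have e1 : costM t V + costM t (U \ V) = costM t U := by
    have := measure_inter_add_sdiff (μ := costM t) U (measSet_idx V)
    rwa [Set.inter_eq_self_of_subset_right (maxC_subset U)] at this
  calc costM t V + content t A ≤ costM t V + costM t ((S₁ ∩ S₂) ∪ (U \ V)) := by
        gcongr; exact content_le hW
    _ ≤ costM t V + (costM t (S₁ ∩ S₂) + costM t (U \ V)) := by
        gcongr; exact measure_union_le _ _
    _ = costM t U + costM t (S₁ ∩ S₂) := by rw [← e1]; ring
    _ = costM t S₁ + costM t S₂ := measure_union_add_inter _ (measSet_idx _)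

lemma content_mono (t : ℝ) {A A' : Set (ℝ × ℝ)} (h : A ⊆ A') : content t A ≤ content t A' :=
  le_iInf₂ fun S hS => iInf₂_le S (h.trans hS)

lemma exists_cover (t : ℝ) (A : Set (ℝ × ℝ)) (hA : content t A ≠ ⊤) {ε : ℝ≥0∞} (hε : ε ≠ 0) :
    ∃ S, A ⊆ covered S ∧ costM t S ≤ content t A + ε := by
  have : content t A < content t A + ε := ENNReal.lt_add_right hA hε
  simp only [content, iInf_lt_iff] at this ⊢
  obtain ⟨S, hS, h⟩ := this
  exact ⟨S, hS, h.le⟩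

/-- The dyadic content is continuous along increasing sequences of arbitrary sets. -/
lemma content_iUnion (t : ℝ) {A : ℕ → Set (ℝ × ℝ)} (hA : Monotone A) :
    content t (⋃ n, A n) ≤ ⨆ n, content t (A n) := by
  by_cases hfin : ⨆ n, content t (A n) = ⊤
  · rw [hfin]; exact le_top
  have hfin' : ∀ n, content t (A n) ≠ ⊤ := fun n h =>
    hfin (top_le_iff.1 (h ▸ le_iSup (fun n => content t (A n)) n))
  refine ENNReal.le_of_forall_pos_le_add fun ε hε _ => ?_
  obtain ⟨δ, hδ0, hδ⟩ := ENNReal.exists_pos_sum_of_countable (ε := (ε : ℝ≥0∞))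
    (by exact_mod_cast hε.ne') ℕ
  choose S hS hScost using fun n => exists_cover t (A n) (hfin' n) (ε := (δ n : ℝ≥0∞))
    (by exact_mod_cast (hδ0 n).ne')
  let V : ℕ → Set Idx := fun n => Nat.rec (S 0) (fun n v => maxC (v ∪ S (n + 1))) n
  have hVs : ∀ n, V (n + 1) = maxC (V n ∪ S (n + 1)) := fun n => rfl
  have hstep : ∀ n x k, (k, cell k x) ∈ V n → ∃ k' ≤ k, (k', cell k' x) ∈ V (n + 1) := by
    intro n x k h
    rw [hVs]; exact exists_maxC (Or.inl h)
  have hVcov : ∀ n, A n ⊆ covered (V n) := by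
    intro n
    cases n with
    | zero => exact hS 0
    | succ n =>
      intro x hx
      obtain ⟨k, hk⟩ := hS (n + 1) hx
      obtain ⟨k', -, h⟩ := exists_maxC (S := V n ∪ S (n + 1)) (Or.inr hk)
      exact ⟨k', h⟩
  have hVcost : ∀ n, costM t (V n) ≤ content t (A n) + ∑ i ∈ Finset.range (n + 1), (δ i : ℝ≥0∞) := by
    intro n
    induction n with
    | zero =>
      show costM t (S 0) ≤ _
      simpa using hScost 0
    | succ n ih =>
      have h1 := costM_merge t (hVcov n) ((hA n.le_succ).trans (hS (n + 1)))
      rw [← hVs] at h1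
      have h2 : costM t (V (n + 1)) + content t (A n) ≤
          (content t (A (n + 1)) + ∑ i ∈ Finset.range (n + 1 + 1), (δ i : ℝ≥0∞))
            + content t (A n) := by
        refine h1.trans ((add_le_add ih (hScost (n + 1))).trans (le_of_eq ?_))
        rw [Finset.sum_range_succ _ (n + 1)]; ring
      exact (ENNReal.add_le_add_iff_right (hfin' n)).1 h2
  have hcov : (⋃ n, A n) ⊆ covered (⋃ n, ⋂ m, V (n + m)) := by
    intro x hx
    obtain ⟨n, hn⟩ := Set.mem_iUnion.1 hx
    -- the level of the square of `V m` containing `x` is eventually minimal, hence constant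
    have hne : ∃ k, ∃ m, n ≤ m ∧ (k, cell k x) ∈ V m := by
      obtain ⟨k, hk⟩ := hVcov n hn
      exact ⟨k, n, le_rfl, hk⟩
    obtain ⟨N, ⟨m, hnm, hm⟩, hmin⟩ : ∃ N, (∃ m, n ≤ m ∧ (N, cell N x) ∈ V m) ∧
        ∀ k, (∃ m, n ≤ m ∧ (k, cell k x) ∈ V m) → N ≤ k :=
      ⟨sInf {k | _}, Nat.sInf_mem hne, fun k hk => Nat.sInf_le hk⟩
    refine ⟨N, Set.mem_iUnion.2 ⟨m, Set.mem_iInter.2 fun j => ?_⟩⟩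
    induction j with
    | zero => exact hm
    | succ j ih =>
      obtain ⟨k', hk', h⟩ := hstep _ _ _ ih
      obtain rfl : k' = N := le_antisymm hk' (hmin k' ⟨m + (j + 1), by omega, h⟩)
      exact h
  have hmono : Monotone fun n => ⋂ m, V (n + m) := by
    refine monotone_nat_of_le_succ fun n => ?_
    refine Set.subset_iInter fun m => ?_
    have := Set.iInter_subset (fun m => V (n + m)) (1 + m)
    simpa [add_assoc] using this
  calc content t (⋃ n, A n) ≤ costM t (⋃ n, ⋂ m, V (n + m)) := content_le hcov
    _ = ⨆ n, costM t (⋂ m, V (n + m)) := hmono.measure_iUnion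
    _ ≤ (⨆ n, content t (A n)) + ε := by
        refine iSup_le fun n => ?_
        calc costM t (⋂ m, V (n + m)) ≤ costM t (V n) :=
              measure_mono (Set.iInter_subset (fun m => V (n + m)) 0)
          _ ≤ content t (A n) + ∑ i ∈ Finset.range (n + 1), (δ i : ℝ≥0∞) := hVcost n
          _ ≤ _ := add_le_add (le_iSup (fun n => content t (A n)) n)
              ((ENNReal.sum_le_tsum _).trans hδ.le)

/-- Capacitability: an analytic set of content greater than `c` has a compact subset all of whose
open neighbourhoods have content greater than `c`. -/
lemma exists_compact_content {t : ℝ} {B : Set (ℝ × ℝ)} (hB : AnalyticSet B) {c : ℝ≥0∞}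
    (hc : c < content t B) :
    ∃ K ⊆ B, IsCompact K ∧ ∀ U, IsOpen U → K ⊆ U → c < content t U := by
  rw [AnalyticSet] at hB
  rcases hB with rfl | ⟨f, hf, rfl⟩
  · have : content t ∅ ≤ costM t ∅ := content_le (Set.empty_subset _)
    rw [measure_empty] at this
    exact absurd (hc.trans_le this) _root_.not_lt_zero
  -- `P l` is the set of sequences whose first entries are bounded by the entries of `l`
  let P : (k : ℕ) → (ℕ → ℕ) → Set (ℕ → ℕ) := fun k g => {σ | ∀ i < k, σ i ≤ g i}
  have hstep : ∀ k g, c < content t (f '' P k g) →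
      ∃ n, c < content t (f '' P (k + 1) (Function.update g k n)) := by
    intro k g h
    have hU : f '' P k g ⊆ ⋃ n, f '' P (k + 1) (Function.update g k n) := by
      rintro _ ⟨σ, hσ, rfl⟩
      refine Set.mem_iUnion.2 ⟨σ k, σ, fun i hi => ?_, rfl⟩
      rcases (Nat.lt_succ_iff_lt_or_eq.1 hi) with h' | rfl
      · rw [Function.update_of_ne h'.ne]; exact hσ i h'
      · simp
    have hm : Monotone fun n => f '' P (k + 1) (Function.update g k n) := by
      intro n n' hn
      refine Set.image_mono fun σ hσ i hi => (hσ i hi).trans ?_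
      by_cases hik : i = k
      · subst hik; simpa using hn
      · simp [Function.update_of_ne hik]
    exact lt_iSup_iff.1 (h.trans_le ((content_mono t hU).trans (content_iUnion t hm)))
  choose! nx hnx using hstep
  let G : ℕ → (ℕ → ℕ) := fun k => Nat.rec (fun _ => 0) (fun k g => Function.update g k (nx k g)) k
  have hGs : ∀ k, G (k + 1) = Function.update (G k) k (nx k (G k)) := fun k => rfl
  have hG : ∀ k, c < content t (f '' P k (G k)) := by
    intro k
    induction k with
    | zero => simpa [P] using hc
    | succ k ih => rw [hGs]; exact hnx k _ ih
  let g : ℕ → ℕ := fun i => G (i + 1) i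
  have hgG : ∀ k i, i < k → G k i = g i := by
    intro k i hi
    induction k with
    | zero => omega
    | succ k ih =>
      rcases Nat.lt_succ_iff_lt_or_eq.1 hi with h | rfl
      · rw [hGs, Function.update_of_ne h.ne, ih h]
      · rfl
  have hPG : ∀ k, P k (G k) = P k g := fun k => by
    ext σ
    exact forall₂_congr fun i hi => by rw [hgG k i hi]
  have hcomp : IsCompact {σ : ℕ → ℕ | ∀ i, σ i ≤ g i} := by
    have := isCompact_univ_pi (X := fun _ : ℕ => ℕ) (s := fun i => Set.Iic (g i))
      fun i => (Set.finite_Iic (g i)).isCompact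
    convert this using 1
    ext σ
    simp [Pi.le_def]
  refine ⟨f '' {σ | ∀ i, σ i ≤ g i}, Set.image_subset_range _ _, hcomp.image hf, ?_⟩
  intro U hUo hKU
  by_contra hcon
  have hnot : ∀ k, ∃ σ ∈ P k g, f σ ∉ U := by
    intro k
    by_contra! h
    exact hcon ((hPG k ▸ hG k).trans_le (content_mono t (by rintro _ ⟨σ, hσ, rfl⟩; exact h σ hσ)))
  choose σ hσP hσU using hnot
  obtain ⟨τ, hτ, φ, hφ, hlim⟩ := hcomp.tendsto_subseq (x := fun k i => min (σ k i) (g i))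
    (fun k i => min_le_right _ _)
  have hlim' : Filter.Tendsto (fun k => σ (φ k)) Filter.atTop (nhds τ) := by
    rw [tendsto_pi_nhds] at hlim ⊢
    intro i
    refine (hlim i).congr' ?_
    filter_upwards [Filter.eventually_gt_atTop i] with k hk
    exact min_eq_left (hσP (φ k) i (hk.trans_le (hφ.id_le k)))
  have : ∀ᶠ k in Filter.atTop, f (σ (φ k)) ∈ U :=
    ((hf.tendsto τ).comp hlim').eventually (hUo.mem_nhds (hKU ⟨τ, hτ, rfl⟩))
  obtain ⟨k, hk⟩ := this.exists
  exact hσU _ hk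

lemma costM_apply (t : ℝ) (S : Set Idx) : costM t S = ∑' i, S.indicator (wt t) i := by
  rw [costM, Measure.sum_apply _ (measSet_idx S)]
  refine tsum_congr fun i => ?_
  by_cases h : i ∈ S <;> simp [Measure.dirac_apply' _ (measSet_idx S), h]

lemma costM_finset (t : ℝ) (S : Finset Idx) : costM t S = ∑ i ∈ S, wt t i := by
  rw [costM_apply, tsum_eq_sum (s := S)]
  · exact Finset.sum_congr rfl fun i hi => by simp [hi]
  · intro i hi; simp [hi]

/-- Points of the same dyadic square of side `2⁻ᵏ` are within `2⁻ᵏ` of each other. -/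
lemma dist_le_of_cell {k : ℕ} {x y : ℝ × ℝ} (h : cell k x = cell k y) : dist x y ≤ 1 / 2 ^ k := by
  have aux : ∀ u v : ℝ, ⌊2 ^ k * u⌋ = ⌊2 ^ k * v⌋ → |u - v| ≤ 1 / 2 ^ k := by
    intro u v huv
    have h1 := Int.abs_sub_lt_one_of_floor_eq_floor huv
    rw [← mul_sub, abs_mul, abs_of_pos (by positivity)] at h1
    rw [le_div_iff₀ (by positivity), mul_comm]; exact h1.le
  simp only [cell, Prod.mk.injEq] at h
  rw [Prod.dist_eq, Real.dist_eq, Real.dist_eq]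
  exact max_le (aux _ _ h.1) (aux _ _ h.2)

lemma ofReal_one_div_two_pow_rpow (t : ℝ) (ht : 0 ≤ t) (k : ℕ) (m : ℤ × ℤ) :
    ENNReal.ofReal (1 / 2 ^ k) ^ t = wt t (k, m) := by
  rw [ENNReal.ofReal_rpow_of_nonneg (by positivity) ht, wt]
  congr 1
  rw [Real.rpow_neg (by norm_num), mul_comm, Real.rpow_mul (by norm_num), Real.rpow_natCast,
    one_div, Real.inv_rpow (by positivity)]

/-- A set of zero dyadic content is null for the Hausdorff measure of the same dimension. -/
lemma hausdorff_eq_zero_of_content {t : ℝ} (ht : 0 < t) {B : Set (ℝ × ℝ)}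
    (h : content t B = 0) : μH[t] B = 0 := by
  -- a cover of total weight at most `2^{-nt}` consists of squares of side at most `2⁻ⁿ`
  have hex : ∀ n : ℕ, ∃ S, B ⊆ covered S ∧ costM t S ≤ ENNReal.ofReal (1 / 2 ^ n) ^ t := by
    intro n
    obtain ⟨S, hS, h2⟩ := exists_cover t B (by simp [h])
      (ε := ENNReal.ofReal (1 / 2 ^ n) ^ t) (by
        rw [Ne, ENNReal.rpow_eq_zero_iff_of_pos ht]; simp)
    exact ⟨S, hS, by simpa [h] using h2⟩
  choose S hS hc using hex
  have hr : Filter.Tendsto (fun n : ℕ => ENNReal.ofReal (1 / 2 ^ n)) Filter.atTop (nhds 0) := by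
    rw [← ENNReal.ofReal_zero]
    refine ENNReal.tendsto_ofReal ?_
    simpa using tendsto_pow_atTop_nhds_zero_of_lt_one (r := (1 / 2 : ℝ)) (by norm_num) (by norm_num)
  have hdiam : ∀ i : Idx, ediam {x | cell i.1 x = i.2} ≤ ENNReal.ofReal (1 / 2 ^ i.1) := by
    intro i
    refine ediam_le fun x hx y hy => ?_
    rw [edist_dist]
    exact ENNReal.ofReal_le_ofReal (dist_le_of_cell (hx.trans hy.symm))
  have key := Measure.hausdorffMeasure_le_liminf_tsum t B
    (fun n : ℕ => ENNReal.ofReal (1 / 2 ^ n)) hr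
    (fun n (i : S n) => {x | cell (i : Idx).1 x = (i : Idx).2})
    (Filter.Eventually.of_forall fun n i => by
      refine (hdiam i).trans ?_
      have h1 : wt t i ≤ ENNReal.ofReal (1 / 2 ^ n) ^ t := by
        refine le_trans ?_ (hc n)
        rw [costM_apply]
        refine le_trans ?_ (ENNReal.le_tsum (i : Idx))
        rw [Set.indicator_of_mem i.2]
      rw [← ofReal_one_div_two_pow_rpow t ht.le _ (i : Idx).2] at h1
      exact (ENNReal.rpow_le_rpow_iff ht).1 h1)
    (Filter.Eventually.of_forall fun n x hx => by
      obtain ⟨k, hk⟩ := hS n hx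
      exact Set.mem_iUnion.2 ⟨⟨_, hk⟩, rfl⟩)
  refine le_antisymm (key.trans ?_) zero_le
  have hle : ∀ n, ∑' i : S n, ediam {x | cell (i : Idx).1 x = (i : Idx).2} ^ t ≤
      ENNReal.ofReal (1 / 2 ^ n) ^ t := by
    intro n
    refine le_trans ?_ (hc n)
    rw [costM_apply, ← tsum_subtype]
    refine ENNReal.tsum_le_tsum fun i => ?_
    rw [← ofReal_one_div_two_pow_rpow t ht.le _ (i : Idx).2]
    exact ENNReal.rpow_le_rpow (hdiam i) ht.le
  have hlim : Filter.Tendsto (fun n : ℕ => ENNReal.ofReal (1 / 2 ^ n) ^ t) Filter.atTop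
      (nhds 0) := by
    have := hr.ennrpow_const t
    rwa [ENNReal.zero_rpow_of_pos ht] at this
  rw [← hlim.liminf_eq]
  exact Filter.liminf_le_liminf (Filter.Eventually.of_forall hle)

/-! ### Enlarged dyadic squares -/

/-- The centre of a dyadic square. -/
def ctr (i : Idx) : ℝ × ℝ := ((i.2.1 + 1 / 2) / 2 ^ i.1, (i.2.2 + 1 / 2) / 2 ^ i.1)

/-- The open square with the same centre as a dyadic square and three times its side. -/
def box (i : Idx) : Set (ℝ × ℝ) := ball (ctr i) ((3 / 2) / 2 ^ i.1)

/-- The nine dyadic squares that make up the enlarged square. -/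
def nine (i : Idx) : Finset Idx :=
  {i.1} ×ˢ (Finset.Icc (i.2.1 - 1) (i.2.1 + 1) ×ˢ Finset.Icc (i.2.2 - 1) (i.2.2 + 1))

lemma isOpen_box (i : Idx) : IsOpen (box i) := isOpen_ball

lemma mem_nine_of_mem_box {i : Idx} {x : ℝ × ℝ} (h : x ∈ box i) :
    (i.1, cell i.1 x) ∈ nine i := by
  have aux : ∀ (u : ℝ) (m : ℤ), |u - (m + 1 / 2) / 2 ^ i.1| < (3 / 2) / 2 ^ i.1 →
      ⌊2 ^ i.1 * u⌋ ∈ Finset.Icc (m - 1) (m + 1) := by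
    intro u m hu
    have h2 : (0 : ℝ) < 2 ^ i.1 := by positivity
    have e : u - (m + 1 / 2) / 2 ^ i.1 = (2 ^ i.1 * u - (m + 1 / 2)) / 2 ^ i.1 := by field_simp
    rw [e, abs_div, abs_of_pos h2, div_lt_div_iff_of_pos_right h2, abs_lt] at hu
    rw [Finset.mem_Icc]
    constructor
    · rw [Int.le_floor]; push_cast; linarith
    · rw [← Int.lt_add_one_iff, Int.floor_lt]; push_cast; linarith
  rw [box, mem_ball, Prod.dist_eq, max_lt_iff, Real.dist_eq, Real.dist_eq] at h
  simp only [nine, Finset.mem_product, Finset.mem_singleton, true_and]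
  exact ⟨aux _ _ h.1, aux _ _ h.2⟩

lemma card_nine (i : Idx) : (nine i).card = 9 := by
  simp only [nine, Finset.card_product, Finset.card_singleton, Int.card_Icc]
  have : ∀ m : ℤ, (m + 1 + 1 - (m - 1)).toNat = 3 := fun m => by
    rw [show m + 1 + 1 - (m - 1) = 3 by ring]; rfl
  rw [this, this]

lemma fst_of_mem_nine {i j : Idx} (h : j ∈ nine i) : j.1 = i.1 := by
  simp only [nine, Finset.mem_product, Finset.mem_singleton] at h; exact h.1

lemma mem_box_cell {k : ℕ} {x y : ℝ × ℝ} (h : dist y x < 1 / 2 ^ k) : y ∈ box (k, cell k x) := by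
  have aux : ∀ u v : ℝ, |v - u| < 1 / 2 ^ k →
      |v - (⌊2 ^ k * u⌋ + 1 / 2) / 2 ^ k| < (3 / 2) / 2 ^ k := by
    intro u v huv
    have h2 : (0 : ℝ) < 2 ^ k := by positivity
    have e : v - (⌊2 ^ k * u⌋ + 1 / 2) / 2 ^ k =
      (2 ^ k * (v - u) + (2 ^ k * u - ⌊2 ^ k * u⌋ - 1 / 2)) / 2 ^ k := by field_simp; ring
    rw [lt_div_iff₀ h2, mul_comm, ← abs_of_pos h2, ← abs_mul, abs_lt] at huv
    rw [e, abs_div, abs_of_pos h2, div_lt_div_iff_of_pos_right h2, abs_lt]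
    have h3 := Int.floor_le (2 ^ k * u)
    have h4 := Int.lt_floor_add_one (2 ^ k * u)
    constructor <;> linarith [huv.1, huv.2]
  rw [Prod.dist_eq, max_lt_iff, Real.dist_eq, Real.dist_eq] at h
  rw [box, mem_ball, Prod.dist_eq, max_lt_iff, Real.dist_eq, Real.dist_eq]
  exact ⟨aux _ _ h.1, aux _ _ h.2⟩

/-- Fractional covers do not beat honest ones: if weights `a` on the dyadic squares have total
greater than `δ` above every point of `U`, then their cost is at least `δ` times the content. -/
lemma content_le_weighted {t δ : ℝ} {a : Idx → ℝ} {U : Set (ℝ × ℝ)}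
    (hU : ∀ x ∈ U, ∃ n, δ < ∑ k ∈ Finset.range n, a (k, cell k x)) :
    ENNReal.ofReal δ * content t U ≤ ∑' i, ENNReal.ofReal (a i) * wt t i := by
  -- a point of the dyadic square `i`, and the total weight of the squares strictly larger than `i`
  let rep : Idx → ℝ × ℝ := fun i => (i.2.1 / 2 ^ i.1, i.2.2 / 2 ^ i.1)
  let s : Idx → ℝ := fun i => ∑ k ∈ Finset.range i.1, a (k, cell k (rep i))
  have hrep : ∀ k x, cell k (rep (k, cell k x)) = cell k x := by
    intro k x
    simp [rep, cell, mul_div_cancel₀]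
  have hs : ∀ k x, s (k, cell k x) = ∑ j ∈ Finset.range k, a (j, cell j x) := by
    intro k x
    refine Finset.sum_congr rfl fun j hj => ?_
    rw [cell_le (Finset.mem_range.1 hj).le (hrep k x)]
  -- the squares at which the accumulated weight passes the level `θ` cover `U`
  have hcov : ∀ θ ∈ Set.Ioc 0 δ, content t U ≤ ∑' i, (Set.Ioc (s i) (s i + a i)).indicator
      (fun _ => wt t i) θ := by
    intro θ hθ
    have h1 : U ⊆ covered {i | θ ∈ Set.Ioc (s i) (s i + a i)} := by
      intro x hx
      obtain ⟨n, hn⟩ := hU x hx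
      have hex : ∃ n, θ ≤ ∑ k ∈ Finset.range n, a (k, cell k x) := ⟨n, hθ.2.trans hn.le⟩
      obtain ⟨N, hN, hmin⟩ : ∃ N, θ ≤ ∑ k ∈ Finset.range N, a (k, cell k x) ∧
          ∀ m, θ ≤ ∑ k ∈ Finset.range m, a (k, cell k x) → N ≤ m :=
        ⟨sInf {k | _}, Nat.sInf_mem hex, fun k hk => Nat.sInf_le hk⟩
      obtain _ | N := N
      · simp at hN; exact absurd hN (not_le.2 hθ.1)
      · refine ⟨N, ?_, ?_⟩
        · rw [hs]; by_contra hcon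
          have := hmin N (not_lt.1 hcon); omega
        · rw [hs, ← Finset.sum_range_succ]; exact hN
    refine (content_le h1).trans (le_of_eq ?_)
    rw [costM_apply]
    exact tsum_congr fun i => by simp only [Set.indicator_apply, Set.mem_ofPred_eq]
  calc ENNReal.ofReal δ * content t U = ∫⁻ θ in Set.Ioc 0 δ, content t U := by
        rw [setLIntegral_const, Real.volume_Ioc, sub_zero, mul_comm]
    _ ≤ ∫⁻ θ in Set.Ioc 0 δ, ∑' i, (Set.Ioc (s i) (s i + a i)).indicator (fun _ => wt t i) θ :=
        setLIntegral_mono' measurableSet_Ioc hcov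
    _ ≤ ∫⁻ θ, ∑' i, (Set.Ioc (s i) (s i + a i)).indicator (fun _ => wt t i) θ :=
        setLIntegral_le_lintegral _ _
    _ = ∑' i, ∫⁻ θ, (Set.Ioc (s i) (s i + a i)).indicator (fun _ => wt t i) θ :=
        lintegral_tsum fun i => (measurable_const.indicator measurableSet_Ioc).aemeasurable
    _ = ∑' i, ENNReal.ofReal (a i) * wt t i := by
        refine tsum_congr fun i => ?_
        rw [lintegral_indicator_const measurableSet_Ioc, Real.volume_Ioc, add_sub_cancel_left,
          mul_comm]

/-! ### Weighted covers and Frostman's lemma -/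

/-- The cost `∑ cᵢ (2^{-kᵢ})ᵗ` of a finite weighted family of enlarged squares. -/
def lcost (t : ℝ) : (Idx →₀ ℝ) →ₗ[ℝ] ℝ :=
  Finsupp.linearCombination ℝ fun i => (2 : ℝ) ^ (-(t * i.1))

/-- The value at `x` of the step function `∑ cᵢ 𝟙 (box i)`. -/
def lval (x : ℝ × ℝ) : (Idx →₀ ℝ) →ₗ[ℝ] ℝ :=
  Finsupp.linearCombination ℝ fun i => (box i).indicator (fun _ => (1 : ℝ)) x

lemma lcost_nonneg (t : ℝ) {c : Idx →₀ ℝ} (hc : ∀ i, 0 ≤ c i) : 0 ≤ lcost t c := by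
  rw [lcost, Finsupp.linearCombination_apply]
  exact Finset.sum_nonneg fun i _ => mul_nonneg (hc i) (by positivity)

lemma lval_nonneg (x : ℝ × ℝ) {c : Idx →₀ ℝ} (hc : ∀ i, 0 ≤ c i) : 0 ≤ lval x c := by
  rw [lval, Finsupp.linearCombination_apply]
  exact Finset.sum_nonneg fun i _ => mul_nonneg (hc i) (Set.indicator_nonneg (by simp) _)

/-- A weighted family of enlarged squares with total weight at least `1` on `K` costs at least a
fixed fraction of the content of `K`. -/
lemma content_le_lcost {t : ℝ} {K : Set (ℝ × ℝ)} {m : ℝ≥0∞}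
    (hm : ∀ U, IsOpen U → K ⊆ U → m < content t U) {c : Idx →₀ ℝ} (hc : ∀ i, 0 ≤ c i)
    (h1 : ∀ x ∈ K, 1 ≤ lval x c) :
    ENNReal.ofReal (1 / 2) * m ≤ 9 * ENNReal.ofReal (lcost t c) := by
  set U : Set (ℝ × ℝ) := (fun x => lval x c) ⁻¹' Set.Ioi (1 / 2) with hUdef
  have hUo : IsOpen U := by
    have : LowerSemicontinuous fun x => lval x c := by
      simp only [lval, Finsupp.linearCombination_apply, Finsupp.sum, smul_eq_mul]
      refine lowerSemicontinuous_sum fun i _ => ?_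
      have h2 := (isOpen_box i).lowerSemicontinuous_indicator (y := c i) (hc i)
      have h3 : (fun x => c i * (box i).indicator (fun _ => (1 : ℝ)) x) =
          (box i).indicator fun _ => c i := by
        ext x
        by_cases hx : x ∈ box i <;> simp [hx]
      rw [h3]; exact h2
    exact this.isOpen_preimage _
  have hKU : K ⊆ U := fun x hx => lt_of_lt_of_le (by norm_num) (h1 x hx)
  let a : Idx → ℝ := fun j => ∑ i ∈ c.support, c i * (if j ∈ nine i then 1 else 0)
  have ha : ∀ j, ENNReal.ofReal (a j) =
      ∑ i ∈ c.support, ENNReal.ofReal (c i) * (if j ∈ nine i then 1 else 0) := by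
    intro j
    rw [ENNReal.ofReal_sum_of_nonneg fun i _ => mul_nonneg (hc i) (by split_ifs <;> simp)]
    refine Finset.sum_congr rfl fun i _ => ?_
    split_ifs <;> simp
  have hcov : ∀ x ∈ U, ∃ n, 1 / 2 < ∑ k ∈ Finset.range n, a (k, cell k x) := by
    intro x hx
    refine ⟨c.support.sup (fun i => i.1) + 1, lt_of_lt_of_le hx ?_⟩
    rw [Finset.sum_comm]
    simp only [lval, Finsupp.linearCombination_apply, Finsupp.sum, smul_eq_mul, ← Finset.mul_sum]
    refine Finset.sum_le_sum fun i hi => mul_le_mul_of_nonneg_left ?_ (hc i)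
    by_cases hxi : x ∈ box i
    · rw [Set.indicator_of_mem hxi]
      have hlt : i.1 ∈ Finset.range (c.support.sup (fun i => i.1) + 1) := by
        rw [Finset.mem_range, Nat.lt_succ_iff]
        exact Finset.le_sup (f := fun i : Idx => i.1) hi
      refine le_trans (le_of_eq ?_) (Finset.single_le_sum
        (f := fun k => if (k, cell k x) ∈ nine i then (1 : ℝ) else 0)
        (fun k _ => by split_ifs <;> simp) hlt)
      simp [mem_nine_of_mem_box hxi]
    · rw [Set.indicator_of_notMem hxi]
      exact Finset.sum_nonneg fun k _ => by split_ifs <;> simp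
  calc ENNReal.ofReal (1 / 2) * m ≤ ENNReal.ofReal (1 / 2) * content t U := by
        gcongr; exact (hm U hUo hKU).le
    _ ≤ ∑' j, ENNReal.ofReal (a j) * wt t j := content_le_weighted hcov
    _ = ∑' j, ∑ i ∈ c.support, ENNReal.ofReal (c i) * ((if j ∈ nine i then 1 else 0) * wt t j) := by
        refine tsum_congr fun j => ?_
        rw [ha, Finset.sum_mul]
        exact Finset.sum_congr rfl fun i _ => mul_assoc _ _ _
    _ = ∑ i ∈ c.support, ENNReal.ofReal (c i) * ∑' j, (if j ∈ nine i then 1 else 0) * wt t j := by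
        rw [Summable.tsum_finsetSum fun _ _ => ENNReal.summable]
        exact Finset.sum_congr rfl fun i _ => ENNReal.tsum_mul_left
    _ = ∑ i ∈ c.support, ENNReal.ofReal (c i) * (9 * wt t i) := by
        refine Finset.sum_congr rfl fun i _ => ?_
        congr 1
        rw [tsum_eq_sum (s := nine i) (fun j hj => by simp [hj])]
        rw [Finset.sum_congr rfl (g := fun _ => wt t i)]
        · rw [Finset.sum_const, card_nine, nsmul_eq_mul]; rfl
        · intro j hj
          rw [if_pos hj, one_mul, wt, wt, fst_of_mem_nine hj]
    _ = 9 * ENNReal.ofReal (lcost t c) := by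
        rw [lcost, Finsupp.linearCombination_apply, Finsupp.sum,
          ENNReal.ofReal_sum_of_nonneg fun i _ => smul_nonneg (hc i) (by positivity),
          Finset.mul_sum]
        refine Finset.sum_congr rfl fun i _ => ?_
        rw [smul_eq_mul, ENNReal.ofReal_mul (hc i), wt]; ring

/-- The weighted covers of (the values of) `f` on `K`. -/
def wcovers (K : Set (ℝ × ℝ)) (f : K → ℝ) : Set (Idx →₀ ℝ) :=
  {c | (∀ i, 0 ≤ c i) ∧ ∀ x : K, f x ≤ lval x c}

/-- The smallest cost of a weighted cover of `f`; this is a sublinear functional. -/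
def pcost (t : ℝ) (K : Set (ℝ × ℝ)) (f : K → ℝ) : ℝ := sInf (lcost t '' wcovers K f)

lemma bddBelow_wcovers (t : ℝ) (K : Set (ℝ × ℝ)) (f : K → ℝ) :
    BddBelow (lcost t '' wcovers K f) :=
  ⟨0, by rintro _ ⟨c, hc, rfl⟩; exact lcost_nonneg t hc.1⟩

lemma pcost_le {t : ℝ} {K : Set (ℝ × ℝ)} {f : K → ℝ} {c : Idx →₀ ℝ} (hc : c ∈ wcovers K f) :
    pcost t K f ≤ lcost t c := csInf_le (bddBelow_wcovers t K f) ⟨c, hc, rfl⟩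

lemma pcost_nonneg (t : ℝ) (K : Set (ℝ × ℝ)) (f : K → ℝ) : 0 ≤ pcost t K f :=
  Real.sInf_nonneg (by rintro _ ⟨c, hc, rfl⟩; exact lcost_nonneg t hc.1)

lemma wcovers_nonempty {K : Set (ℝ × ℝ)} (hK : IsCompact K) {f : K → ℝ} (hf : Continuous f) :
    (wcovers K f).Nonempty := by
  have := isCompact_iff_compactSpace.1 hK
  obtain ⟨M, hM⟩ := (isCompact_range hf).bddAbove
  obtain ⟨F, hF⟩ := hK.elim_finite_subcover (fun m : ℤ × ℤ => box (0, m)) (fun m => isOpen_box _)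
    (fun x _ => Set.mem_iUnion.2 ⟨cell 0 x, mem_box_cell (k := 0) (by simp)⟩)
  let c : Idx →₀ ℝ := ∑ m ∈ F, Finsupp.single (0, m) (max M 0)
  have hpos : ∀ m : ℤ × ℤ, ∀ i, 0 ≤ (Finsupp.single ((0, m) : Idx) (max M 0)) i := fun m i => by
    rw [Finsupp.single_apply]; split_ifs <;> simp
  refine ⟨c, fun i => ?_, fun x => ?_⟩
  · rw [Finsupp.finsetSum_apply]
    exact Finset.sum_nonneg fun m _ => hpos m i
  · obtain ⟨m, hm, hx⟩ := Set.mem_iUnion₂.1 (hF x.2)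
    calc f x ≤ max M 0 := (hM ⟨x, rfl⟩).trans (le_max_left _ _)
      _ = lval x (Finsupp.single (0, m) (max M 0)) := by
        rw [lval, Finsupp.linearCombination_single, Set.indicator_of_mem hx]; simp
      _ ≤ lval x c := by
        rw [map_sum]
        exact Finset.single_le_sum (f := fun m => lval x (Finsupp.single (0, m) (max M 0)))
          (fun m _ => lval_nonneg _ (hpos m)) hm

lemma pcost_add {t : ℝ} {K : Set (ℝ × ℝ)} (hK : IsCompact K) {f g : K → ℝ} (hf : Continuous f)
    (hg : Continuous g) : pcost t K (f + g) ≤ pcost t K f + pcost t K g := by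
  rw [pcost, pcost, pcost, ← csInf_add ((wcovers_nonempty hK hf).image _)
    (bddBelow_wcovers t K f) ((wcovers_nonempty hK hg).image _) (bddBelow_wcovers t K g)]
  refine csInf_le_csInf (bddBelow_wcovers t K _)
    (((wcovers_nonempty hK hf).image _).add ((wcovers_nonempty hK hg).image _)) ?_
  rintro _ ⟨_, ⟨c, hc, rfl⟩, _, ⟨d, hd, rfl⟩, rfl⟩
  refine ⟨c + d, ⟨fun i => add_nonneg (hc.1 i) (hd.1 i), fun x => ?_⟩, map_add _ _ _⟩
  rw [map_add]; exact add_le_add (hc.2 x) (hd.2 x)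

lemma pcost_smul_le {t : ℝ} {K : Set (ℝ × ℝ)} (hK : IsCompact K) {f : K → ℝ} (hf : Continuous f)
    {l : ℝ} (hl : 0 < l) : pcost t K (l • f) ≤ l * pcost t K f := by
  rw [← div_le_iff₀' hl]
  refine le_csInf ((wcovers_nonempty hK hf).image _) ?_
  rintro _ ⟨c, hc, rfl⟩
  rw [div_le_iff₀' hl, ← smul_eq_mul, ← map_smul]
  refine pcost_le ⟨fun i => mul_nonneg hl.le (hc.1 i), fun x => ?_⟩
  rw [map_smul]; exact mul_le_mul_of_nonneg_left (hc.2 x) hl.le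

lemma pcost_smul {t : ℝ} {K : Set (ℝ × ℝ)} (hK : IsCompact K) {f : K → ℝ} (hf : Continuous f)
    {l : ℝ} (hl : 0 < l) : pcost t K (l • f) = l * pcost t K f := by
  refine le_antisymm (pcost_smul_le hK hf hl) ?_
  have := pcost_smul_le (t := t) hK (f := l • f) (hf.const_smul l) (inv_pos.2 hl)
  rwa [smul_smul, inv_mul_cancel₀ hl.ne', one_smul, ← div_eq_inv_mul, le_div_iff₀' hl] at this

/-- **Frostman's lemma** for Borel sets in the plane. -/
theorem frostman {t : ℝ} (ht : 0 < t) {B : Set (ℝ × ℝ)} (hB : MeasurableSet B)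
    (hdim : ENNReal.ofReal t < dimH B) :
    ∃ (μ : Measure (ℝ × ℝ)) (K : Set (ℝ × ℝ)) (C : ℝ), IsFiniteMeasure μ ∧ IsCompact K ∧ K ⊆ B ∧
      μ Kᶜ = 0 ∧ μ Set.univ ≠ 0 ∧ 0 < C ∧
      ∀ x ρ, 0 < ρ → μ (closedBall x ρ) ≤ ENNReal.ofReal (C * ρ ^ t) := by
  have hcont : content t B ≠ 0 := by
    intro h
    have h1 := hausdorffMeasure_of_lt_dimH (d := t.toNNReal) hdim
    rw [Real.coe_toNNReal t ht.le, hausdorff_eq_zero_of_content ht h] at h1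
    simp at h1
  obtain ⟨m, hm0, hmB⟩ := ENNReal.lt_iff_exists_nnreal_btwn.1 (pos_iff_ne_zero.2 hcont)
  obtain ⟨K, hKB, hK, hKU⟩ := exists_compact_content hB.analyticSet hmB
  have := isCompact_iff_compactSpace.1 hK
  have hp1 : 0 < pcost t K 1 := by
    have hm0' : (0 : ℝ) < m := by exact_mod_cast hm0
    refine lt_of_lt_of_le (b := (m : ℝ) / 18) (by positivity)
      (le_csInf ((wcovers_nonempty hK continuous_one).image _) ?_)
    rintro _ ⟨c, hc, rfl⟩
    have h2 := content_le_lcost hKU hc.1 fun x hx => hc.2 ⟨x, hx⟩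
    rw [← ENNReal.ofReal_coe_nnreal, ← ENNReal.ofReal_mul (by norm_num),
      show (9 : ℝ≥0∞) = ENNReal.ofReal 9 by simp, ← ENNReal.ofReal_mul (by norm_num),
      ENNReal.ofReal_le_ofReal_iff (by have := lcost_nonneg t hc.1; positivity)] at h2
    linarith
  have hKne : Nonempty K := by
    by_contra hne
    rw [not_nonempty_iff] at hne
    have := pcost_le (t := t) (K := K) (f := 1) (c := 0) ⟨fun i => le_rfl, fun x => hne.elim x⟩
    rw [map_zero] at this; exact absurd hp1 (not_lt.2 this)
  let one' : CompactlySupportedContinuousMap K ℝ :=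
    CompactlySupportedContinuousMap.continuousMapEquiv (1 : C(K, ℝ))
  have hone : ∀ x, one' x = 1 := fun x => rfl
  have hone_ne : one' ≠ 0 := fun h => by
    have := DFunLike.congr_fun h hKne.some
    rw [hone] at this; exact one_ne_zero this
  obtain ⟨g, hg1, hg2⟩ := exists_extension_of_le_sublinear
    (LinearPMap.mkSpanSingleton (K := ℝ) (σ := RingHom.id ℝ) one' (pcost t K 1) hone_ne)
    (fun f : CompactlySupportedContinuousMap K ℝ => pcost t K f)
    (fun l hl f => pcost_smul hK f.continuous hl)
    (fun f g => pcost_add hK f.continuous g.continuous)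
    (by
      rintro ⟨x, hx⟩
      obtain ⟨l, rfl⟩ := Submodule.mem_span_singleton.1 hx
      rw [LinearPMap.mkSpanSingleton'_apply]
      rcases le_or_gt l 0 with hl | hl
      · refine le_trans ?_ (pcost_nonneg _ _ _)
        exact mul_nonpos_of_nonpos_of_nonneg hl hp1.le
      · exact (pcost_smul hK (f := 1) continuous_one hl).ge)
  have hgpos : ∀ f : CompactlySupportedContinuousMap K ℝ, 0 ≤ f → 0 ≤ g f := by
    intro f hf
    have h1 := hg2 (-f)
    have h2 : pcost t K (-f : CompactlySupportedContinuousMap K ℝ) ≤ lcost t 0 :=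
      pcost_le ⟨fun i => le_rfl, fun x => by simpa using hf x⟩
    rw [map_zero] at h2
    rw [map_neg] at h1
    linarith
  have hgone : g one' = pcost t K 1 := by
    have := hg1 ⟨one', Submodule.mem_span_singleton_self _⟩
    rw [this]
    exact LinearPMap.mkSpanSingleton_apply ℝ ℝ hone_ne _
  let Λ : CompactlySupportedContinuousMap K ℝ →ₚ[ℝ] ℝ := PositiveLinearMap.mk₀ g hgpos
  have hΛ : ∀ f, Λ f = g f := fun f => rfl
  let μK : Measure K := RealRMK.rieszMeasure Λ
  have hreg : μK.Regular := RealRMK.regular_rieszMeasure Λ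
  have hfin : IsFiniteMeasure μK := ⟨isCompact_univ.measure_lt_top⟩
  have hbox : ∀ i : Idx, μK ((↑) ⁻¹' box i) ≤ wt t i := by
    intro i
    have hVo : IsOpen (((↑) : K → ℝ × ℝ) ⁻¹' box i) := (isOpen_box i).preimage continuous_subtype_val
    rw [hVo.measure_eq_iSup_isCompact]
    refine iSup₂_le fun D hD => iSup_le fun hDc => ?_
    obtain ⟨f, hf1, hf0, -, hf01⟩ := exists_continuous_one_zero_of_isCompact hDc hVo.isClosed_compl
      (Set.disjoint_compl_right_iff_subset.2 hD)
    let f' : CompactlySupportedContinuousMap K ℝ :=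
      CompactlySupportedContinuousMap.continuousMapEquiv f
    refine (RealRMK.rieszMeasure_le_of_eq_one Λ (f := f') (fun x => (hf01 x).1) hDc
      (fun x hx => hf1 hx)).trans ?_
    rw [wt]
    refine ENNReal.ofReal_le_ofReal ?_
    rw [hΛ]
    refine (hg2 f').trans ((pcost_le (c := Finsupp.single i 1) ⟨fun j => ?_, fun x => ?_⟩).trans ?_)
    · rw [Finsupp.single_apply]; split_ifs <;> simp
    · rw [lval, Finsupp.linearCombination_single, one_smul]
      by_cases hx : (x : ℝ × ℝ) ∈ box i
      · rw [Set.indicator_of_mem hx]; exact (hf01 x).2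
      · rw [Set.indicator_of_notMem hx]; exact (hf0 (show x ∈ (_ : Set K)ᶜ from hx)).le
    · rw [lcost, Finsupp.linearCombination_single, one_smul]
  have hmass : μK Set.univ ≠ 0 := by
    intro h
    have h1 := RealRMK.integral_rieszMeasure Λ one'
    rw [show RealRMK.rieszMeasure Λ = 0 from Measure.measure_univ_eq_zero.1 h,
      integral_zero_measure, hΛ, hgone] at h1
    exact hp1.ne h1
  have hme : MeasurableEmbedding ((↑) : K → ℝ × ℝ) :=
    MeasurableEmbedding.subtype_coe hK.measurableSet
  refine ⟨μK.map (↑), K, max (4 ^ t) (2 ^ t * (μK Set.univ).toReal), ?_, hK, hKB, ?_, ?_, ?_, ?_⟩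
  · exact Measure.isFiniteMeasure_map _ _
  · rw [hme.map_apply]; simp
  · rw [hme.map_apply]; simpa using hmass
  · exact lt_of_lt_of_le (by positivity) (le_max_left _ _)
  · intro x ρ hρ
    rw [hme.map_apply]
    rcases le_or_gt (1 / 2) ρ with h1 | h1
    · refine (measure_mono (Set.subset_univ _)).trans ?_
      refine (ENNReal.ofReal_toReal (measure_ne_top μK Set.univ)).ge.trans ?_
      refine ENNReal.ofReal_le_ofReal ?_
      have h2 : 1 ≤ (2 * ρ) ^ t := Real.one_le_rpow (by linarith) ht.le
      rw [Real.mul_rpow (by norm_num) hρ.le] at h2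
      calc (μK Set.univ).toReal ≤ (μK Set.univ).toReal * (2 ^ t * ρ ^ t) :=
            le_mul_of_one_le_right (by positivity) h2
        _ = (2 ^ t * (μK Set.univ).toReal) * ρ ^ t := by ring
        _ ≤ max (4 ^ t) (2 ^ t * (μK Set.univ).toReal) * ρ ^ t := by
          gcongr; exact le_max_right _ _
    · obtain ⟨k, hk1, hk2⟩ := exists_nat_pow_near_of_lt_one (x := 2 * ρ) (by linarith)
        (by linarith) (y := (1 / 2 : ℝ)) (by norm_num) (by norm_num)
      rw [one_div, inv_pow, ← one_div] at hk1 hk2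
      have hsub : ((↑) : K → ℝ × ℝ) ⁻¹' closedBall x ρ ⊆ (↑) ⁻¹' box (k, cell k x) :=
        Set.preimage_mono fun y hy => mem_box_cell (lt_of_le_of_lt hy (by linarith))
      refine (measure_mono hsub).trans ((hbox _).trans ?_)
      rw [← ofReal_one_div_two_pow_rpow t ht.le k, ENNReal.ofReal_rpow_of_nonneg (by positivity) ht.le]
      refine ENNReal.ofReal_le_ofReal ?_
      calc ((1 : ℝ) / 2 ^ k) ^ t ≤ (4 * ρ) ^ t := by
            refine Real.rpow_le_rpow (by positivity) ?_ ht.le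
            have : (1 : ℝ) / 2 ^ k = 2 * (1 / 2 ^ (k + 1)) := by rw [pow_succ]; field_simp
            rw [this]; linarith
        _ = 4 ^ t * ρ ^ t := Real.mul_rpow (by norm_num) hρ.le
        _ ≤ max (4 ^ t) (2 ^ t * (μK Set.univ).toReal) * ρ ^ t := by
          gcongr; exact le_max_left _ _

/-! ### Box averages of points and of lines -/

/-- The indicator function of `[-ρ, ρ]`. -/
def seg (ρ w : ℝ) : ℝ≥0∞ := (Set.Icc (-ρ) ρ).indicator 1 w

/-- The density at distance `c` (measured vertically) of the average of a line of slope `a` over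
boxes of half-side `ρ`: the horizontal length of the part of the line in the box, divided by the
area of the box. -/
def mE (ρ a c : ℝ) : ℝ≥0∞ := ENNReal.ofReal (1 / (4 * ρ ^ 2)) * ∫⁻ s, seg ρ s * seg ρ (a * s - c)

/-- The signed vertical distance from the line through `l.1` with slope `l.2` to the point `y`. -/
def cdist (l : (ℝ × ℝ) × ℝ) (y : ℝ × ℝ) : ℝ := y.2 - l.1.2 - l.2 * (y.1 - l.1.1)

@[fun_prop]
lemma measurable_seg (ρ : ℝ) : Measurable (seg ρ) :=
  measurable_one.indicator measurableSet_Icc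

lemma seg_neg (ρ w : ℝ) : seg ρ (-w) = seg ρ w := by
  simp only [seg, Set.indicator_apply, Set.mem_Icc]
  refine if_congr ?_ rfl rfl
  constructor <;> rintro ⟨h1, h2⟩ <;> constructor <;> linarith

lemma seg_of_abs_le {ρ w : ℝ} (h : |w| ≤ ρ) : seg ρ w = 1 := by
  simp [seg, abs_le.1 h]

lemma seg_of_lt_abs {ρ w : ℝ} (h : ρ < |w|) : seg ρ w = 0 := by
  refine Set.indicator_of_notMem (fun hw => ?_) _
  exact absurd (abs_le.2 hw) (not_le.2 h)

lemma seg_le_one (ρ w : ℝ) : seg ρ w ≤ 1 := by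
  rcases le_or_gt |w| ρ with h | h
  · rw [seg_of_abs_le h]
  · rw [seg_of_lt_abs h]; exact zero_le_one

lemma lintegral_seg (ρ : ℝ) : ∫⁻ w, seg ρ w = ENNReal.ofReal (2 * ρ) := by
  simp only [seg]
  rw [lintegral_indicator_one measurableSet_Icc, Real.volume_Icc]; congr 1; ring

@[fun_prop]
lemma measurable_mE (ρ : ℝ) : Measurable fun p : ℝ × ℝ => mE ρ p.1 p.2 := by
  unfold mE
  refine Measurable.const_mul ?_ _
  exact Measurable.lintegral_prod_right' (f := fun q : (ℝ × ℝ) × ℝ =>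
    seg ρ q.2 * seg ρ (q.1.1 * q.2 - q.1.2)) (by fun_prop)

@[fun_prop]
lemma measurable_cdist : Measurable fun q : ((ℝ × ℝ) × ℝ) × (ℝ × ℝ) => cdist q.1 q.2 := by
  unfold cdist; fun_prop

lemma measurable_mE_cdist (ρ : ℝ) :
    Measurable fun q : ((ℝ × ℝ) × ℝ) × (ℝ × ℝ) => mE ρ q.1.2 (cdist q.1 q.2) :=
  (measurable_mE ρ).comp (measurable_fst.snd.prodMk measurable_cdist)

lemma mE_le {ρ : ℝ} (hρ : 0 < ρ) (a c : ℝ) : mE ρ a c ≤ ENNReal.ofReal (1 / (2 * ρ)) := by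
  calc mE ρ a c ≤ ENNReal.ofReal (1 / (4 * ρ ^ 2)) * ∫⁻ s, seg ρ s := by
        unfold mE; gcongr with s
        exact mul_le_of_le_one_right zero_le (seg_le_one _ _)
    _ = ENNReal.ofReal (1 / (2 * ρ)) := by
        rw [lintegral_seg, ← ENNReal.ofReal_mul (by positivity)]; congr 1; field_simp; norm_num

lemma mE_eq_zero {ρ a c M : ℝ} (ha : |a| ≤ M) (hc : ρ * (1 + M) < |c|) : mE ρ a c = 0 := by
  have : ∀ s, seg ρ s * seg ρ (a * s - c) = 0 := by
    intro s
    rcases le_or_gt |s| ρ with h | h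
    · rw [seg_of_lt_abs (w := a * s - c), mul_zero]
      have h1 : |a * s| ≤ M * ρ := by
        rw [abs_mul]; exact mul_le_mul ha h (abs_nonneg _) ((abs_nonneg _).trans ha)
      have h2 := abs_sub_abs_le_abs_sub c (a * s)
      rw [abs_sub_comm]; linarith
    · rw [seg_of_lt_abs h, zero_mul]
  simp [mE, this]

lemma lintegral_mE {ρ : ℝ} (hρ : 0 < ρ) (a : ℝ) : ∫⁻ c, mE ρ a c = 1 := by
  unfold mE
  rw [lintegral_const_mul _ (by
    exact Measurable.lintegral_prod_right' (f := fun q : ℝ × ℝ =>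
      seg ρ q.2 * seg ρ (a * q.2 - q.1)) (by fun_prop))]
  rw [lintegral_lintegral_swap (by fun_prop)]
  have : ∀ s, ∫⁻ c, seg ρ s * seg ρ (a * s - c) = seg ρ s * ENNReal.ofReal (2 * ρ) := by
    intro s
    rw [lintegral_const_mul _ (by fun_prop), lintegral_sub_left_eq_self (seg ρ) (a * s),
      lintegral_seg]
  simp_rw [this]
  rw [lintegral_mul_const _ (by fun_prop), lintegral_seg, ← ENNReal.ofReal_mul (by positivity),
    ← ENNReal.ofReal_mul (by positivity), ← ENNReal.ofReal_one]
  congr 1; field_simp; norm_num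

lemma le_mE {ρ a c M : ℝ} (hρ : 0 < ρ) (hM : 1 ≤ M) (ha : |a| ≤ M) (hc : |c| ≤ ρ / 2) :
    ENNReal.ofReal (1 / (4 * M * ρ)) ≤ mE ρ a c := by
  have hM0 : 0 < M := by linarith
  have key : ∀ s, seg (ρ / (2 * M)) s ≤ seg ρ s * seg ρ (a * s - c) := by
    intro s
    rcases le_or_gt |s| (ρ / (2 * M)) with h | h
    · have h1 : ρ / (2 * M) ≤ ρ / 2 := by gcongr; linarith
      have h2 : |a * s| ≤ ρ / 2 := by
        rw [abs_mul]
        calc |a| * |s| ≤ M * (ρ / (2 * M)) := by gcongr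
          _ = ρ / 2 := by field_simp
      rw [seg_of_abs_le h, seg_of_abs_le (by linarith), seg_of_abs_le, one_mul]
      have := abs_sub (a * s) c
      linarith
    · rw [seg_of_lt_abs h]; exact zero_le
  calc ENNReal.ofReal (1 / (4 * M * ρ))
      = ENNReal.ofReal (1 / (4 * ρ ^ 2)) * ∫⁻ s, seg (ρ / (2 * M)) s := by
        rw [lintegral_seg, ← ENNReal.ofReal_mul (by positivity)]; congr 1; field_simp
    _ ≤ mE ρ a c := by unfold mE; gcongr with s; exact key s

lemma indicator_closedBall (z y : ℝ × ℝ) (ρ : ℝ) :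
    (closedBall z ρ).indicator (1 : ℝ × ℝ → ℝ≥0∞) y = seg ρ (y.1 - z.1) * seg ρ (y.2 - z.2) := by
  by_cases h : y ∈ closedBall z ρ
  · rw [Set.indicator_of_mem h]
    rw [mem_closedBall, Prod.dist_eq, max_le_iff, Real.dist_eq, Real.dist_eq] at h
    rw [seg_of_abs_le h.1, seg_of_abs_le h.2]; simp
  · rw [Set.indicator_of_notMem h]
    rw [mem_closedBall, Prod.dist_eq, max_le_iff, Real.dist_eq, Real.dist_eq, not_and_or, not_le,
      not_le] at h
    rcases h with h | h <;> simp [seg_of_lt_abs h]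

/-- The average of `mE ρ'` over the box of half-side `ρ` around a point at distance `c` from a
line of slope `a`, up to normalisation. -/
def avE (ρ ρ' a c : ℝ) : ℝ≥0∞ :=
  ∫⁻ u, ∫⁻ s, ∫⁻ v, seg ρ u * seg ρ' s * (seg ρ v * seg ρ' (a * (s + u) - c - v))

lemma avE_comm (ρ ρ' a c : ℝ) : avE ρ ρ' a c = avE ρ' ρ a c := by
  unfold avE
  rw [lintegral_lintegral_swap]
  · refine lintegral_congr fun s => lintegral_congr fun u => ?_
    rw [lintegral_const_mul _ (by fun_prop), lintegral_const_mul _ (by fun_prop),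
      ← lintegral_sub_left_eq_self _ (a * (s + u) - c)]
    rw [mul_comm (seg ρ u)]
    congr 1
    refine lintegral_congr fun v => ?_
    rw [mul_comm, add_comm u s]; congr 2; ring
  · refine Measurable.aemeasurable ?_
    exact Measurable.lintegral_prod_right' (f := fun q : (ℝ × ℝ) × ℝ =>
      seg ρ q.1.1 * seg ρ' q.1.2 * (seg ρ q.2 * seg ρ' (a * (q.1.2 + q.1.1) - c - q.2)))
      (by fun_prop)

lemma lintegral_closedBall_mE (ρ ρ' : ℝ) (l : (ℝ × ℝ) × ℝ) (z : ℝ × ℝ) :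
    ∫⁻ y, (closedBall z ρ).indicator 1 y * mE ρ' l.2 (cdist l y) =
      ENNReal.ofReal (1 / (4 * ρ' ^ 2)) * avE ρ ρ' l.2 (cdist l z) := by
  have hm : Measurable fun y => mE ρ' l.2 (cdist l y) :=
    (measurable_mE_cdist ρ').comp (measurable_const.prodMk measurable_id)
  simp_rw [indicator_closedBall]
  rw [Measure.volume_eq_prod, lintegral_prod _ (by fun_prop)]
  rw [← lintegral_add_right_eq_self _ z.1, avE,
    ← lintegral_const_mul _ (by
      exact Measurable.lintegral_prod_right' (f := fun q : ℝ × ℝ => ∫⁻ v, seg ρ q.1 * seg ρ' q.2 *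
        (seg ρ v * seg ρ' (l.2 * (q.2 + q.1) - cdist l z - v)))
        (Measurable.lintegral_prod_right' (f := fun q : (ℝ × ℝ) × ℝ => seg ρ q.1.1 * seg ρ' q.1.2 *
        (seg ρ q.2 * seg ρ' (l.2 * (q.1.2 + q.1.1) - cdist l z - q.2))) (by fun_prop)))]
  refine lintegral_congr fun u => ?_
  rw [← lintegral_add_right_eq_self _ z.2, lintegral_lintegral_swap (by fun_prop),
    ← lintegral_const_mul _ (by
      exact Measurable.lintegral_prod_right' (f := fun q : ℝ × ℝ => seg ρ u * seg ρ' q.2 *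
        (seg ρ q.1 * seg ρ' (l.2 * (q.2 + u) - cdist l z - q.1))) (by fun_prop))]
  refine lintegral_congr fun v => ?_
  simp only [add_sub_cancel_right, mE]
  rw [mul_left_comm]
  congr 1
  rw [← lintegral_const_mul _ (by fun_prop)]
  refine lintegral_congr fun s => ?_
  have : l.2 * s - cdist l (u + z.1, v + z.2) = l.2 * (s + u) - cdist l z - v := by
    simp only [cdist]; ring
  rw [this]; ring

/-- The box average of a measure, as a function. -/
def avP (μ : Measure (ℝ × ℝ)) (ρ : ℝ) (y : ℝ × ℝ) : ℝ≥0∞ :=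
  ENNReal.ofReal (1 / (4 * ρ ^ 2)) * μ (closedBall y ρ)

/-- The box average of a superposition of lines, as a function. -/
def avL (L : Measure ((ℝ × ℝ) × ℝ)) (ρ : ℝ) (y : ℝ × ℝ) : ℝ≥0∞ :=
  ∫⁻ l, mE ρ l.2 (cdist l y) ∂L

/-- The number of incidences between points and lines, blurred at the scales `ρ` and `ρ'`. -/
def inc (μ : Measure (ℝ × ℝ)) (L : Measure ((ℝ × ℝ) × ℝ)) (ρ ρ' : ℝ) : ℝ≥0∞ :=
  ∫⁻ y, avP μ ρ y * avL L ρ' y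

lemma avP_eq (μ : Measure (ℝ × ℝ)) (ρ : ℝ) (y : ℝ × ℝ) : avP μ ρ y =
    ENNReal.ofReal (1 / (4 * ρ ^ 2)) * ∫⁻ z, (closedBall z ρ).indicator 1 y ∂μ := by
  rw [avP]
  congr 1
  rw [← lintegral_indicator_one isClosed_closedBall.measurableSet]
  refine lintegral_congr fun z => ?_
  rw [indicator_closedBall, indicator_closedBall, ← seg_neg, ← seg_neg ρ (z.2 - y.2), neg_sub,
    neg_sub]

lemma measurable_avP (μ : Measure (ℝ × ℝ)) [IsFiniteMeasure μ] (ρ : ℝ) :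
    Measurable (avP μ ρ) := by
  have h : avP μ ρ = fun y => avP μ ρ y := rfl
  rw [h]
  simp_rw [avP_eq, indicator_closedBall]
  refine Measurable.const_mul ?_ _
  exact Measurable.lintegral_prod_right' (f := fun q : (ℝ × ℝ) × (ℝ × ℝ) =>
    seg ρ (q.1.1 - q.2.1) * seg ρ (q.1.2 - q.2.2)) (by fun_prop)

lemma measurable_avL (L : Measure ((ℝ × ℝ) × ℝ)) [IsFiniteMeasure L] (ρ : ℝ) :
    Measurable (avL L ρ) :=
  Measurable.lintegral_prod_left' (f := fun q : ((ℝ × ℝ) × ℝ) × (ℝ × ℝ) =>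
    mE ρ q.1.2 (cdist q.1 q.2)) (measurable_mE_cdist ρ)

lemma avL_le (L : Measure ((ℝ × ℝ) × ℝ)) {ρ : ℝ} (hρ : 0 < ρ) (y : ℝ × ℝ) :
    avL L ρ y ≤ ENNReal.ofReal (1 / (2 * ρ)) * L Set.univ := by
  rw [← lintegral_const]
  exact lintegral_mono fun l => mE_le hρ _ _

lemma inc_eq (μ : Measure (ℝ × ℝ)) (L : Measure ((ℝ × ℝ) × ℝ)) [IsFiniteMeasure μ]
    [IsFiniteMeasure L] (ρ ρ' : ℝ) : inc μ L ρ ρ' = ENNReal.ofReal (1 / (4 * ρ ^ 2)) *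
      ∫⁻ z, (∫⁻ y, (closedBall z ρ).indicator 1 y * avL L ρ' y) ∂μ := by
  have hm := measurable_avL L ρ'
  have hm2 : Measurable fun q : (ℝ × ℝ) × (ℝ × ℝ) =>
      (closedBall q.2 ρ).indicator (1 : ℝ × ℝ → ℝ≥0∞) q.1 := by
    simp_rw [indicator_closedBall]; fun_prop
  have h1 : ∀ y, avP μ ρ y * avL L ρ' y = ENNReal.ofReal (1 / (4 * ρ ^ 2)) *
      ∫⁻ z, (closedBall z ρ).indicator 1 y * avL L ρ' y ∂μ := by
    intro y
    rw [avP_eq, mul_assoc, lintegral_mul_const]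
    exact hm2.comp (measurable_const.prodMk measurable_id)
  simp_rw [inc, h1]
  rw [lintegral_const_mul, lintegral_lintegral_swap]
  · exact (hm2.mul (hm.comp measurable_fst)).aemeasurable
  · exact Measurable.lintegral_prod_right' (f := fun q : (ℝ × ℝ) × (ℝ × ℝ) =>
      (closedBall q.2 ρ).indicator (1 : ℝ × ℝ → ℝ≥0∞) q.1 * avL L ρ' q.1)
      (hm2.mul (hm.comp measurable_fst))

lemma inc_eq' (μ : Measure (ℝ × ℝ)) (L : Measure ((ℝ × ℝ) × ℝ)) [IsFiniteMeasure μ]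
    [IsFiniteMeasure L] (ρ ρ' : ℝ) : inc μ L ρ ρ' = ENNReal.ofReal (1 / (4 * ρ ^ 2)) *
      ∫⁻ z, ∫⁻ l, ENNReal.ofReal (1 / (4 * ρ' ^ 2)) * avE ρ ρ' l.2 (cdist l z) ∂L ∂μ := by
  rw [inc_eq]
  congr 1
  refine lintegral_congr fun z => ?_
  have hm2 : Measurable ((closedBall z ρ).indicator (1 : ℝ × ℝ → ℝ≥0∞)) :=
    measurable_one.indicator isClosed_closedBall.measurableSet
  calc ∫⁻ y, (closedBall z ρ).indicator 1 y * avL L ρ' y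
      = ∫⁻ y, ∫⁻ l, (closedBall z ρ).indicator 1 y * mE ρ' l.2 (cdist l y) ∂L := by
        refine lintegral_congr fun y => ?_
        rw [avL, lintegral_const_mul]
        exact (measurable_mE_cdist ρ').comp (measurable_id.prodMk measurable_const)
    _ = ∫⁻ l, (∫⁻ y, (closedBall z ρ).indicator 1 y * mE ρ' l.2 (cdist l y)) ∂L := by
        rw [lintegral_lintegral_swap]
        exact ((hm2.comp measurable_fst).mul
          ((measurable_mE_cdist ρ').comp measurable_swap)).aemeasurable
    _ = _ := lintegral_congr fun l => lintegral_closedBall_mE _ _ _ _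

/-- Blurring points at scale `ρ` and lines at scale `ρ'` has the same effect as the reverse. -/
lemma inc_comm (μ : Measure (ℝ × ℝ)) (L : Measure ((ℝ × ℝ) × ℝ)) [IsFiniteMeasure μ]
    [IsFiniteMeasure L] (ρ ρ' : ℝ) : inc μ L ρ ρ' = inc μ L ρ' ρ := by
  rw [inc_eq', inc_eq', ← lintegral_const_mul' _ _ ENNReal.ofReal_ne_top,
    ← lintegral_const_mul' _ _ ENNReal.ofReal_ne_top]
  refine lintegral_congr fun z => ?_
  rw [← lintegral_const_mul' _ _ ENNReal.ofReal_ne_top,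
    ← lintegral_const_mul' _ _ ENNReal.ofReal_ne_top]
  refine lintegral_congr fun l => ?_
  rw [avE_comm, mul_left_comm]

lemma volume_closedBall_prod (z : ℝ × ℝ) {ρ : ℝ} (hρ : 0 < ρ) :
    volume (closedBall z ρ) = ENNReal.ofReal (4 * ρ ^ 2) := by
  rw [← closedBall_prod_same, Measure.volume_eq_prod, Measure.prod_prod, Real.volume_closedBall,
    Real.volume_closedBall, ← ENNReal.ofReal_mul (by positivity)]
  congr 1; ring

lemma lintegral_avP (μ : Measure (ℝ × ℝ)) [IsFiniteMeasure μ] {ρ : ℝ} (hρ : 0 < ρ) :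
    ∫⁻ y, avP μ ρ y = μ Set.univ := by
  have hm2 : Measurable fun q : (ℝ × ℝ) × (ℝ × ℝ) =>
      (closedBall q.2 ρ).indicator (1 : ℝ × ℝ → ℝ≥0∞) q.1 := by
    simp_rw [indicator_closedBall]; fun_prop
  simp_rw [avP_eq]
  rw [lintegral_const_mul' _ _ ENNReal.ofReal_ne_top, lintegral_lintegral_swap hm2.aemeasurable]
  have : ∀ z : ℝ × ℝ, ∫⁻ y, (closedBall z ρ).indicator (1 : ℝ × ℝ → ℝ≥0∞) y =
      ENNReal.ofReal (4 * ρ ^ 2) := fun z => by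
    rw [lintegral_indicator_one isClosed_closedBall.measurableSet, volume_closedBall_prod z hρ]
  simp_rw [this]
  rw [lintegral_const, ← mul_assoc, ← ENNReal.ofReal_mul (by positivity),
    one_div_mul_cancel (by positivity), ENNReal.ofReal_one, one_mul]

/-- The trivial bound for the blurred number of incidences. -/
lemma inc_le (μ : Measure (ℝ × ℝ)) (L : Measure ((ℝ × ℝ) × ℝ)) [IsFiniteMeasure μ]
    {ρ ρ' : ℝ} (hρ : 0 < ρ) (hρ' : 0 < ρ') :
    inc μ L ρ ρ' ≤ ENNReal.ofReal (1 / (2 * ρ')) * L Set.univ * μ Set.univ := by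
  calc inc μ L ρ ρ' ≤ ∫⁻ y, avP μ ρ y * (ENNReal.ofReal (1 / (2 * ρ')) * L Set.univ) := by
        unfold inc; gcongr with y; exact avL_le L hρ' y
    _ = _ := by rw [lintegral_mul_const _ (measurable_avP μ ρ), lintegral_avP μ hρ, mul_comm]

/-- Square function of the points: a mass bound for balls bounds the `L²` norm of the average. -/
lemma lintegral_avP_sq (μ : Measure (ℝ × ℝ)) [IsFiniteMeasure μ] {ρ b : ℝ} (hρ : 0 < ρ)
    (hb : ∀ y, μ (closedBall y ρ) ≤ ENNReal.ofReal b) :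
    ∫⁻ y, avP μ ρ y ^ 2 ≤ ENNReal.ofReal (b / (4 * ρ ^ 2)) * μ Set.univ := by
  calc ∫⁻ y, avP μ ρ y ^ 2 ≤ ∫⁻ y, ENNReal.ofReal (b / (4 * ρ ^ 2)) * avP μ ρ y := by
        refine lintegral_mono fun y => ?_
        rw [sq]
        gcongr
        calc avP μ ρ y ≤ ENNReal.ofReal (1 / (4 * ρ ^ 2)) * ENNReal.ofReal b := by
              unfold avP; gcongr; exact hb y
          _ = _ := by rw [← ENNReal.ofReal_mul (by positivity)]; congr 1; ring
    _ = _ := by rw [lintegral_const_mul _ (measurable_avP μ ρ), lintegral_avP μ hρ]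

/-! ### The high-frequency part of a line and its correlations -/

/-- The difference of the averages of a line at the scales `ρ` and `2ρ`; it has mean zero in the
vertical direction. -/
def psi (ρ a c : ℝ) : ℝ := (mE ρ a c).toReal - (mE (2 * ρ) a c).toReal

lemma mE_ne_top {ρ : ℝ} (hρ : 0 < ρ) (a c : ℝ) : mE ρ a c ≠ ⊤ :=
  ne_top_of_le_ne_top ENNReal.ofReal_ne_top (mE_le hρ a c)

lemma toReal_mE_le {ρ : ℝ} (hρ : 0 < ρ) (a c : ℝ) : (mE ρ a c).toReal ≤ 1 / (2 * ρ) :=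
  ENNReal.toReal_le_of_le_ofReal (by positivity) (mE_le hρ a c)

@[fun_prop]
lemma measurable_psi (ρ : ℝ) : Measurable fun p : ℝ × ℝ => psi ρ p.1 p.2 := by
  have h1 := (measurable_mE ρ).ennreal_toReal
  have h2 := (measurable_mE (2 * ρ)).ennreal_toReal
  exact h1.sub h2

lemma measurable_psi_cdist (ρ : ℝ) :
    Measurable fun q : ((ℝ × ℝ) × ℝ) × (ℝ × ℝ) => psi ρ q.1.2 (cdist q.1 q.2) := by
  have h1 := measurable_mE_cdist ρ
  have h2 := measurable_mE_cdist (2 * ρ)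
  exact h1.ennreal_toReal.sub h2.ennreal_toReal

lemma measurable_psi_right (ρ a : ℝ) : Measurable (psi ρ a) := by
  have h1 : ∀ ρ, Measurable (mE ρ a) := fun ρ =>
    (measurable_mE ρ).comp (measurable_const.prodMk measurable_id)
  exact (h1 ρ).ennreal_toReal.sub (h1 (2 * ρ)).ennreal_toReal

lemma measurable_cdist_right (l : (ℝ × ℝ) × ℝ) : Measurable (cdist l) := by
  unfold cdist; fun_prop

lemma abs_psi_le {ρ : ℝ} (hρ : 0 < ρ) (a c : ℝ) : |psi ρ a c| ≤ 1 / (2 * ρ) := by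
  have h1 := toReal_mE_le hρ a c
  have h2 := toReal_mE_le (ρ := 2 * ρ) (by positivity) a c
  have h3 : 1 / (2 * (2 * ρ)) ≤ 1 / (2 * ρ) := by gcongr; linarith
  have h4 : 0 ≤ (mE ρ a c).toReal := ENNReal.toReal_nonneg
  have h5 : 0 ≤ (mE (2 * ρ) a c).toReal := ENNReal.toReal_nonneg
  rw [psi, abs_le]; constructor <;> linarith

lemma psi_eq_zero {ρ a c M : ℝ} (hρ : 0 < ρ) (ha : |a| ≤ M) (hc : 2 * (1 + M) * ρ < |c|) :
    psi ρ a c = 0 := by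
  have hM : 0 ≤ M := (abs_nonneg a).trans ha
  rw [psi, mE_eq_zero ha (by nlinarith), mE_eq_zero ha (by nlinarith)]; simp

/-- A bounded measurable function vanishing off a set of finite measure is integrable. -/
lemma integrable_of_bdd {α : Type*} [MeasurableSpace α] {m : Measure α} {h : α → ℝ} {b : ℝ}
    {s : Set α} (hm : Measurable h) (hb : ∀ u, |h u| ≤ b) (hs : ∀ u, u ∉ s → h u = 0)
    (hfin : m s ≠ ⊤) : Integrable h m := by
  have h1 : IntegrableOn h s m := by
    refine IntegrableOn.of_bound (lt_top_iff_ne_top.2 hfin) hm.aestronglyMeasurable b ?_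
    exact Filter.Eventually.of_forall fun u => by simpa using hb u
  refine (integrableOn_iff_integrable_of_support_subset fun u hu => ?_).1 h1
  by_contra h2
  exact hu (hs u h2)

lemma integral_psi {ρ : ℝ} (hρ : 0 < ρ) (a : ℝ) : ∫ c, psi ρ a c = 0 := by
  have hmeas : ∀ ρ, Measurable fun c => mE ρ a c := fun ρ =>
    (measurable_mE ρ).comp (measurable_const.prodMk measurable_id)
  have hInt : ∀ ρ, 0 < ρ → Integrable fun c => (mE ρ a c).toReal := fun ρ hρ =>
    integrable_toReal_of_lintegral_ne_top (hmeas ρ).aemeasurable (by simp [lintegral_mE hρ])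
  have hval : ∀ ρ, 0 < ρ → ∫ c, (mE ρ a c).toReal = 1 := fun ρ hρ => by
    rw [integral_toReal (hmeas ρ).aemeasurable
      (Filter.Eventually.of_forall fun c => lt_top_iff_ne_top.2 (mE_ne_top hρ a c)),
      lintegral_mE hρ]; simp
  simp only [psi]
  rw [integral_sub (hInt ρ hρ) (hInt _ (by positivity)), hval ρ hρ, hval _ (by positivity), sub_self]

/-- An oscillatory integral: a Lipschitz function against a rescaled bump of mean zero. -/
lemma abs_integral_osc_le {f g : ℝ → ℝ} {K b S α β : ℝ} (hf : ∀ u v, |f u - f v| ≤ K * |u - v|)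
    (hfc : Measurable f) (hK : 0 ≤ K) (hS : 0 ≤ S) (hgm : Measurable g) (hgb : ∀ w, |g w| ≤ b)
    (hgs : ∀ w, S < |w| → g w = 0) (hg0 : ∫ w, g w = 0) (hα : α ≠ 0) :
    |∫ u, f u * g (α * u + β)| ≤ 2 * K * b * S ^ 2 / α ^ 2 := by
  have hα' : 0 < |α| := abs_pos.2 hα
  set u₀ : ℝ := -β / α
  have hab : ∀ u, α * u + β = α * (u - u₀) := fun u => by simp only [u₀]; field_simp; ring
  have hsupp : ∀ u, u ∉ closedBall u₀ (S / |α|) → g (α * u + β) = 0 := by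
    intro u hu
    rw [mem_closedBall, Real.dist_eq, not_le, div_lt_iff₀ hα', mul_comm, ← abs_mul, ← hab] at hu
    exact hgs _ hu
  have hb0 : 0 ≤ b := (abs_nonneg _).trans (hgb 0)
  have hgm' : Measurable fun u => g (α * u + β) := hgm.comp (by fun_prop)
  have hi1 : Integrable fun u => g (α * u + β) :=
    integrable_of_bdd hgm' (fun u => hgb _) hsupp measure_closedBall_lt_top.ne
  have hfb : ∀ u, |(f u - f u₀) * g (α * u + β)| ≤ K * (S / |α|) * b := by
    intro u
    by_cases hu : u ∈ closedBall u₀ (S / |α|)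
    · rw [abs_mul]
      refine mul_le_mul ((hf _ _).trans ?_) (hgb _) (abs_nonneg _) (by positivity)
      gcongr
      simpa [Real.dist_eq] using hu
    · rw [hsupp u hu, mul_zero, abs_zero]; positivity
  have hsupp2 : ∀ u, u ∉ closedBall u₀ (S / |α|) → (f u - f u₀) * g (α * u + β) = 0 :=
    fun u hu => by rw [hsupp u hu, mul_zero]
  have hi2 : Integrable fun u => (f u - f u₀) * g (α * u + β) :=
    integrable_of_bdd ((hfc.sub_const _).mul hgm') hfb hsupp2 measure_closedBall_lt_top.ne
  have hz : ∫ u, g (α * u + β) = 0 := by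
    have := Measure.integral_comp_mul_left (fun w => g (w + β)) α
    rw [this, integral_add_right_eq_self g β, hg0, smul_zero]
  have heq : ∫ u, f u * g (α * u + β) = ∫ u in closedBall u₀ (S / |α|),
      (f u - f u₀) * g (α * u + β) := by
    rw [setIntegral_eq_integral_of_forall_compl_eq_zero hsupp2]
    calc ∫ u, f u * g (α * u + β)
        = ∫ u, ((f u - f u₀) * g (α * u + β) + f u₀ * g (α * u + β)) := by
          congr 1; ext u; ring
      _ = _ := by rw [integral_add hi2 (hi1.const_mul _), integral_const_mul, hz, mul_zero, add_zero]
  rw [heq, ← Real.norm_eq_abs]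
  refine (norm_setIntegral_le_of_norm_le_const measure_closedBall_lt_top
    (fun u _ => by rw [Real.norm_eq_abs]; exact hfb u)).trans (le_of_eq ?_)
  rw [Measure.real, Real.volume_closedBall, ENNReal.toReal_ofReal (by positivity), ← sq_abs α]
  field_simp

/-- A Lipschitz cut-off function adapted to the ball of radius `r` around `q`. -/
def cut (q : ℝ × ℝ) (r : ℝ) (y : ℝ × ℝ) : ℝ := max 0 (3 - dist y q / r)

lemma cut_nonneg (q : ℝ × ℝ) (r : ℝ) (y : ℝ × ℝ) : 0 ≤ cut q r y := le_max_left _ _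

lemma cut_le {r : ℝ} (hr : 0 < r) (q y : ℝ × ℝ) : cut q r y ≤ 3 :=
  max_le (by norm_num) (by have : 0 ≤ dist y q / r := by positivity
                           linarith)

lemma one_le_cut {q y : ℝ × ℝ} {r : ℝ} (hr : 0 < r) (h : dist y q ≤ 2 * r) : 1 ≤ cut q r y := by
  refine le_max_of_le_right ?_
  have : dist y q / r ≤ 2 := by rwa [div_le_iff₀ hr]
  linarith

lemma cut_eq_zero {q y : ℝ × ℝ} {r : ℝ} (hr : 0 < r) (h : 3 * r < dist y q) : cut q r y = 0 := by
  refine max_eq_left ?_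
  have : 3 ≤ dist y q / r := by rw [le_div_iff₀ hr]; exact h.le
  linarith

lemma abs_cut_sub_le {r : ℝ} (hr : 0 < r) (q y z : ℝ × ℝ) :
    |cut q r y - cut q r z| ≤ 1 / r * dist y z := by
  unfold cut
  refine (abs_max_sub_max_le_max _ _ _ _).trans ?_
  rw [sub_self, abs_zero, max_eq_right (abs_nonneg _),
    show 3 - dist y q / r - (3 - dist z q / r) = (dist z q - dist y q) / r by ring, abs_div,
    abs_of_pos hr, div_eq_inv_mul, one_div, dist_comm y z]
  gcongr
  exact abs_dist_sub_le z y q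

@[fun_prop]
lemma measurable_cut (q : ℝ × ℝ) (r : ℝ) : Measurable (cut q r) := by
  unfold cut; fun_prop

/-- The localised correlation of the high-frequency parts of two lines. -/
def corr (q : ℝ × ℝ) (r ρ : ℝ) (l l' : (ℝ × ℝ) × ℝ) : ℝ :=
  ∫ y, cut q r y * psi ρ l.2 (cdist l y) * psi ρ l'.2 (cdist l' y)

lemma abs_cut_mul_psi_le {ρ r : ℝ} (hρ : 0 < ρ) (hr : 0 < r) (q y : ℝ × ℝ) (a c : ℝ) :
    |cut q r y * psi ρ a c| ≤ 3 * (1 / (2 * ρ)) := by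
  rw [abs_mul, abs_of_nonneg (cut_nonneg q r y)]
  exact mul_le_mul (cut_le hr q y) (abs_psi_le hρ a c) (abs_nonneg _) (by norm_num)

/-- Fubini in the coordinates given by the first coordinate and the distance to the first line. -/
lemma corr_eq {q : ℝ × ℝ} {r ρ M a : ℝ} (hr : 0 < r) (hρ : 0 < ρ) (ha : |a| ≤ M)
    (x x' : ℝ × ℝ) (a' : ℝ) :
    corr q r ρ (x, a) (x', a') = ∫ c, psi ρ a c * ∫ u, cut q r (u, c + (x.2 + a * (u - x.1))) *
      psi ρ a' ((a - a') * u + (c + x.2 - a * x.1 - x'.2 + a' * x'.1)) := by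
  have hm1 : Measurable fun y => psi ρ a (cdist (x, a) y) :=
    (measurable_psi_right ρ _).comp (measurable_cdist_right _)
  have hm2 : Measurable fun y => psi ρ a' (cdist (x', a') y) :=
    (measurable_psi_right ρ _).comp (measurable_cdist_right _)
  set F : ℝ × ℝ → ℝ := fun y => cut q r y * psi ρ a (cdist (x, a) y) * psi ρ a' (cdist (x', a') y)
    with hF
  have hFm : Measurable F := ((measurable_cut q r).mul hm1).mul hm2
  have hFb : ∀ y, |F y| ≤ 3 * (1 / (2 * ρ)) * (1 / (2 * ρ)) := by
    intro y
    rw [hF, abs_mul]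
    exact mul_le_mul (abs_cut_mul_psi_le hρ hr _ _ _ _) (abs_psi_le hρ _ _) (abs_nonneg _)
      (by positivity)
  have hFs : ∀ y, y ∉ closedBall q (3 * r) → F y = 0 := by
    intro y hy
    rw [mem_closedBall, not_le] at hy
    simp only [hF, cut_eq_zero hr hy, zero_mul]
  have hFi : Integrable F := integrable_of_bdd hFm hFb hFs measure_closedBall_lt_top.ne
  have h1 : corr q r ρ (x, a) (x', a') = ∫ u, ∫ c, F (u, c + (x.2 + a * (u - x.1))) := by
    have h2 : corr q r ρ (x, a) (x', a') = ∫ y, F y := rfl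
    rw [h2, Measure.volume_eq_prod, integral_prod _ hFi]
    refine integral_congr_ae (Filter.Eventually.of_forall fun u => ?_)
    exact (integral_add_right_eq_self (fun v => F (u, v)) _).symm
  rw [h1, integral_integral_swap]
  · refine integral_congr_ae (Filter.Eventually.of_forall fun c => ?_)
    simp only
    rw [← integral_const_mul]
    refine integral_congr_ae (Filter.Eventually.of_forall fun u => ?_)
    simp only [hF, cdist]
    have e1 : c + (x.2 + a * (u - x.1)) - x.2 - a * (u - x.1) = c := by ring
    have e2 : c + (x.2 + a * (u - x.1)) - x'.2 - a' * (u - x'.1) =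
      (a - a') * u + (c + x.2 - a * x.1 - x'.2 + a' * x'.1) := by ring
    rw [e1, e2]; ring
  · refine integrable_of_bdd (s := closedBall q.1 (3 * r) ×ˢ closedBall 0 (2 * (1 + M) * ρ))
      (b := 3 * (1 / (2 * ρ)) * (1 / (2 * ρ))) ?_ ?_ ?_ ?_
    · exact hFm.comp (f := fun p : ℝ × ℝ => (p.1, p.2 + (x.2 + a * (p.1 - x.1)))) (by fun_prop)
    · exact fun p => hFb _
    · intro p hp
      rw [Set.mem_prod, not_and_or, mem_closedBall, mem_closedBall, not_le, not_le, Real.dist_eq,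
        Real.dist_eq, sub_zero] at hp
      rcases hp with hp | hp
      · refine hFs _ fun h => ?_
        rw [mem_closedBall, Prod.dist_eq, max_le_iff, Real.dist_eq] at h
        exact absurd h.1 (not_le.2 hp)
      · have e1 : p.2 + (x.2 + a * (p.1 - x.1)) - x.2 - a * (p.1 - x.1) = p.2 := by ring
        simp only [Function.uncurry, hF, cdist, e1]
        rw [psi_eq_zero hρ ha hp]; simp
    · rw [Measure.prod_prod]
      exact ENNReal.mul_ne_top measure_closedBall_lt_top.ne measure_closedBall_lt_top.ne

lemma abs_corr_le_of_inner {q : ℝ × ℝ} {r ρ M a K : ℝ} (hr : 0 < r) (hρ : 0 < ρ) (ha : |a| ≤ M)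
    (x x' : ℝ × ℝ) (a' : ℝ) (hK : ∀ c, |∫ u, cut q r (u, c + (x.2 + a * (u - x.1))) *
      psi ρ a' ((a - a') * u + (c + x.2 - a * x.1 - x'.2 + a' * x'.1))| ≤ K) :
    |corr q r ρ (x, a) (x', a')| ≤ 2 * (1 + M) * K := by
  have hM : 0 ≤ M := (abs_nonneg a).trans ha
  rw [corr_eq hr hρ ha, ← setIntegral_eq_integral_of_forall_compl_eq_zero
    (s := closedBall 0 (2 * (1 + M) * ρ)), ← Real.norm_eq_abs]
  · refine (norm_setIntegral_le_of_norm_le_const (C := 1 / (2 * ρ) * K) measure_closedBall_lt_top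
      (fun u _ => ?_)).trans (le_of_eq ?_)
    · rw [norm_mul]
      exact mul_le_mul (abs_psi_le hρ _ _) (hK _) (norm_nonneg _) (by positivity)
    · rw [Measure.real, Real.volume_closedBall, ENNReal.toReal_ofReal (by positivity)]
      field_simp
  · intro c hc
    rw [mem_closedBall, Real.dist_eq, sub_zero, not_le] at hc
    rw [psi_eq_zero hρ ha hc, zero_mul]

/-- The trivial bound for the correlation. -/
lemma abs_corr_le {q : ℝ × ℝ} {r ρ M a : ℝ} (hr : 0 < r) (hρ : 0 < ρ) (ha : |a| ≤ M)
    (x x' : ℝ × ℝ) (a' : ℝ) :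
    |corr q r ρ (x, a) (x', a')| ≤ 18 * (1 + M) * (r / ρ) := by
  have := abs_corr_le_of_inner (q := q) (r := r) (K := 9 * r / ρ) hr hρ ha x x' a' ?_
  · exact this.trans (le_of_eq (by ring))
  intro c
  rw [← setIntegral_eq_integral_of_forall_compl_eq_zero (s := closedBall q.1 (3 * r)),
    ← Real.norm_eq_abs]
  · refine (norm_setIntegral_le_of_norm_le_const (C := 3 * (1 / (2 * ρ)))
      measure_closedBall_lt_top (fun u _ => ?_)).trans (le_of_eq ?_)
    · exact abs_cut_mul_psi_le hρ hr _ _ _ _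
    · rw [Measure.real, Real.volume_closedBall, ENNReal.toReal_ofReal (by positivity)]
      field_simp; ring
  · intro u hu
    rw [mem_closedBall, Real.dist_eq, not_le] at hu
    rw [cut_eq_zero hr, zero_mul]
    rw [Prod.dist_eq, Real.dist_eq]
    exact lt_max_of_lt_left hu

/-- Transversal lines are almost uncorrelated, because of the vanishing mean. -/
lemma abs_corr_le_transversal {q : ℝ × ℝ} {r ρ M a a' : ℝ} (hr : 0 < r) (hρ : 0 < ρ)
    (hM : 1 ≤ M) (ha : |a| ≤ M) (ha' : |a'| ≤ M) (h : a ≠ a') (x x' : ℝ × ℝ) :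
    |corr q r ρ (x, a) (x', a')| ≤ 8 * (1 + M) ^ 3 * M * (ρ / r) / (a - a') ^ 2 := by
  have := abs_corr_le_of_inner (q := q) (r := r)
    (K := 2 * (M / r) * (1 / (2 * ρ)) * (2 * (1 + M) * ρ) ^ 2 / (a - a') ^ 2) hr hρ ha x x' a' ?_
  · refine this.trans (le_of_eq ?_)
    field_simp; ring
  intro c
  refine abs_integral_osc_le (f := fun u => cut q r (u, c + (x.2 + a * (u - x.1))))
    (g := psi ρ a') ?_ ?_ (by positivity) (by positivity) ?_ (abs_psi_le hρ a')
    (fun w hw => psi_eq_zero hρ ha' hw) (integral_psi hρ a') (sub_ne_zero.2 h)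
  · intro u v
    refine (abs_cut_sub_le hr q _ _).trans ?_
    have : dist (u, c + (x.2 + a * (u - x.1))) (v, c + (x.2 + a * (v - x.1))) ≤ M * |u - v| := by
      rw [Prod.dist_eq, Real.dist_eq, Real.dist_eq]
      refine max_le (by nlinarith [abs_nonneg (u - v)]) ?_
      have e : c + (x.2 + a * (u - x.1)) - (c + (x.2 + a * (v - x.1))) = a * (u - v) := by ring
      simp only [e, abs_mul]
      gcongr
    calc 1 / r * dist _ _ ≤ 1 / r * (M * |u - v|) := by gcongr
      _ = _ := by ring
  · exact (measurable_cut q r).comp (by fun_prop)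
  · exact measurable_psi_right ρ a'

/-- Lines that correlate near `q` nearly meet near `q`. -/
lemma exists_of_corr_ne_zero {q : ℝ × ℝ} {r ρ M a a' : ℝ} (hr : 0 < r) (hρ : 0 < ρ)
    (ha : |a| ≤ M) (ha' : |a'| ≤ M) (x x' : ℝ × ℝ) (h : corr q r ρ (x, a) (x', a') ≠ 0) :
    ∃ u, |u - q.1| ≤ 3 * r ∧
      |x'.2 - x.2 - a * (x'.1 - x.1) + (a' - a) * (u - x'.1)| ≤ 4 * (1 + M) * ρ := by
  have : ∃ y, cut q r y * psi ρ a (cdist (x, a) y) * psi ρ a' (cdist (x', a') y) ≠ 0 := by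
    by_contra hcon
    push Not at hcon
    exact h (by simp [corr, hcon])
  obtain ⟨y, hy⟩ := this
  have h1 : dist y q ≤ 3 * r := by
    by_contra hc; exact hy (by simp [cut_eq_zero hr (not_le.1 hc)])
  have h2 : |cdist (x, a) y| ≤ 2 * (1 + M) * ρ := by
    by_contra hc; exact hy (by simp [psi_eq_zero hρ ha (not_le.1 hc)])
  have h3 : |cdist (x', a') y| ≤ 2 * (1 + M) * ρ := by
    by_contra hc; exact hy (by simp [psi_eq_zero hρ ha' (not_le.1 hc)])
  refine ⟨y.1, ?_, ?_⟩
  · rw [Prod.dist_eq, max_le_iff, Real.dist_eq] at h1; exact h1.1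
  · have e : x'.2 - x.2 - a * (x'.1 - x.1) + (a' - a) * (y.1 - x'.1) =
        cdist (x, a) y - cdist (x', a') y := by simp only [cdist]; ring
    rw [e]
    exact (abs_sub _ _).trans (by linarith)

/-- A function on slopes that is bounded by `A` and lives on an interval of half-length `h`. -/
lemma lintegral_slope_le {J : ℝ → ℝ} {M A a₀ h : ℝ} (hA : 0 ≤ A)
    (hJ : ∀ a', |a'| ≤ M → J a' ≠ 0 → |J a'| ≤ A ∧ |a' - a₀| ≤ h) :
    ∫⁻ a' in Set.Icc (-M) M, ENNReal.ofReal |J a'| ≤ ENNReal.ofReal (A * (2 * h)) := by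
  calc ∫⁻ a' in Set.Icc (-M) M, ENNReal.ofReal |J a'|
      ≤ ∫⁻ a' in Set.Icc (-M) M, (closedBall a₀ h).indicator (fun _ => ENNReal.ofReal A) a' := by
        refine setLIntegral_mono' measurableSet_Icc fun a' ha' => ?_
        by_cases h0 : J a' = 0
        · simp [h0]
        · obtain ⟨h1, h2⟩ := hJ a' (abs_le.2 ha') h0
          rw [Set.indicator_of_mem (by rwa [mem_closedBall, Real.dist_eq])]
          exact ENNReal.ofReal_le_ofReal h1
    _ ≤ ∫⁻ a', (closedBall a₀ h).indicator (fun _ => ENNReal.ofReal A) a' :=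
        setLIntegral_le_lintegral _ _
    _ = _ := by
        rw [lintegral_indicator isClosed_closedBall.measurableSet, setLIntegral_const,
          Real.volume_closedBall, ← ENNReal.ofReal_mul hA]

/-- The correlation of a fixed line with the pencil of lines through `x'`, integrated over the
slope, gains a power of `ρ / r` at the cost of a power of the distance from `x'` to the line. -/
lemma lintegral_corr_le {M c₁ D s : ℝ} (hM : 1 ≤ M) (hc₁ : 0 < c₁) (hD : c₁ ≤ D)
    (hs0 : 0 < s) (hs1 : s < 1) :
    ∃ C : ℝ, 0 < C ∧ ∀ (q : ℝ × ℝ) (r ρ : ℝ) (x x' : ℝ × ℝ) (a : ℝ), 0 < ρ → ρ ≤ r → r ≤ 1 →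
      6 * r ≤ c₁ → c₁ ≤ |q.1 - x'.1| → |q.1 - x'.1| ≤ D → |a| ≤ M →
      ∫⁻ a' in Set.Icc (-M) M, ENNReal.ofReal |corr q r ρ (x, a) (x', a')| ≤
        ENNReal.ofReal (C * (r * (ρ / r) ^ s)) * ENNReal.ofReal |cdist (x, a) x'| ^ (-s) := by
  set R : ℝ := 4 * (1 + M) with hR
  have hR1 : 1 ≤ R := by linarith
  have hR0 : 0 < R := by linarith
  have hD0 : 0 < D := by linarith
  have hM0 : 0 < M := by linarith
  set B : ℝ := (1 + 6 / c₁) / c₁ with hB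
  have hB0 : 0 < B := by positivity
  set C₁ : ℝ := 18 * (1 + M) * (2 * (3 * R * B)) * (2 * R) with hC₁
  set C₂ : ℝ := 8 * (1 + M) ^ 3 * M * (16 * D ^ 2) * (2 * (2 * B)) with hC₂
  have hC₁0 : 0 < C₁ := by positivity
  have hC₂0 : 0 < C₂ := by positivity
  refine ⟨C₁ + C₂, by positivity, ?_⟩
  intro q r ρ x x' a hρ hρr hr1 hrc hq1 hq2 ha
  have hr : 0 < r := hρ.trans_le hρr
  set p : ℝ := ρ / r with hp
  have hp0 : 0 < p := by positivity
  have hp1 : p ≤ 1 := by rw [hp, div_le_one hr]; exact hρr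
  have hρp : ρ = p * r := by rw [hp]; field_simp
  have hρp' : ρ ≤ p := by rw [hρp]; nlinarith
  set E : ℝ := cdist (x, a) x' with hE
  have hE' : E = x'.2 - x.2 - a * (x'.1 - x.1) := rfl
  set d : ℝ := |E| with hd
  have hd0 : 0 ≤ d := abs_nonneg _
  rcases hd0.eq_or_lt with hdz | hdp
  · -- the line passes through `x'`, and the right-hand side is infinite
    rw [← hdz, ENNReal.ofReal_zero, ENNReal.zero_rpow_of_neg (by linarith), ENNReal.mul_top]
    · exact le_top
    · rw [Ne, ENNReal.ofReal_eq_zero, not_le]; positivity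
  have hqx : q.1 - x'.1 ≠ 0 := by
    intro h0; rw [h0, abs_zero] at hq1; linarith
  -- the two geometric consequences of a nonzero correlation
  have geo : ∀ a', |a'| ≤ M → corr q r ρ (x, a) (x', a') ≠ 0 →
      |a' - (a - E / (q.1 - x'.1))| ≤ r * (R * p + d) * B ∧ d - R * ρ ≤ |a' - a| * (2 * D) := by
    intro a' ha' h0
    obtain ⟨u, hu, hu2⟩ := exists_of_corr_ne_zero hr hρ ha ha' x x' h0
    rw [← hE', ← hR] at hu2
    have hux : |u - x'.1| ≤ 2 * D ∧ c₁ / 2 ≤ |u - x'.1| := by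
      have e : u - x'.1 = (u - q.1) + (q.1 - x'.1) := by ring
      have h1 := abs_add_le (u - q.1) (q.1 - x'.1)
      have h2 := abs_sub_abs_le_abs_sub (q.1 - x'.1) (-(u - q.1))
      rw [abs_neg, sub_neg_eq_add, add_comm (q.1 - x'.1), ← e] at h2
      rw [← e] at h1
      constructor <;> linarith
    have hprod : |(a' - a) * (u - x'.1)| ≤ R * ρ + d := by
      have := abs_sub (E + (a' - a) * (u - x'.1)) E
      rw [add_sub_cancel_left] at this
      linarith
    have hprod2 : d - R * ρ ≤ |(a' - a) * (u - x'.1)| := by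
      have := abs_sub (E + (a' - a) * (u - x'.1)) ((a' - a) * (u - x'.1))
      rw [add_sub_cancel_right] at this
      linarith
    rw [abs_mul] at hprod hprod2
    have hβ : |a' - a| ≤ 2 * (R * p + d) / c₁ := by
      rw [le_div_iff₀ hc₁]
      have : |a' - a| * (c₁ / 2) ≤ |a' - a| * |u - x'.1| := by gcongr; exact hux.2
      have : R * ρ ≤ R * p := by gcongr
      linarith
    refine ⟨?_, hprod2.trans (by gcongr; exact hux.1)⟩
    have e : a' - (a - E / (q.1 - x'.1)) =
        (E + (a' - a) * (u - x'.1) + (a' - a) * (q.1 - u)) / (q.1 - x'.1) := by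
      field_simp; ring
    rw [e, abs_div, div_le_iff₀ (abs_pos.2 hqx)]
    have h3 : |E + (a' - a) * (u - x'.1) + (a' - a) * (q.1 - u)| ≤
        R * ρ + 2 * (R * p + d) / c₁ * (3 * r) := by
      refine (abs_add_le _ _).trans (add_le_add hu2 ?_)
      rw [abs_mul, abs_sub_comm q.1 u]
      exact mul_le_mul hβ hu (abs_nonneg _) (by positivity)
    refine h3.trans ?_
    calc R * ρ + 2 * (R * p + d) / c₁ * (3 * r)
        ≤ r * (R * p + d) * (1 + 6 / c₁) := by
          rw [hρp]
          have e2 : r * (R * p + d) * (1 + 6 / c₁) =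
            R * (p * r) + 2 * (R * p + d) / c₁ * (3 * r) + r * d := by field_simp; ring
          rw [e2]
          have : 0 ≤ r * d := by positivity
          linarith
      _ = r * (R * p + d) * B * c₁ := by rw [hB]; field_simp
      _ ≤ _ := by gcongr
  rw [ENNReal.ofReal_rpow_of_pos hdp, ← ENNReal.ofReal_mul (by positivity)]
  have hpow : r * p ^ s * d ^ (-s) = r * (p / d) ^ s := by
    rw [Real.div_rpow hp0.le hd0, Real.rpow_neg hd0]; ring
  rcases le_or_gt d (2 * R * p) with hcase | hcase
  · refine (lintegral_slope_le (A := 18 * (1 + M) * (r / ρ)) (h := r * (3 * R * p) * B)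
      (a₀ := a - E / (q.1 - x'.1)) (by positivity)
      fun a' ha' h0 => ⟨abs_corr_le hr hρ ha x x' a', (geo a' ha' h0).1.trans ?_⟩).trans ?_
    · gcongr; linarith
    · apply ENNReal.ofReal_le_ofReal
      have h1 : 1 / (2 * R) ≤ (p / d) ^ s := by
        calc 1 / (2 * R) = (1 / (2 * R)) ^ (1 : ℝ) := (Real.rpow_one _).symm
          _ ≤ (1 / (2 * R)) ^ s := by
            apply Real.rpow_le_rpow_of_exponent_ge (by positivity) _ hs1.le
            rw [div_le_one (by positivity)]; linarith
          _ ≤ (p / d) ^ s := by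
            apply Real.rpow_le_rpow (by positivity) _ hs0.le
            rw [div_le_div_iff₀ (by positivity) hdp]; linarith
      calc 18 * (1 + M) * (r / ρ) * (2 * (r * (3 * R * p) * B))
          = C₁ * (r * (1 / (2 * R))) := by rw [hC₁, hρp]; field_simp
        _ ≤ C₁ * (r * (p / d) ^ s) := by gcongr
        _ ≤ (C₁ + C₂) * (r * (p / d) ^ s) := by gcongr; linarith
        _ = _ := by rw [← hpow]; ring
  · refine (lintegral_slope_le (A := 8 * (1 + M) ^ 3 * M * p * (16 * D ^ 2 / d ^ 2))
      (h := r * (2 * d) * B)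
      (a₀ := a - E / (q.1 - x'.1)) (by positivity)
      fun a' ha' h0 => ⟨?_, (geo a' ha' h0).1.trans ?_⟩).trans ?_
    · have h1 := (geo a' ha' h0).2
      have h2 : R * ρ ≤ R * p := by gcongr
      have h3 : d / (4 * D) ≤ |a' - a| := by
        rw [div_le_iff₀ (by positivity)]; nlinarith
      have h4 : 0 < |a' - a| := lt_of_lt_of_le (by positivity) h3
      have h5 : a ≠ a' := by rintro rfl; simp at h4
      refine (abs_corr_le_transversal hr hρ hM ha ha' h5 x x').trans ?_
      rw [div_eq_mul_inv, ← hp]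
      gcongr
      rw [← sq_abs, abs_sub_comm]
      have h6 : (d / (4 * D)) ^ 2 ≤ |a' - a| ^ 2 := by gcongr
      calc (|a' - a| ^ 2)⁻¹ ≤ ((d / (4 * D)) ^ 2)⁻¹ := by gcongr
        _ = _ := by field_simp; norm_num
    · gcongr; nlinarith
    · apply ENNReal.ofReal_le_ofReal
      have h1 : p / d ≤ (p / d) ^ s := by
        calc p / d = (p / d) ^ (1 : ℝ) := (Real.rpow_one _).symm
          _ ≤ _ := by
            apply Real.rpow_le_rpow_of_exponent_ge (by positivity) _ hs1.le
            rw [div_le_one hdp]; nlinarith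
      calc 8 * (1 + M) ^ 3 * M * p * (16 * D ^ 2 / d ^ 2) * (2 * (r * (2 * d) * B))
          = C₂ * (r * (p / d)) := by rw [hC₂]; field_simp
        _ ≤ C₂ * (r * (p / d) ^ s) := by gcongr
        _ ≤ (C₁ + C₂) * (r * (p / d) ^ s) := by gcongr; linarith
        _ = _ := by rw [← hpow]; ring

/-! ### The square function of a family of lines -/

/-- The difference of the averages, at the scales `ρ` and `2ρ`, of a superposition of lines. -/
def diffL (L : Measure ((ℝ × ℝ) × ℝ)) (ρ : ℝ) (y : ℝ × ℝ) : ℝ := ∫ l, psi ρ l.2 (cdist l y) ∂L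

lemma avL_ne_top (L : Measure ((ℝ × ℝ) × ℝ)) [IsFiniteMeasure L] {ρ : ℝ} (hρ : 0 < ρ)
    (y : ℝ × ℝ) : avL L ρ y ≠ ⊤ :=
  ne_top_of_le_ne_top (ENNReal.mul_ne_top ENNReal.ofReal_ne_top (measure_ne_top _ _)) (avL_le L hρ y)

lemma measurable_mE_left (ρ : ℝ) (y : ℝ × ℝ) :
    Measurable fun l : (ℝ × ℝ) × ℝ => mE ρ l.2 (cdist l y) :=
  (measurable_mE_cdist ρ).comp (measurable_id.prodMk measurable_const)

lemma measurable_psi_left (ρ : ℝ) (y : ℝ × ℝ) :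
    Measurable fun l : (ℝ × ℝ) × ℝ => psi ρ l.2 (cdist l y) := by
  have h1 := measurable_mE_left ρ y
  have h2 := measurable_mE_left (2 * ρ) y
  exact h1.ennreal_toReal.sub h2.ennreal_toReal

lemma diffL_eq (L : Measure ((ℝ × ℝ) × ℝ)) [IsFiniteMeasure L] {ρ : ℝ} (hρ : 0 < ρ)
    (y : ℝ × ℝ) : diffL L ρ y = (avL L ρ y).toReal - (avL L (2 * ρ) y).toReal := by
  have hInt : ∀ ρ, 0 < ρ → Integrable (fun l => (mE ρ l.2 (cdist l y)).toReal) L := fun ρ hρ =>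
    integrable_toReal_of_lintegral_ne_top (measurable_mE_left ρ y).aemeasurable
      (avL_ne_top L hρ y)
  have hval : ∀ ρ, 0 < ρ → ∫ l, (mE ρ l.2 (cdist l y)).toReal ∂L = (avL L ρ y).toReal :=
    fun ρ hρ => integral_toReal (measurable_mE_left ρ y).aemeasurable
      (Filter.Eventually.of_forall fun c => lt_top_iff_ne_top.2 (mE_ne_top hρ _ _))
  simp only [diffL, psi]
  rw [integral_sub (hInt ρ hρ) (hInt _ (by positivity)), hval ρ hρ, hval _ (by positivity)]

/-- The localised `L²` norm of the high-frequency part is controlled by the correlations. -/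
lemma lintegral_diffL_sq_le (L : Measure ((ℝ × ℝ) × ℝ)) [IsFiniteMeasure L] {r ρ : ℝ}
    (hr : 0 < r) (hρ : 0 < ρ) (q : ℝ × ℝ) :
    ∫⁻ y, ENNReal.ofReal (cut q r y * diffL L ρ y ^ 2) ≤
      ∫⁻ l, (∫⁻ l', ENNReal.ofReal |corr q r ρ l l'| ∂L) ∂L := by
  set Ψ : ((ℝ × ℝ) × ((ℝ × ℝ) × ℝ) × ((ℝ × ℝ) × ℝ)) → ℝ := fun z =>
    cut q r z.1 * psi ρ z.2.1.2 (cdist z.2.1 z.1) * psi ρ z.2.2.2 (cdist z.2.2 z.1) with hΨ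
  have hm0 := measurable_psi_cdist ρ
  have hm1 : Measurable fun z : (ℝ × ℝ) × ((ℝ × ℝ) × ℝ) × ((ℝ × ℝ) × ℝ) =>
      psi ρ z.2.1.2 (cdist z.2.1 z.1) :=
    hm0.comp (f := fun z : (ℝ × ℝ) × ((ℝ × ℝ) × ℝ) × ((ℝ × ℝ) × ℝ) => (z.2.1, z.1)) (by fun_prop)
  have hm2 : Measurable fun z : (ℝ × ℝ) × ((ℝ × ℝ) × ℝ) × ((ℝ × ℝ) × ℝ) =>
      psi ρ z.2.2.2 (cdist z.2.2 z.1) :=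
    hm0.comp (f := fun z : (ℝ × ℝ) × ((ℝ × ℝ) × ℝ) × ((ℝ × ℝ) × ℝ) => (z.2.2, z.1)) (by fun_prop)
  have hΨm : Measurable Ψ := (((measurable_cut q r).comp measurable_fst).mul hm1).mul hm2
  have hΨb : ∀ z, |Ψ z| ≤ 3 * (1 / (2 * ρ)) * (1 / (2 * ρ)) := by
    intro z
    rw [hΨ, abs_mul]
    exact mul_le_mul (abs_cut_mul_psi_le hρ hr _ _ _ _) (abs_psi_le hρ _ _) (abs_nonneg _)
      (by positivity)
  have hΨi : Integrable Ψ (volume.prod (L.prod L)) := by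
    refine integrable_of_bdd (s := closedBall q (3 * r) ×ˢ Set.univ) hΨm hΨb ?_ ?_
    · intro z hz
      have : 3 * r < dist z.1 q := by
        by_contra h; exact hz ⟨not_lt.1 h, trivial⟩
      simp only [hΨ, cut_eq_zero hr this, zero_mul]
    · rw [Measure.prod_prod]
      exact ENNReal.mul_ne_top measure_closedBall_lt_top.ne (measure_ne_top _ _)
  have hsq : ∀ y, cut q r y * diffL L ρ y ^ 2 = ∫ w, Ψ (y, w) ∂(L.prod L) := by
    intro y
    simp only [hΨ, mul_assoc]
    rw [integral_const_mul, integral_prod_mul (fun l => psi ρ l.2 (cdist l y))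
      (fun l => psi ρ l.2 (cdist l y)), sq]; rfl
  have hi : Integrable (fun y => cut q r y * diffL L ρ y ^ 2) := by
    simp_rw [hsq]; exact hΨi.integral_prod_left
  have hcm : Measurable fun w : ((ℝ × ℝ) × ℝ) × ((ℝ × ℝ) × ℝ) => corr q r ρ w.1 w.2 :=
    (StronglyMeasurable.integral_prod_left' (μ := volume) (f := Ψ)
      hΨm.stronglyMeasurable).measurable
  rw [← ofReal_integral_eq_lintegral_ofReal hi (Filter.Eventually.of_forall fun y =>
    mul_nonneg (cut_nonneg _ _ _) (sq_nonneg _))]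
  simp_rw [hsq]
  rw [integral_integral_swap (f := fun y w => Ψ (y, w)) hΨi]
  calc ENNReal.ofReal (∫ w, (∫ y, Ψ (y, w)) ∂(L.prod L))
      ≤ ‖∫ w, (∫ y, Ψ (y, w)) ∂(L.prod L)‖ₑ := by
        rw [← ofReal_norm]; exact ENNReal.ofReal_le_ofReal (le_abs_self _)
    _ ≤ ∫⁻ w, ‖∫ y, Ψ (y, w)‖ₑ ∂(L.prod L) := enorm_integral_le_lintegral_enorm _
    _ = ∫⁻ w, ENNReal.ofReal |corr q r ρ w.1 w.2| ∂(L.prod L) := by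
        refine lintegral_congr fun w => ?_
        rw [← ofReal_norm]; rfl
    _ = _ := lintegral_prod _ (by fun_prop)

/-- The number of incidences changes little between consecutive scales. -/
lemma inc_step (μ : Measure (ℝ × ℝ)) (L : Measure ((ℝ × ℝ) × ℝ)) [IsFiniteMeasure μ]
    [IsFiniteMeasure L] {r ρ η b : ℝ} (hρ : 0 < ρ) (hρr : 2 * ρ ≤ r) (hη : 0 < η) (hb : 0 ≤ b)
    (q : ℝ × ℝ) (hμ : μ (closedBall q r)ᶜ = 0)
    (hb1 : ∀ y, μ (closedBall y ρ) ≤ ENNReal.ofReal b)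
    (hb2 : ∀ y, μ (closedBall y (2 * ρ)) ≤ ENNReal.ofReal (4 * b)) :
    inc μ L ρ ρ ≤ inc μ L (2 * ρ) (2 * ρ) +
      (ENNReal.ofReal (η * (b / ρ ^ 2)) * μ Set.univ +
      ENNReal.ofReal η⁻¹ * ∫⁻ l, (∫⁻ l', ENNReal.ofReal |corr q r ρ l l'| ∂L) ∂L) := by
  have hr : 0 < r := by linarith
  have h2ρ : 0 < 2 * ρ := by linarith
  have hsupp : ∀ y ρ', ρ' ≤ r → 2 * r < dist y q → avP μ ρ' y = 0 := by
    intro y ρ' h1 h2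
    have : closedBall y ρ' ⊆ (closedBall q r)ᶜ := by
      intro z hz hz'
      rw [mem_closedBall] at hz hz'
      have := dist_triangle_left y q z
      linarith
    rw [avP, measure_mono_null this hμ, mul_zero]
  have htop : ∀ ρ' y, avP μ ρ' y ≠ ⊤ := fun ρ' y =>
    ENNReal.mul_ne_top ENNReal.ofReal_ne_top (measure_ne_top _ _)
  have pt : ∀ y, avP μ ρ y * avL L ρ y + avP μ (2 * ρ) y * avL L ρ y ≤
      avP μ ρ y * avL L (2 * ρ) y + avP μ (2 * ρ) y * avL L (2 * ρ) y +
      (ENNReal.ofReal η * (avP μ ρ y ^ 2 + avP μ (2 * ρ) y ^ 2) +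
      ENNReal.ofReal η⁻¹ * ENNReal.ofReal (cut q r y * diffL L ρ y ^ 2)) := by
    intro y
    by_cases hy : 2 * r < dist y q
    · rw [hsupp y ρ (by linarith) hy, hsupp y (2 * ρ) hρr hy]; simp
    have hcut := one_le_cut hr (not_lt.1 hy)
    rw [diffL_eq L hρ]
    have e1 := ENNReal.ofReal_toReal (htop ρ y)
    have e2 := ENNReal.ofReal_toReal (htop (2 * ρ) y)
    have e3 := ENNReal.ofReal_toReal (avL_ne_top L hρ y)
    have e4 := ENNReal.ofReal_toReal (avL_ne_top L h2ρ y)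
    have p1 : 0 ≤ (avP μ ρ y).toReal := ENNReal.toReal_nonneg
    have p2 : 0 ≤ (avP μ (2 * ρ) y).toReal := ENNReal.toReal_nonneg
    have p3 : 0 ≤ (avL L ρ y).toReal := ENNReal.toReal_nonneg
    have p4 : 0 ≤ (avL L (2 * ρ) y).toReal := ENNReal.toReal_nonneg
    generalize (avP μ ρ y).toReal = x₁ at *
    generalize (avP μ (2 * ρ) y).toReal = x₂ at *
    generalize (avL L ρ y).toReal = F at *
    generalize (avL L (2 * ρ) y).toReal = F' at *
    rw [← e1, ← e2, ← e3, ← e4]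
    generalize cut q r y = χ at *
    have hχ : 0 ≤ χ := by linarith
    rw [← ENNReal.ofReal_mul p1, ← ENNReal.ofReal_mul p1, ← ENNReal.ofReal_mul p2,
      ← ENNReal.ofReal_mul p2, ← ENNReal.ofReal_pow p1, ← ENNReal.ofReal_pow p2,
      ← ENNReal.ofReal_add (by positivity) (by positivity),
      ← ENNReal.ofReal_add (by positivity) (by positivity),
      ← ENNReal.ofReal_add (by positivity) (by positivity),
      ← ENNReal.ofReal_mul hη.le, ← ENNReal.ofReal_mul (by positivity),
      ← ENNReal.ofReal_add (by positivity) (by positivity),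
      ← ENNReal.ofReal_add (by positivity) (by positivity)]
    apply ENNReal.ofReal_le_ofReal
    have h1 : η⁻¹ * (1 * (F - F') ^ 2) ≤ η⁻¹ * (χ * (F - F') ^ 2) := by gcongr
    -- the inequality between the arithmetic and geometric means, weighted by `η`
    have h2 : (x₁ + x₂) * (F - F') ≤ η * (x₁ + x₂) ^ 2 / 2 + η⁻¹ * (F - F') ^ 2 / 2 := by
      have : 0 ≤ η⁻¹ * (η * (x₁ + x₂) - (F - F')) ^ 2 := by positivity
      have e : η⁻¹ * (η * (x₁ + x₂) - (F - F')) ^ 2 = η * (x₁ + x₂) ^ 2 +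
        η⁻¹ * (F - F') ^ 2 - 2 * ((x₁ + x₂) * (F - F')) := by field_simp; ring
      linarith
    have h3 : η * (x₁ + x₂) ^ 2 / 2 ≤ η * (x₁ ^ 2 + x₂ ^ 2) := by
      have : 0 ≤ η * (x₁ - x₂) ^ 2 := by positivity
      nlinarith
    have h4 : 0 ≤ η⁻¹ * (F - F') ^ 2 := by positivity
    nlinarith
  have hP := measurable_avP μ ρ
  have hP2 := measurable_avP μ (2 * ρ)
  have hL := measurable_avL L ρ
  have hL2 := measurable_avL L (2 * ρ)
  have hInt := lintegral_mono (μ := volume) pt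
  rw [lintegral_add_left (by fun_prop), lintegral_add_left (by fun_prop),
    lintegral_add_left (by fun_prop), lintegral_add_left (by fun_prop),
    lintegral_const_mul _ (by fun_prop), lintegral_const_mul' _ _ ENNReal.ofReal_ne_top,
    lintegral_add_left (by fun_prop)] at hInt
  change inc μ L ρ ρ + inc μ L (2 * ρ) ρ ≤ inc μ L ρ (2 * ρ) + inc μ L (2 * ρ) (2 * ρ) + _ at hInt
  have hfin : inc μ L ρ (2 * ρ) ≠ ⊤ := ne_top_of_le_ne_top
    (ENNReal.mul_ne_top (ENNReal.mul_ne_top ENNReal.ofReal_ne_top (measure_ne_top _ _))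
      (measure_ne_top _ _)) (inc_le μ L hρ h2ρ)
  rw [inc_comm μ L (2 * ρ) ρ, add_comm (inc μ L ρ ρ), add_assoc] at hInt
  refine ((ENNReal.add_le_add_iff_left hfin).1 hInt).trans ?_
  refine add_le_add le_rfl (add_le_add ?_ ?_)
  · calc ENNReal.ofReal η * ((∫⁻ y, avP μ ρ y ^ 2) + ∫⁻ y, avP μ (2 * ρ) y ^ 2)
        ≤ ENNReal.ofReal η * (ENNReal.ofReal (b / (4 * ρ ^ 2)) * μ Set.univ +
          ENNReal.ofReal (4 * b / (4 * (2 * ρ) ^ 2)) * μ Set.univ) := by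
          gcongr
          · exact lintegral_avP_sq μ hρ hb1
          · exact lintegral_avP_sq μ h2ρ hb2
      _ = ENNReal.ofReal (η * (b / (4 * ρ ^ 2) + 4 * b / (4 * (2 * ρ) ^ 2))) * μ Set.univ := by
          rw [← add_mul, ← ENNReal.ofReal_add (by positivity) (by positivity), ← mul_assoc,
            ← ENNReal.ofReal_mul hη.le]
      _ ≤ _ := by
          gcongr
          have : b / ρ ^ 2 = b / (4 * ρ ^ 2) + 4 * b / (4 * (2 * ρ) ^ 2) + b / (2 * ρ ^ 2) := by
            field_simp; ring
          have h5 : 0 ≤ b / (2 * ρ ^ 2) := by positivity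
          linarith
  · gcongr
    exact lintegral_diffL_sq_le L hr hρ q

/-! ### Incidences between points in a small ball and a family of lines -/

/-- The energy of `ν` seen from a line: the potential of `ν` at the line, with exponent `s`. -/
def enW (ν : Measure (ℝ × ℝ)) (s : ℝ) (l : (ℝ × ℝ) × ℝ) : ℝ≥0∞ :=
  ∫⁻ x', ENNReal.ofReal |cdist l x'| ^ (-s) ∂ν

/-- The measure on lines given by a measure `ν` on base points and Lebesgue measure on slopes. -/
def lam (ν : Measure (ℝ × ℝ)) (M : ℝ) : Measure ((ℝ × ℝ) × ℝ) :=
  ν.prod (volume.restrict (Set.Icc (-M) M))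

/-- The measure on lines weighted by the energy. -/
def Lam (ν : Measure (ℝ × ℝ)) (M s : ℝ) : Measure ((ℝ × ℝ) × ℝ) :=
  (lam ν M).withDensity fun l => 1 + enW ν s l

instance (ν : Measure (ℝ × ℝ)) [IsFiniteMeasure ν] (M : ℝ) : IsFiniteMeasure (lam ν M) := by
  unfold lam; infer_instance

lemma measurable_enW (ν : Measure (ℝ × ℝ)) [IsFiniteMeasure ν] (s : ℝ) : Measurable (enW ν s) := by
  refine Measurable.lintegral_prod_right' (f := fun z : ((ℝ × ℝ) × ℝ) × (ℝ × ℝ) =>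
    ENNReal.ofReal |cdist z.1 z.2| ^ (-s)) ?_
  exact (measurable_cdist.abs.ennreal_ofReal).pow_const _

lemma lam_le_Lam (ν : Measure (ℝ × ℝ)) (M s : ℝ) {G : Set ((ℝ × ℝ) × ℝ)} (hG : MeasurableSet G) :
    lam ν M G ≤ Lam ν M s G := by
  rw [Lam, withDensity_apply _ hG, ← setLIntegral_one]
  exact lintegral_mono fun l => le_self_add

lemma setLIntegral_enW_le (ν : Measure (ℝ × ℝ)) (M s : ℝ) {G : Set ((ℝ × ℝ) × ℝ)}
    (hG : MeasurableSet G) : ∫⁻ l in G, enW ν s l ∂(lam ν M) ≤ Lam ν M s G := by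
  rw [Lam, withDensity_apply _ hG]
  exact lintegral_mono fun l => le_add_self

lemma ae_lam (ν : Measure (ℝ × ℝ)) [IsFiniteMeasure ν] (M : ℝ) :
    ∀ᵐ l ∂(lam ν M), |l.2| ≤ M := by
  have : ∀ᵐ a ∂(volume.restrict (Set.Icc (-M) M)), |a| ≤ M := by
    filter_upwards [ae_restrict_mem measurableSet_Icc] with a ha
    exact abs_le.2 ha
  exact Measure.quasiMeasurePreserving_snd.ae this

/-- The total correlation of a family of lines is controlled by its weighted measure. -/
lemma lintegral_corr_lam_le {ν : Measure (ℝ × ℝ)} [IsFiniteMeasure ν] {M s K r ρ : ℝ}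
    {q : ℝ × ℝ} {G : Set ((ℝ × ℝ) × ℝ)} (hG : MeasurableSet G)
    (h : ∀ᵐ x' ∂ν, ∀ (x : ℝ × ℝ) (a : ℝ), |a| ≤ M →
      ∫⁻ a' in Set.Icc (-M) M, ENNReal.ofReal |corr q r ρ (x, a) (x', a')| ≤
        ENNReal.ofReal K * ENNReal.ofReal |cdist (x, a) x'| ^ (-s)) :
    ∫⁻ l, (∫⁻ l', ENNReal.ofReal |corr q r ρ l l'| ∂((lam ν M).restrict G))
      ∂((lam ν M).restrict G) ≤ ENNReal.ofReal K * Lam ν M s G := by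
  calc ∫⁻ l, (∫⁻ l', ENNReal.ofReal |corr q r ρ l l'| ∂((lam ν M).restrict G))
        ∂((lam ν M).restrict G)
      ≤ ∫⁻ l in G, ENNReal.ofReal K * enW ν s l ∂(lam ν M) := by
        refine lintegral_mono_ae ?_
        filter_upwards [ae_restrict_of_ae (ae_lam ν M)] with l hl
        calc ∫⁻ l', ENNReal.ofReal |corr q r ρ l l'| ∂((lam ν M).restrict G)
            ≤ ∫⁻ l', ENNReal.ofReal |corr q r ρ l l'| ∂(lam ν M) := setLIntegral_le_lintegral _ _
          _ ≤ ∫⁻ x', (∫⁻ a' in Set.Icc (-M) M, ENNReal.ofReal |corr q r ρ l (x', a')|) ∂ν :=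
              lintegral_prod_le _
          _ ≤ ∫⁻ x', ENNReal.ofReal K * ENNReal.ofReal |cdist l x'| ^ (-s) ∂ν := by
              refine lintegral_mono_ae ?_
              filter_upwards [h] with x' hx'
              exact hx' l.1 l.2 hl
          _ = _ := lintegral_const_mul' _ _ ENNReal.ofReal_ne_top
    _ = ENNReal.ofReal K * ∫⁻ l in G, enW ν s l ∂(lam ν M) :=
        lintegral_const_mul' _ _ ENNReal.ofReal_ne_top
    _ ≤ _ := by gcongr; exact setLIntegral_enW_le ν M s hG

/-- The high-low method: the blurred number of incidences between the points in a ball of radius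
`r` and a family of lines is bounded uniformly in the scale of the blurring. -/
lemma inc_le_ball {M c₁ D s t C₀ : ℝ} (hM : 1 ≤ M) (hc₁ : 0 < c₁) (hD : c₁ ≤ D) (hs0 : 0 < s)
    (hs1 : s < 1) (ht2 : t ≤ 2) (hst : 2 < t + s) (hC₀ : 0 < C₀) :
    ∃ C : ℝ, 0 < C ∧ ∀ (μ ν : Measure (ℝ × ℝ)) [IsFiniteMeasure μ] [IsFiniteMeasure ν]
      (q : ℝ × ℝ) (r η : ℝ) (G : Set ((ℝ × ℝ) × ℝ)),
      (∀ y ρ, 0 < ρ → μ (closedBall y ρ) ≤ ENNReal.ofReal (C₀ * ρ ^ t)) →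
      (∀ᵐ x' ∂ν, c₁ ≤ |q.1 - x'.1| ∧ |q.1 - x'.1| ≤ D) → 0 < r → r ≤ 1 → 6 * r ≤ c₁ →
      0 < η → η ≤ 1 → MeasurableSet G → ∀ k : ℕ,
      inc (μ.restrict (closedBall q r)) ((lam ν M).restrict G) (r / 2 ^ k) (r / 2 ^ k) ≤
        ENNReal.ofReal C * (ENNReal.ofReal η * μ (closedBall q r) +
          ENNReal.ofReal η⁻¹ * ENNReal.ofReal (r ^ (t - 1)) * Lam ν M s G) := by
  obtain ⟨C₁, hC₁, hcorr⟩ := lintegral_corr_le hM hc₁ hD hs0 hs1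
  set κ : ℝ := t + s - 2 with hκ
  have hκ0 : 0 < κ := by linarith
  set θ : ℝ := (1 / 2) ^ (κ / 2) with hθ
  have hθ0 : 0 < θ := by positivity
  have hθ1 : θ < 1 := Real.rpow_lt_one (by norm_num) (by norm_num) (by positivity)
  refine ⟨(C₀ + C₁) * (1 - θ)⁻¹, by have : 0 < 1 - θ := by linarith
                                    positivity, ?_⟩
  intro μ ν _ _ q r η G hμ hν hr hr1 hrc hη hη1 hG
  set X : ℝ≥0∞ := ENNReal.ofReal η * μ (closedBall q r) +
    ENNReal.ofReal η⁻¹ * ENNReal.ofReal (r ^ (t - 1)) * Lam ν M s G with hX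
  set S : ℕ → ℝ≥0∞ := fun k =>
    inc (μ.restrict (closedBall q r)) ((lam ν M).restrict G) (r / 2 ^ k) (r / 2 ^ k) with hS
  have hη' : 1 ≤ η⁻¹ := (one_le_inv₀ hη).2 hη1
  have base : S 0 ≤ ENNReal.ofReal (C₀ + C₁) * X := by
    simp only [hS, pow_zero, div_one]
    refine (inc_le _ _ hr hr).trans ?_
    rw [Measure.restrict_apply_univ, Measure.restrict_apply_univ]
    calc ENNReal.ofReal (1 / (2 * r)) * lam ν M G * μ (closedBall q r)
        ≤ ENNReal.ofReal (1 / (2 * r)) * Lam ν M s G * ENNReal.ofReal (C₀ * r ^ t) := by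
          exact mul_le_mul' (mul_le_mul' le_rfl (lam_le_Lam ν M s hG)) (hμ q r hr)
      _ = ENNReal.ofReal (1 / (2 * r) * (C₀ * r ^ t)) * Lam ν M s G := by
          rw [ENNReal.ofReal_mul (p := 1 / (2 * r)) (by positivity)]; ring
      _ ≤ ENNReal.ofReal ((C₀ + C₁) * (η⁻¹ * r ^ (t - 1))) * Lam ν M s G := by
          refine mul_le_mul' (ENNReal.ofReal_le_ofReal ?_) le_rfl
          rw [Real.rpow_sub_one hr.ne']
          have e : 1 / (2 * r) * (C₀ * r ^ t) = (C₀ / 2) * (1 * (r ^ t / r)) := by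
            field_simp
          rw [e]
          gcongr
          linarith
      _ = ENNReal.ofReal (C₀ + C₁) *
          (ENNReal.ofReal η⁻¹ * ENNReal.ofReal (r ^ (t - 1)) * Lam ν M s G) := by
          rw [ENNReal.ofReal_mul (by positivity), ENNReal.ofReal_mul (by positivity)]; ring
      _ ≤ _ := by rw [hX]; gcongr; exact le_add_self
  have step : ∀ k, S (k + 1) ≤ S k + ENNReal.ofReal ((C₀ + C₁) * θ ^ (k + 1)) * X := by
    intro k
    set ρ : ℝ := r / 2 ^ (k + 1) with hρ
    have hρ0 : 0 < ρ := by positivity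
    have e2 : r / 2 ^ k = 2 * ρ := by rw [hρ, pow_succ]; field_simp
    have hρr : 2 * ρ ≤ r := by
      rw [← e2]; exact div_le_self hr.le (one_le_pow₀ (by norm_num))
    have hratio : (ρ / r) ^ (κ / 2) = θ ^ (k + 1) := by
      have : ρ / r = (1 / 2) ^ (k + 1) := by rw [hρ, one_div, inv_pow]; field_simp
      rw [this, hθ, ← Real.rpow_natCast, ← Real.rpow_natCast, ← Real.rpow_mul (by norm_num),
        ← Real.rpow_mul (by norm_num), mul_comm]
    -- this weight balances the two error terms
    set η' : ℝ := η * ρ ^ (2 - t) * (ρ / r) ^ (κ / 2) with hη'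
    have hη'0 : 0 < η' := by positivity
    have hb2 : ∀ y, μ.restrict (closedBall q r) (closedBall y (2 * ρ)) ≤
        ENNReal.ofReal (4 * (C₀ * ρ ^ t)) := by
      intro y
      refine ((Measure.restrict_apply_le _ _).trans (hμ y _ (by positivity))).trans ?_
      apply ENNReal.ofReal_le_ofReal
      have : (2 : ℝ) ^ t ≤ 4 := by
        calc (2 : ℝ) ^ t ≤ 2 ^ (2 : ℝ) := Real.rpow_le_rpow_of_exponent_le (by norm_num) ht2
          _ = 4 := by norm_num
      rw [Real.mul_rpow (by norm_num) hρ0.le]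
      have h0 : 0 ≤ C₀ * ρ ^ t := by positivity
      nlinarith
    have hcor := lintegral_corr_lam_le (ν := ν) (M := M) (s := s) (K := C₁ * (r * (ρ / r) ^ s))
      (r := r) (ρ := ρ) (q := q) hG (by
        filter_upwards [hν] with x' hx' x a ha
        exact hcorr q r ρ x x' a hρ0 (by linarith) hr1 hrc hx'.1 hx'.2 ha)
    have hst := inc_step (μ.restrict (closedBall q r)) ((lam ν M).restrict G) (b := C₀ * ρ ^ t)
      hρ0 hρr hη'0 (by positivity) q
      (by rw [Measure.restrict_apply isClosed_closedBall.measurableSet.compl]; simp)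
      (fun y => (Measure.restrict_apply_le _ _).trans (hμ y ρ hρ0)) hb2
    simp only [hS]
    rw [e2]
    refine hst.trans ?_
    gcongr
    rw [Measure.restrict_apply_univ]
    have i1 : η' * (C₀ * ρ ^ t / ρ ^ 2) = C₀ * θ ^ (k + 1) * η := by
      have : ρ ^ (2 - t) * ρ ^ t = ρ ^ 2 := by
        rw [← Real.rpow_add hρ0]; norm_num
      rw [hη', hratio]
      calc η * ρ ^ (2 - t) * θ ^ (k + 1) * (C₀ * ρ ^ t / ρ ^ 2)
          = C₀ * θ ^ (k + 1) * η * ((ρ ^ (2 - t) * ρ ^ t) / ρ ^ 2) := by ring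
        _ = _ := by rw [this]; field_simp
    have i2 : η'⁻¹ * (C₁ * (r * (ρ / r) ^ s)) = C₁ * θ ^ (k + 1) * (η⁻¹ * r ^ (t - 1)) := by
      have hz : 0 < ρ / r := by positivity
      have e3 : ρ = (ρ / r) * r := by field_simp
      have e4 : ρ ^ (2 - t) = (ρ / r) ^ (2 - t) * r ^ (2 - t) := by
        conv_lhs => rw [e3]
        exact Real.mul_rpow hz.le hr.le
      have e5 : (ρ / r) ^ s = (ρ / r) ^ (2 - t) * (ρ / r) ^ (κ / 2) * (ρ / r) ^ (κ / 2) := by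
        rw [← Real.rpow_add hz, ← Real.rpow_add hz]; congr 1; rw [hκ]; ring
      have e6 : r = r ^ (2 - t) * r ^ (t - 1) := by
        rw [← Real.rpow_add hr]; ring_nf; exact (Real.rpow_one r).symm
      rw [hη', e4, e5, ← hratio]
      generalize (ρ / r) ^ (κ / 2) = u at *
      have hA : (ρ / r) ^ (2 - t) ≠ 0 := by positivity
      have hB : r ^ (2 - t) ≠ 0 := by positivity
      have hu : u ≠ 0 := by rw [hratio]; positivity
      generalize (ρ / r) ^ (2 - t) = A at *
      generalize r ^ (2 - t) = B at *
      generalize r ^ (t - 1) = B' at *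
      rw [e6]
      field_simp
    calc ENNReal.ofReal (η' * (C₀ * ρ ^ t / ρ ^ 2)) * μ (closedBall q r) + ENNReal.ofReal η'⁻¹ *
          ∫⁻ l, (∫⁻ l', ENNReal.ofReal |corr q r ρ l l'| ∂((lam ν M).restrict G))
            ∂((lam ν M).restrict G)
        ≤ ENNReal.ofReal (C₀ * θ ^ (k + 1) * η) * μ (closedBall q r) + ENNReal.ofReal η'⁻¹ *
          (ENNReal.ofReal (C₁ * (r * (ρ / r) ^ s)) * Lam ν M s G) := by
          rw [i1]; gcongr
      _ = ENNReal.ofReal (C₀ * θ ^ (k + 1)) * (ENNReal.ofReal η * μ (closedBall q r)) +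
          ENNReal.ofReal (C₁ * θ ^ (k + 1)) *
          (ENNReal.ofReal η⁻¹ * ENNReal.ofReal (r ^ (t - 1)) * Lam ν M s G) := by
          rw [← mul_assoc (ENNReal.ofReal η'⁻¹), ← ENNReal.ofReal_mul (by positivity), i2,
            ENNReal.ofReal_mul (p := C₀ * θ ^ (k + 1)) (by positivity),
            ENNReal.ofReal_mul (p := C₁ * θ ^ (k + 1)) (by positivity),
            ENNReal.ofReal_mul (p := η⁻¹) (by positivity)]
          ring
      _ ≤ ENNReal.ofReal ((C₀ + C₁) * θ ^ (k + 1)) * (ENNReal.ofReal η * μ (closedBall q r)) +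
          ENNReal.ofReal ((C₀ + C₁) * θ ^ (k + 1)) *
          (ENNReal.ofReal η⁻¹ * ENNReal.ofReal (r ^ (t - 1)) * Lam ν M s G) := by
          gcongr <;> linarith
      _ = _ := by rw [← mul_add]
  have sum : ∀ k, S k ≤ ENNReal.ofReal ((C₀ + C₁) * ∑ i ∈ Finset.range (k + 1), θ ^ i) * X := by
    intro k
    induction k with
    | zero => simpa using base
    | succ k ih =>
      refine (step k).trans ((add_le_add ih le_rfl).trans (le_of_eq ?_))
      rw [← add_mul, ← ENNReal.ofReal_add (by positivity) (by positivity), ← mul_add,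
        Finset.sum_range_succ _ (k + 1)]
  intro k
  refine (sum k).trans ?_
  gcongr
  rw [← tsum_geometric_of_lt_one hθ0.le hθ1]
  exact (summable_geometric_of_lt_one hθ0.le hθ1).sum_le_tsum _ fun i _ => by positivity

/-! ### From blurred to genuine incidences -/

/-- The slope of the line through `x` and `y`. -/
def slp (x y : ℝ × ℝ) : ℝ := (y.2 - x.2) / (y.1 - x.1)

@[fun_prop]
lemma measurable_slp : Measurable fun p : (ℝ × ℝ) × (ℝ × ℝ) => slp p.1 p.2 := by
  unfold slp; fun_prop

/-- Pairs of points whose line is at distance more than `δ` from the complement of `G`, in the space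
of base points and slopes. -/
def stable (G : Set ((ℝ × ℝ) × ℝ)) (δ : ℝ) : Set ((ℝ × ℝ) × (ℝ × ℝ)) :=
  {p | ENNReal.ofReal δ < infEDist (p.1, slp p.1 p.2) Gᶜ}

lemma measurableSet_stable (G : Set ((ℝ × ℝ) × ℝ)) (δ : ℝ) : MeasurableSet (stable G δ) := by
  have : Measurable fun p : (ℝ × ℝ) × (ℝ × ℝ) => infEDist (p.1, slp p.1 p.2) Gᶜ :=
    measurable_infEDist.comp (by fun_prop)
  exact measurableSet_lt measurable_const this

lemma mem_of_stable {G : Set ((ℝ × ℝ) × ℝ)} {δ a : ℝ} {x y : ℝ × ℝ} (h : (x, y) ∈ stable G δ)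
    (ha : |a - slp x y| ≤ δ) : (x, a) ∈ G := by
  by_contra hc
  have h1 : infEDist (x, slp x y) Gᶜ ≤ edist (x, slp x y) (x, a) := infEDist_le_edist_of_mem hc
  have h2 : edist (x, slp x y) (x, a) ≤ ENNReal.ofReal δ := by
    rw [edist_dist, Prod.dist_eq, dist_self, Real.dist_eq, abs_sub_comm]
    exact ENNReal.ofReal_le_ofReal (max_le ((abs_nonneg _).trans ha) ha)
  exact absurd h (not_lt.2 (h1.trans h2))

lemma iUnion_stable {G : Set ((ℝ × ℝ) × ℝ)} (hG : IsOpen G) {δ : ℝ} (k₀ : ℕ) :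
    {p : (ℝ × ℝ) × (ℝ × ℝ) | (p.1, slp p.1 p.2) ∈ G} ⊆ ⋃ k : ℕ, stable G (δ / 2 ^ (k + k₀)) := by
  intro p hp
  have h1 : 0 < infEDist (p.1, slp p.1 p.2) Gᶜ := by
    rw [pos_iff_ne_zero, Ne, ← mem_closure_iff_infEDist_zero, hG.isClosed_compl.closure_eq]
    exact fun h => h hp
  have h2 : Filter.Tendsto (fun k : ℕ => ENNReal.ofReal (δ / 2 ^ (k + k₀))) Filter.atTop
      (nhds (ENNReal.ofReal 0)) := by
    refine ENNReal.tendsto_ofReal ?_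
    have := (tendsto_pow_atTop_nhds_zero_of_lt_one (r := (1 / 2 : ℝ)) (by norm_num)
      (by norm_num)).const_mul (δ / 2 ^ k₀)
    rw [mul_zero] at this
    refine this.congr fun k => ?_
    rw [pow_add, one_div, inv_pow]; field_simp
  rw [ENNReal.ofReal_zero] at h2
  obtain ⟨k, hk⟩ := (h2.eventually_lt_const h1).exists
  exact Set.mem_iUnion.2 ⟨k, hk⟩

lemma stable_mono (G : Set ((ℝ × ℝ) × ℝ)) {δ δ' : ℝ} (h : δ ≤ δ') : stable G δ' ⊆ stable G δ :=
  fun _ hp => lt_of_le_of_lt (ENNReal.ofReal_le_ofReal h) hp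

/-- Near a point `z`, the density of the family `G` at scale `ρ` is at least a constant times the
mass of the base points whose line to `z` is stably in `G`. -/
lemma le_avL {ν : Measure (ℝ × ℝ)} [IsFiniteMeasure ν] {M c₀ D ρ : ℝ} (hM : 1 ≤ M)
    (hc₀ : 0 < c₀) (hD : c₀ ≤ D) (hρ : 0 < ρ) (hρ1 : 2 * ρ ≤ c₀)
    (hρ2 : (2 * M / c₀ + 1 / (4 * D)) * ρ ≤ 1) {G : Set ((ℝ × ℝ) × ℝ)} (hG : MeasurableSet G)
    {y z : ℝ × ℝ} (hz : ∀ᵐ x ∂ν, c₀ ≤ |z.1 - x.1| ∧ |z.1 - x.1| ≤ D ∧ |slp x z| ≤ M - 1)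
    (hy : y ∈ closedBall z ρ) :
    ENNReal.ofReal (1 / (8 * M * D)) *
      ν {x | (x, z) ∈ stable G ((2 * M / c₀ + 1 / (4 * D)) * ρ)} ≤
      avL ((lam ν M).restrict G) ρ y := by
  have hM0 : 0 < M := by linarith
  have hD0 : 0 < D := by linarith
  set δ : ℝ := (2 * M / c₀ + 1 / (4 * D)) * ρ with hδ
  set T : Set (ℝ × ℝ) := {x | (x, z) ∈ stable G δ} with hT
  have hTm : MeasurableSet T := (measurableSet_stable G δ).preimage (by fun_prop)
  have hmE : Measurable fun l : (ℝ × ℝ) × ℝ => G.indicator (fun l => mE ρ l.2 (cdist l y)) l :=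
    (measurable_mE_left ρ y).indicator hG
  rw [mem_closedBall, Prod.dist_eq, max_le_iff, Real.dist_eq, Real.dist_eq] at hy
  calc ENNReal.ofReal (1 / (8 * M * D)) * ν T
      = ∫⁻ x in T, ENNReal.ofReal (1 / (8 * M * D)) ∂ν := (setLIntegral_const _ _).symm
    _ ≤ ∫⁻ x in T, (∫⁻ a in Set.Icc (-M) M,
          G.indicator (fun l => mE ρ l.2 (cdist l y)) (x, a)) ∂ν := by
        refine lintegral_mono_ae ?_
        filter_upwards [ae_restrict_mem hTm, ae_restrict_of_ae hz] with x hxT hx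
        obtain ⟨hx1, hx2, hx3⟩ := hx
        have hyx1 : c₀ / 2 ≤ |y.1 - x.1| := by
          have := abs_sub_abs_le_abs_sub (z.1 - x.1) (-(y.1 - z.1))
          rw [abs_neg, sub_neg_eq_add, show z.1 - x.1 + (y.1 - z.1) = y.1 - x.1 by ring] at this
          linarith
        have hyx2 : |y.1 - x.1| ≤ 2 * D := by
          have := abs_add_le (z.1 - x.1) (y.1 - z.1)
          rw [show z.1 - x.1 + (y.1 - z.1) = y.1 - x.1 by ring] at this
          linarith
        have hyx0 : y.1 - x.1 ≠ 0 := by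
          intro h; rw [h, abs_zero] at hyx1; linarith
        have hzx0 : z.1 - x.1 ≠ 0 := by
          intro h; rw [h, abs_zero] at hx1; linarith
        have hsl : |slp x y - slp x z| ≤ 2 * M / c₀ * ρ := by
          have e : slp x y - slp x z = ((y.2 - z.2) - slp x z * (y.1 - z.1)) / (y.1 - x.1) := by
            unfold slp; field_simp; ring
          rw [e, abs_div, div_le_iff₀ (by linarith)]
          have h1 : |(y.2 - z.2) - slp x z * (y.1 - z.1)| ≤ ρ + (M - 1) * ρ := by
            refine (abs_sub _ _).trans (add_le_add hy.2 ?_)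
            rw [abs_mul]
            exact mul_le_mul hx3 hy.1 (abs_nonneg _) (by linarith)
          calc _ ≤ ρ + (M - 1) * ρ := h1
            _ = 2 * M / c₀ * ρ * (c₀ / 2) := by field_simp; ring
            _ ≤ _ := by gcongr
        calc ENNReal.ofReal (1 / (8 * M * D))
            = ∫⁻ a in closedBall (slp x y) (ρ / (4 * D)), ENNReal.ofReal (1 / (4 * M * ρ)) := by
              rw [setLIntegral_const, Real.volume_closedBall, ← ENNReal.ofReal_mul (by positivity)]
              congr 1; field_simp; norm_num
          _ ≤ ∫⁻ a in closedBall (slp x y) (ρ / (4 * D)),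
                G.indicator (fun l => mE ρ l.2 (cdist l y)) (x, a) := by
              refine setLIntegral_mono' isClosed_closedBall.measurableSet fun a ha => ?_
              rw [mem_closedBall, Real.dist_eq] at ha
              have hd : |a - slp x z| ≤ δ := by
                have := abs_add_le (a - slp x y) (slp x y - slp x z)
                rw [sub_add_sub_cancel] at this
                have e : δ = 2 * M / c₀ * ρ + ρ / (4 * D) := by rw [hδ]; ring
                linarith
              rw [Set.indicator_of_mem (mem_of_stable hxT hd)]
              refine le_mE hρ hM ?_ ?_
              · have := abs_add_le (a - slp x z) (slp x z)
                rw [sub_add_cancel] at this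
                linarith
              · have e : cdist (x, a) y = (slp x y - a) * (y.1 - x.1) := by
                  unfold slp cdist; field_simp
                rw [e, abs_mul, abs_sub_comm]
                calc |a - slp x y| * |y.1 - x.1| ≤ ρ / (4 * D) * (2 * D) := by gcongr
                  _ = ρ / 2 := by field_simp; norm_num
          _ ≤ _ := by
              refine lintegral_mono_set fun a ha => ?_
              rw [mem_closedBall, Real.dist_eq] at ha
              refine abs_le.1 ?_
              have h1 := abs_add_le (a - slp x y) (slp x y - slp x z)
              have h2 := abs_add_le (a - slp x z) (slp x z)
              rw [sub_add_sub_cancel] at h1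
              rw [sub_add_cancel] at h2
              have e : δ = 2 * M / c₀ * ρ + ρ / (4 * D) := by rw [hδ]; ring
              linarith
    _ ≤ ∫⁻ x, (∫⁻ a in Set.Icc (-M) M,
          G.indicator (fun l => mE ρ l.2 (cdist l y)) (x, a)) ∂ν := setLIntegral_le_lintegral _ _
    _ = ∫⁻ l, G.indicator (fun l => mE ρ l.2 (cdist l y)) l ∂(lam ν M) := by
        rw [lam, lintegral_prod _ hmE.aemeasurable]
    _ = _ := by rw [lintegral_indicator hG]; rfl

/-- Genuine incidences are detected by the blurred count. -/
lemma le_inc {μ ν : Measure (ℝ × ℝ)} [IsFiniteMeasure μ] [IsFiniteMeasure ν] {M c₀ D ρ : ℝ}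
    (hM : 1 ≤ M) (hc₀ : 0 < c₀) (hD : c₀ ≤ D) (hρ : 0 < ρ) (hρ1 : 2 * ρ ≤ c₀)
    (hρ2 : (2 * M / c₀ + 1 / (4 * D)) * ρ ≤ 1) {G : Set ((ℝ × ℝ) × ℝ)} (hG : MeasurableSet G)
    (hz : ∀ᵐ z ∂μ, ∀ᵐ x ∂ν, c₀ ≤ |z.1 - x.1| ∧ |z.1 - x.1| ≤ D ∧ |slp x z| ≤ M - 1) :
    ENNReal.ofReal (1 / (8 * M * D)) *
      (ν.prod μ) (stable G ((2 * M / c₀ + 1 / (4 * D)) * ρ)) ≤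
      inc μ ((lam ν M).restrict G) ρ ρ := by
  rw [inc_eq, Measure.prod_apply_symm (measurableSet_stable _ _),
    ← lintegral_const_mul' _ _ ENNReal.ofReal_ne_top,
    ← lintegral_const_mul' _ _ ENNReal.ofReal_ne_top]
  refine lintegral_mono_ae ?_
  filter_upwards [hz] with z hz
  set A := ENNReal.ofReal (1 / (8 * M * D)) *
    ν ((fun x => (x, z)) ⁻¹' stable G ((2 * M / c₀ + 1 / (4 * D)) * ρ)) with hA
  calc A = ENNReal.ofReal (1 / (4 * ρ ^ 2)) * ∫⁻ y in closedBall z ρ, A := by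
        rw [setLIntegral_const, volume_closedBall_prod z hρ, mul_left_comm,
          ← ENNReal.ofReal_mul (by positivity), one_div_mul_cancel (by positivity),
          ENNReal.ofReal_one, mul_one]
    _ ≤ ENNReal.ofReal (1 / (4 * ρ ^ 2)) *
        ∫⁻ y in closedBall z ρ, avL ((lam ν M).restrict G) ρ y := by
        gcongr 1
        exact setLIntegral_mono' isClosed_closedBall.measurableSet fun y hy =>
          le_avL hM hc₀ hD hρ hρ1 hρ2 hG hz hy
    _ = _ := by
        rw [← lintegral_indicator isClosed_closedBall.measurableSet]
        congr 1
        refine lintegral_congr fun y => ?_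
        by_cases hy : y ∈ closedBall z ρ <;> simp [hy]

/-- The incidence estimate for an open family of lines, which is exhausted by stable pairs. -/
lemma ball_incidence_open {M c₀ D s t C₀ : ℝ} (hM : 1 ≤ M) (hc₀ : 0 < c₀) (hD : c₀ ≤ D)
    (hs0 : 0 < s) (hs1 : s < 1) (ht2 : t ≤ 2) (hst : 2 < t + s) (hC₀ : 0 < C₀) :
    ∃ C : ℝ, 0 < C ∧ ∀ (μ ν : Measure (ℝ × ℝ)) [IsFiniteMeasure μ] [IsFiniteMeasure ν]
      (X Y : Set (ℝ × ℝ)) (q : ℝ × ℝ) (r η : ℝ) (G : Set ((ℝ × ℝ) × ℝ)),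
      (∀ y ρ, 0 < ρ → μ (closedBall y ρ) ≤ ENNReal.ofReal (C₀ * ρ ^ t)) →
      ν Xᶜ = 0 → μ Yᶜ = 0 →
      (∀ x ∈ X, ∀ y ∈ Y, c₀ ≤ |y.1 - x.1| ∧ |y.1 - x.1| ≤ D ∧ |slp x y| ≤ M - 1) →
      0 < r → r ≤ 1 → 12 * r ≤ c₀ → 0 < η → η ≤ 1 → IsOpen G →
      (ν.prod μ) {p | p.2 ∈ closedBall q r ∧ (p.1, slp p.1 p.2) ∈ G} ≤
        ENNReal.ofReal C * (ENNReal.ofReal η * μ (closedBall q r) +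
          ENNReal.ofReal η⁻¹ * ENNReal.ofReal (r ^ (t - 1)) * Lam ν M s G) := by
  obtain ⟨C₁, hC₁, hinc⟩ := inc_le_ball (c₁ := c₀ / 2) (D := 2 * D) hM (by positivity)
    (by linarith) hs0 hs1 ht2 hst hC₀
  have hD0 : 0 < D := by linarith
  have hM0 : 0 < M := by linarith
  refine ⟨8 * M * D * C₁, by positivity, ?_⟩
  intro μ ν _ _ X Y q r η G hμ hX hY hXY hr hr1 hrc hη hη1 hG
  set Q := closedBall q r with hQ
  set Z : ℝ≥0∞ := ENNReal.ofReal η * μ Q +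
    ENNReal.ofReal η⁻¹ * ENNReal.ofReal (r ^ (t - 1)) * Lam ν M s G with hZ
  have haeX : ∀ᵐ x ∂ν, x ∈ X := hX
  have haeY : ∀ᵐ y ∂μ, y ∈ Y := hY
  by_cases hne : (Q ∩ Y).Nonempty
  swap
  · -- no point of `Y` lies in the ball
    have h0 : μ Q = 0 := measure_mono_null
      (fun y hy hyY => hne ⟨y, hy, hyY⟩) hY
    have : (ν.prod μ) (Set.univ ×ˢ Q) = 0 := by rw [Measure.prod_prod, h0, mul_zero]
    rw [measure_mono_null (fun p hp => (Set.mem_prod.2 ⟨trivial, hp.1⟩ : p ∈ Set.univ ×ˢ Q)) this]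
    exact zero_le
  obtain ⟨y₀, hy₀Q, hy₀Y⟩ := hne
  rw [hQ, mem_closedBall, Prod.dist_eq, max_le_iff, Real.dist_eq] at hy₀Q
  have hνq : ∀ᵐ x' ∂ν, c₀ / 2 ≤ |q.1 - x'.1| ∧ |q.1 - x'.1| ≤ 2 * D := by
    filter_upwards [haeX] with x hx
    obtain ⟨h1, h2, -⟩ := hXY x hx y₀ hy₀Y
    have h3 := abs_sub (y₀.1 - x.1) (y₀.1 - q.1)
    rw [_root_.sub_sub_sub_cancel_left] at h3
    have h4 := abs_sub (q.1 - x.1) (q.1 - y₀.1)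
    rw [_root_.sub_sub_sub_cancel_left, abs_sub_comm q.1 y₀.1] at h4
    constructor <;> linarith [hy₀Q.1]
  have hmain := hinc μ ν q r η G hμ hνq hr hr1 (by linarith) hη hη1 hG.measurableSet
  set δ : ℝ := (2 * M / c₀ + 1 / (4 * D)) * r with hδ
  have hδ0 : 0 < δ := by positivity
  -- from this scale on the genuine incidences are detected
  obtain ⟨k₀, hk₀⟩ : ∃ k₀ : ℕ, δ ≤ 2 ^ k₀ :=
    (pow_unbounded_of_one_lt δ (by norm_num : (1 : ℝ) < 2)).imp fun _ h => h.le
  have hT : ∀ k : ℕ, (ν.prod (μ.restrict Q)) (stable G (δ / 2 ^ (k + k₀))) ≤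
      ENNReal.ofReal (8 * M * D * C₁) * Z := by
    intro k
    have hpow : (1 : ℝ) ≤ 2 ^ (k + k₀) := one_le_pow₀ (by norm_num)
    have hle : r / 2 ^ (k + k₀) ≤ r := div_le_self hr.le hpow
    have e : δ / 2 ^ (k + k₀) = (2 * M / c₀ + 1 / (4 * D)) * (r / 2 ^ (k + k₀)) := by
      rw [hδ]; ring
    have h1 := le_inc (μ := μ.restrict Q) (ν := ν) (ρ := r / 2 ^ (k + k₀)) hM hc₀ hD (by positivity)
      (by linarith) (by
        rw [← e, div_le_one (by positivity)]
        exact hk₀.trans (pow_le_pow_right₀ (by norm_num) (by lia))) hG.measurableSet (by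
        filter_upwards [ae_restrict_of_ae haeY] with z hz
        filter_upwards [haeX] with x hx
        exact hXY x hx z hz)
    rw [← e] at h1
    have h2 := h1.trans (hmain (k + k₀))
    calc (ν.prod (μ.restrict Q)) (stable G (δ / 2 ^ (k + k₀)))
        = ENNReal.ofReal (8 * M * D) * (ENNReal.ofReal (1 / (8 * M * D)) *
          (ν.prod (μ.restrict Q)) (stable G (δ / 2 ^ (k + k₀)))) := by
          rw [← mul_assoc, ← ENNReal.ofReal_mul (by positivity), mul_one_div_cancel (by positivity),
            ENNReal.ofReal_one, one_mul]
      _ ≤ ENNReal.ofReal (8 * M * D) * (ENNReal.ofReal C₁ * Z) := by gcongr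
      _ = _ := by rw [← mul_assoc, ← ENNReal.ofReal_mul (by positivity)]
  have hmono : Monotone fun k : ℕ => stable G (δ / 2 ^ (k + k₀)) := by
    intro i j hij
    refine stable_mono G ?_
    gcongr; norm_num
  have hm : MeasurableSet {p : (ℝ × ℝ) × (ℝ × ℝ) | (p.1, slp p.1 p.2) ∈ G} :=
    hG.measurableSet.preimage (by fun_prop)
  calc (ν.prod μ) {p | p.2 ∈ Q ∧ (p.1, slp p.1 p.2) ∈ G}
      = (ν.prod (μ.restrict Q)) {p | (p.1, slp p.1 p.2) ∈ G} := by
        have : ν.prod (μ.restrict Q) = (ν.prod μ).restrict (Set.univ ×ˢ Q) := by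
          rw [← Measure.prod_restrict, Measure.restrict_univ]
        rw [this, Measure.restrict_apply hm]
        congr 1; ext p; simp [and_comm]
    _ ≤ (ν.prod (μ.restrict Q)) (⋃ k : ℕ, stable G (δ / 2 ^ (k + k₀))) :=
        measure_mono (iUnion_stable hG k₀)
    _ = ⨆ k : ℕ, (ν.prod (μ.restrict Q)) (stable G (δ / 2 ^ (k + k₀))) := hmono.measure_iUnion
    _ ≤ _ := iSup_le hT

/-- The main incidence estimate: the measure of the pairs `(x, y)`, with `y` in a given ball, whose
connecting line belongs to a family `G`. -/
lemma ball_incidence {M c₀ D s t C₀ : ℝ} (hM : 1 ≤ M) (hc₀ : 0 < c₀) (hD : c₀ ≤ D)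
    (hs0 : 0 < s) (hs1 : s < 1) (ht2 : t ≤ 2) (hst : 2 < t + s) (hC₀ : 0 < C₀) :
    ∃ C : ℝ, 0 < C ∧ ∀ (μ ν : Measure (ℝ × ℝ)) [IsFiniteMeasure μ] [IsFiniteMeasure ν]
      (X Y : Set (ℝ × ℝ)) (q : ℝ × ℝ) (r η : ℝ) (G : Set ((ℝ × ℝ) × ℝ)),
      (∀ y ρ, 0 < ρ → μ (closedBall y ρ) ≤ ENNReal.ofReal (C₀ * ρ ^ t)) →
      ν Xᶜ = 0 → μ Yᶜ = 0 →
      (∀ x ∈ X, ∀ y ∈ Y, c₀ ≤ |y.1 - x.1| ∧ |y.1 - x.1| ≤ D ∧ |slp x y| ≤ M - 1) →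
      Lam ν M s Set.univ ≠ ⊤ →
      0 < r → r ≤ 1 → 12 * r ≤ c₀ → 0 < η → η ≤ 1 →
      (ν.prod μ) {p | p.2 ∈ closedBall q r ∧ (p.1, slp p.1 p.2) ∈ G} ≤
        ENNReal.ofReal C * (ENNReal.ofReal η * μ (closedBall q r) +
          ENNReal.ofReal η⁻¹ * ENNReal.ofReal (r ^ (t - 1)) * Lam ν M s G) := by
  obtain ⟨C, hC, hopen⟩ := ball_incidence_open hM hc₀ hD hs0 hs1 ht2 hst hC₀
  refine ⟨C, hC, ?_⟩
  intro μ ν _ _ X Y q r η G hμ hX hY hXY hfin hr hr1 hrc hη hη1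
  have : IsFiniteMeasure (Lam ν M s) := ⟨lt_top_iff_ne_top.2 hfin⟩
  set a := ENNReal.ofReal η * μ (closedBall q r) with ha
  set b := ENNReal.ofReal η⁻¹ * ENNReal.ofReal (r ^ (t - 1)) with hb
  have hbt : b ≠ ⊤ := ENNReal.mul_ne_top ENNReal.ofReal_ne_top ENNReal.ofReal_ne_top
  have key : ∀ n : ℕ, (ν.prod μ) {p | p.2 ∈ closedBall q r ∧ (p.1, slp p.1 p.2) ∈ G} ≤
      ENNReal.ofReal C * (a + b * (Lam ν M s G + ((n : ℝ≥0∞) + 1)⁻¹)) := by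
    intro n
    obtain ⟨U, hGU, hU, hlt⟩ := G.exists_isOpen_lt_add (measure_ne_top (Lam ν M s) G)
      (ε := ((n : ℝ≥0∞) + 1)⁻¹) (by simp)
    calc _ ≤ (ν.prod μ) {p | p.2 ∈ closedBall q r ∧ (p.1, slp p.1 p.2) ∈ U} :=
          measure_mono fun p hp => ⟨hp.1, hGU hp.2⟩
      _ ≤ ENNReal.ofReal C * (a + b * Lam ν M s U) :=
          hopen μ ν X Y q r η U hμ hX hY hXY hr hr1 hrc hη hη1 hU
      _ ≤ _ := by gcongr
  have hlim : Filter.Tendsto (fun n : ℕ => ENNReal.ofReal C * (a + b * (Lam ν M s G +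
      ((n : ℝ≥0∞) + 1)⁻¹))) Filter.atTop
      (nhds (ENNReal.ofReal C * (a + b * (Lam ν M s G + 0)))) := by
    have h0 : Filter.Tendsto (fun n : ℕ => ((n : ℝ≥0∞) + 1)⁻¹) Filter.atTop (nhds 0) := by
      have := (Filter.tendsto_add_atTop_iff_nat 1).2 ENNReal.tendsto_inv_nat_nhds_zero
      simpa using this
    refine ENNReal.Tendsto.const_mul ?_ (Or.inr ENNReal.ofReal_ne_top)
    refine tendsto_const_nhds.add ?_
    exact ENNReal.Tendsto.const_mul (tendsto_const_nhds.add h0) (Or.inr hbt)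
  rw [add_zero] at hlim
  exact ge_of_tendsto' hlim key

/-! ### Finiteness of the weighted measure on lines -/

/-- A dyadic decomposition of a negative power. -/
lemma rpow_neg_le_tsum {s : ℝ} (hs : 0 < s) (u : ℝ) :
    ENNReal.ofReal u ^ (-s) ≤ 1 + ∑' k : ℕ, ENNReal.ofReal (2 ^ (s * (k + 1))) *
      {v : ℝ | v ≤ (1 / 2) ^ k}.indicator 1 u := by
  rcases le_or_gt u 0 with h0 | h0
  · have hall : ∀ k : ℕ, 1 ≤ ENNReal.ofReal (2 ^ (s * (k + 1))) *
        {v : ℝ | v ≤ (1 / 2) ^ k}.indicator (1 : ℝ → ℝ≥0∞) u := by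
      intro k
      have hu : u ∈ {v : ℝ | v ≤ (1 / 2) ^ k} := h0.trans (by positivity)
      rw [Set.indicator_of_mem hu, Pi.one_apply, mul_one, ← ENNReal.ofReal_one]
      exact ENNReal.ofReal_le_ofReal (Real.one_le_rpow (by norm_num) (by positivity))
    have htop : ∑' k : ℕ, ENNReal.ofReal (2 ^ (s * (k + 1))) *
        {v : ℝ | v ≤ (1 / 2) ^ k}.indicator (1 : ℝ → ℝ≥0∞) u = ⊤ := by
      refine top_unique ?_
      calc ⊤ = ∑' _ : ℕ, (1 : ℝ≥0∞) := by
            rw [ENNReal.tsum_const_eq_top_of_ne_zero one_ne_zero]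
        _ ≤ _ := ENNReal.tsum_le_tsum hall
    rw [htop]; simp
  · rcases le_or_gt u 1 with h1 | h1
    · obtain ⟨k, hk1, hk2⟩ := exists_nat_pow_near_of_lt_one h0 h1
        (by norm_num : (0 : ℝ) < 1 / 2) (by norm_num)
      refine le_trans ?_ (le_add_left (ENNReal.le_tsum k))
      have hu : u ∈ {v : ℝ | v ≤ (1 / 2) ^ k} := hk2
      rw [Set.indicator_of_mem hu, Pi.one_apply, mul_one, ENNReal.ofReal_rpow_of_pos h0]
      apply ENNReal.ofReal_le_ofReal
      calc u ^ (-s) ≤ ((1 / 2 : ℝ) ^ (k + 1)) ^ (-s) :=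
            Real.rpow_le_rpow_of_nonpos (by positivity) hk1.le (by linarith)
        _ = 2 ^ (s * (k + 1)) := by
            rw [one_div, inv_pow, Real.rpow_neg (by positivity), Real.inv_rpow (by positivity),
              inv_inv, ← Real.rpow_natCast, ← Real.rpow_mul (by norm_num)]
            push_cast; ring_nf
    · refine le_trans ?_ le_self_add
      rw [ENNReal.ofReal_rpow_of_pos h0, ← ENNReal.ofReal_one]
      exact ENNReal.ofReal_le_ofReal (Real.rpow_le_one_of_one_le_of_nonpos h1.le (by linarith))

/-- Integrability of a negative power of a function with a power bound on its sublevel sets. -/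
lemma lintegral_rpow_neg_le {s s' : ℝ} (hs : 0 < s) (hss : s < s') :
    ∃ c : ℝ, 0 < c ∧ ∀ {α : Type} [MeasurableSpace α] (m : Measure α) (f : α → ℝ) (K : ℝ),
      Measurable f → 0 ≤ K →
      (∀ k : ℕ, m {a | f a ≤ (1 / 2) ^ k} ≤ ENNReal.ofReal (K * ((1 / 2 : ℝ) ^ k) ^ s')) →
      ∫⁻ a, ENNReal.ofReal (f a) ^ (-s) ∂m ≤ m Set.univ + ENNReal.ofReal (K * c) := by
  set θ : ℝ := 2 ^ (s - s') with hθ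
  have hθ0 : 0 < θ := by positivity
  have hθ1 : θ < 1 := Real.rpow_lt_one_of_one_lt_of_neg (by norm_num) (by linarith)
  have h1θ : 0 < 1 - θ := by linarith
  refine ⟨2 ^ s * (1 - θ)⁻¹, by positivity, ?_⟩
  intro α _ m f K hf hK hm
  have hterm : ∀ k : ℕ, (2 : ℝ) ^ (s * (k + 1)) * (K * ((1 / 2 : ℝ) ^ k) ^ s') =
      K * 2 ^ s * θ ^ k := by
    intro k
    rw [hθ, one_div, inv_pow, Real.inv_rpow (by positivity), ← Real.rpow_natCast,
      ← Real.rpow_natCast, ← Real.rpow_mul (by norm_num), ← Real.rpow_mul (by norm_num),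
      ← Real.rpow_neg (by norm_num)]
    have : (2 : ℝ) ^ (s * ((k : ℝ) + 1)) * (K * 2 ^ (-((k : ℝ) * s'))) =
      K * (2 ^ (s * ((k : ℝ) + 1)) * 2 ^ (-((k : ℝ) * s'))) := by ring
    rw [this, ← Real.rpow_add (by norm_num), mul_assoc, ← Real.rpow_add (by norm_num)]
    ring_nf
  calc ∫⁻ a, ENNReal.ofReal (f a) ^ (-s) ∂m
      ≤ ∫⁻ a, (1 + ∑' k : ℕ, ENNReal.ofReal (2 ^ (s * (k + 1))) *
          {v : ℝ | v ≤ (1 / 2) ^ k}.indicator (1 : ℝ → ℝ≥0∞) (f a)) ∂m :=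
        lintegral_mono fun a => rpow_neg_le_tsum hs (f a)
    _ = m Set.univ + ∑' k : ℕ, ENNReal.ofReal (2 ^ (s * (k + 1))) *
          m {a | f a ≤ (1 / 2) ^ k} := by
        have hmeas : ∀ k : ℕ, Measurable fun a =>
            {v : ℝ | v ≤ (1 / 2) ^ k}.indicator (1 : ℝ → ℝ≥0∞) (f a) := fun k =>
          (((measurable_one : Measurable (1 : ℝ → ℝ≥0∞)).indicator measurableSet_Iic).comp hf :)
        rw [lintegral_add_left measurable_const, lintegral_one,
          lintegral_tsum fun k => ((hmeas k).const_mul _).aemeasurable]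
        congr 1
        refine tsum_congr fun k => ?_
        rw [lintegral_const_mul _ (hmeas k)]
        congr 1
        have : (fun a => {v : ℝ | v ≤ (1 / 2) ^ k}.indicator (1 : ℝ → ℝ≥0∞) (f a)) =
            {a | f a ≤ (1 / 2) ^ k}.indicator 1 := by
          ext a; simp [Set.indicator]
        rw [this, lintegral_indicator_one (measurableSet_le hf measurable_const)]
    _ ≤ m Set.univ + ∑' k : ℕ, ENNReal.ofReal (K * 2 ^ s * θ ^ k) := by
        gcongr with k
        rw [← hterm, ENNReal.ofReal_mul (p := 2 ^ (s * ((k : ℝ) + 1))) (by positivity)]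
        gcongr
        exact hm k
    _ = m Set.univ + ENNReal.ofReal (K * (2 ^ s * (1 - θ)⁻¹)) := by
        rw [← ENNReal.ofReal_tsum_of_nonneg (fun k => by positivity)
          ((summable_geometric_of_lt_one hθ0.le hθ1).mul_left _), tsum_mul_left,
          tsum_geometric_of_lt_one hθ0.le hθ1, mul_assoc]

/-- The averaging over the slopes turns the distance to a line into the distance to its base
point. -/
lemma lintegral_cdist_le {M s : ℝ} (hM : 1 ≤ M) (hs : 0 < s) (hs1 : s < 1) :
    ∃ c : ℝ, 0 < c ∧ ∀ x x' : ℝ × ℝ, x ≠ x' →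
      ∫⁻ a in Set.Icc (-M) M, ENNReal.ofReal |cdist (x, a) x'| ^ (-s) ≤
        ENNReal.ofReal c * ENNReal.ofReal (dist x x') ^ (-s) := by
  obtain ⟨c, hc, h⟩ := lintegral_rpow_neg_le hs hs1
  have hM0 : 0 < M := by linarith
  refine ⟨2 * M + 8 * M * c, by positivity, ?_⟩
  intro x x' hne
  set R := dist x x' with hR
  have hR0 : 0 < R := dist_pos.2 hne
  set w₁ := (x'.1 - x.1) / R with hw₁
  set w₂ := (x'.2 - x.2) / R with hw₂
  have hmax : max |w₁| |w₂| = 1 := by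
    rw [hw₁, hw₂, abs_div, abs_div, abs_of_pos hR0, max_div_div_right hR0.le,
      div_eq_one_iff_eq hR0.ne', hR, Prod.dist_eq, Real.dist_eq, Real.dist_eq,
      abs_sub_comm, abs_sub_comm x.2]
  have hcd : ∀ a, |cdist (x, a) x'| = R * |w₂ - a * w₁| := by
    intro a
    have : cdist (x, a) x' = R * (w₂ - a * w₁) := by
      rw [cdist, hw₁, hw₂]; field_simp
    rw [this, abs_mul, abs_of_pos hR0]
  have hsub : ∀ k : ℕ, (volume.restrict (Set.Icc (-M) M)) {a | |w₂ - a * w₁| ≤ (1 / 2) ^ k} ≤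
      ENNReal.ofReal (8 * M * ((1 / 2 : ℝ) ^ k) ^ (1 : ℝ)) := by
    intro k
    rw [Real.rpow_one, Measure.restrict_apply (measurableSet_le (by fun_prop) measurable_const)]
    set e : ℝ := (1 / 2) ^ k with he
    have he0 : 0 < e := by positivity
    rcases le_or_gt (1 / (2 * M)) |w₁| with h1 | h1
    · have hw0 : 0 < |w₁| := lt_of_lt_of_le (by positivity) h1
      calc volume ({a | |w₂ - a * w₁| ≤ e} ∩ Set.Icc (-M) M)
          ≤ volume (closedBall (w₂ / w₁) (e / |w₁|)) := by
            refine measure_mono fun a ha => ?_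
            have ha : |w₂ - a * w₁| ≤ e := ha.1
            rw [mem_closedBall, Real.dist_eq, le_div_iff₀ hw0, ← abs_mul]
            refine le_trans (le_of_eq ?_) ha
            rw [abs_sub_comm w₂]
            congr 1
            have : w₁ ≠ 0 := abs_pos.1 hw0
            field_simp
        _ = ENNReal.ofReal (2 * (e / |w₁|)) := Real.volume_closedBall _ _
        _ ≤ _ := by
            apply ENNReal.ofReal_le_ofReal
            have : e / |w₁| ≤ e * (2 * M) := by
              rw [div_le_iff₀ hw0, mul_assoc]
              have : 1 ≤ 2 * M * |w₁| := by
                rw [div_le_iff₀ (by positivity)] at h1; linarith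
              nlinarith
            nlinarith
    · have hw2 : |w₂| = 1 := by
        have h3 : |w₁| < 1 := by
          refine h1.trans_le ?_
          rw [div_le_one (by positivity)]; linarith
        rcases max_choice |w₁| |w₂| with h | h <;> rw [h] at hmax
        · linarith
        · exact hmax
      rcases le_or_gt (1 / 4) e with h4 | h4
      · calc volume ({a | |w₂ - a * w₁| ≤ e} ∩ Set.Icc (-M) M)
            ≤ volume (Set.Icc (-M) M) := measure_mono Set.inter_subset_right
          _ = ENNReal.ofReal (2 * M) := by rw [Real.volume_Icc]; congr 1; ring
          _ ≤ _ := ENNReal.ofReal_le_ofReal (by nlinarith)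
      · have : {a | |w₂ - a * w₁| ≤ e} ∩ Set.Icc (-M) M = ∅ := by
          ext a
          simp only [Set.mem_inter_iff, Set.mem_empty_iff_false, iff_false, not_and]
          intro ha hamem
          have h5 : |w₂ - a * w₁| ≤ e := ha
          have h6 := abs_sub_abs_le_abs_sub w₂ (a * w₁)
          rw [abs_mul, hw2] at h6
          have h7 : |a| ≤ M := abs_le.2 hamem
          have h8 : |a| * |w₁| ≤ M * (1 / (2 * M)) := by gcongr
          have h9 : M * (1 / (2 * M)) = 1 / 2 := by field_simp
          linarith
        rw [this, measure_empty]; exact zero_le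
  have hfin := h (volume.restrict (Set.Icc (-M) M)) (fun a => |w₂ - a * w₁|) (8 * M)
    (by fun_prop) (by positivity) hsub
  rw [Measure.restrict_apply_univ, Real.volume_Icc] at hfin
  calc ∫⁻ a in Set.Icc (-M) M, ENNReal.ofReal |cdist (x, a) x'| ^ (-s)
      = ∫⁻ a in Set.Icc (-M) M, ENNReal.ofReal R ^ (-s) *
          ENNReal.ofReal |w₂ - a * w₁| ^ (-s) := by
        refine lintegral_congr fun a => ?_
        rw [hcd, ENNReal.ofReal_mul hR0.le, 
          ENNReal.mul_rpow_of_ne_top ENNReal.ofReal_ne_top ENNReal.ofReal_ne_top]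
    _ = ENNReal.ofReal R ^ (-s) * ∫⁻ a in Set.Icc (-M) M,
          ENNReal.ofReal |w₂ - a * w₁| ^ (-s) := by
        refine lintegral_const_mul _ ?_
        exact Measurable.pow_const (by fun_prop) _
    _ ≤ ENNReal.ofReal R ^ (-s) * (ENNReal.ofReal (M - -M) + ENNReal.ofReal (8 * M * c)) := by
        gcongr
    _ = _ := by
        rw [← ENNReal.ofReal_add (by linarith) (by positivity), mul_comm]
        ring_nf

lemma Lam_ne_top {ν : Measure (ℝ × ℝ)} [IsFiniteMeasure ν] {M s s' C : ℝ} (hM : 1 ≤ M)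
    (hs : 0 < s) (hs1 : s < 1) (hss : s < s') (hC : 0 ≤ C)
    (hν : ∀ x ρ, 0 < ρ → ν (closedBall x ρ) ≤ ENNReal.ofReal (C * ρ ^ s')) :
    Lam ν M s Set.univ ≠ ⊤ := by
  obtain ⟨c₁, hc₁, h1⟩ := lintegral_cdist_le hM hs hs1
  obtain ⟨c₂, hc₂, h2⟩ := lintegral_rpow_neg_le hs hss
  have hatom : ∀ x, ν {x} = 0 := by
    intro x
    have hlim : Filter.Tendsto (fun ρ : ℝ => ENNReal.ofReal (C * ρ ^ s'))
        (nhdsWithin 0 (Set.Ioi 0)) (nhds 0) := by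
      have h3 : ContinuousAt (fun ρ : ℝ => ENNReal.ofReal (C * ρ ^ s')) 0 :=
        (ENNReal.continuous_ofReal.continuousAt).comp
          ((Real.continuousAt_rpow_const 0 s' (Or.inr (by linarith))).const_mul C)
      have h4 := h3.tendsto.mono_left (nhdsWithin_le_nhds (s := Set.Ioi 0))
      simpa [Real.zero_rpow (by linarith : s' ≠ 0)] using h4
    refine le_antisymm (ge_of_tendsto hlim ?_) zero_le
    filter_upwards [self_mem_nhdsWithin] with ρ hρ
    exact (measure_mono (Set.singleton_subset_iff.2 (mem_closedBall_self (le_of_lt hρ)))).trans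
      (hν x ρ hρ)
  set A : ℝ≥0∞ := ENNReal.ofReal c₁ * (ν Set.univ + ENNReal.ofReal (C * c₂)) with hA
  have hAt : A ≠ ⊤ := ENNReal.mul_ne_top ENNReal.ofReal_ne_top
    (ENNReal.add_ne_top.2 ⟨measure_ne_top _ _, ENNReal.ofReal_ne_top⟩)
  have hin : ∀ x, ∫⁻ a in Set.Icc (-M) M, enW ν s (x, a) ≤ A := by
    intro x
    calc ∫⁻ a in Set.Icc (-M) M, enW ν s (x, a)
        = ∫⁻ x', (∫⁻ a in Set.Icc (-M) M, ENNReal.ofReal |cdist (x, a) x'| ^ (-s)) ∂ν := by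
          unfold enW
          refine lintegral_lintegral_swap ?_
          refine Measurable.aemeasurable ?_
          refine Measurable.pow_const ?_ _
          unfold cdist
          fun_prop
      _ ≤ ∫⁻ x', ENNReal.ofReal c₁ * ENNReal.ofReal (dist x x') ^ (-s) ∂ν := by
          refine lintegral_mono_ae ?_
          have : ∀ᵐ x' ∂ν, x' ∈ ({x} : Set (ℝ × ℝ))ᶜ := by
            rw [ae_iff]; simpa using hatom x
          filter_upwards [this] with x' hx'
          exact h1 x x' fun h => hx' h.symm
      _ = ENNReal.ofReal c₁ * ∫⁻ x', ENNReal.ofReal (dist x x') ^ (-s) ∂ν :=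
          lintegral_const_mul' _ _ ENNReal.ofReal_ne_top
      _ ≤ A := by
          rw [hA]
          gcongr
          refine h2 ν (fun x' => dist x x') C (by fun_prop) hC fun k => ?_
          have : {a | dist x a ≤ (1 / 2 : ℝ) ^ k} = closedBall x ((1 / 2) ^ k) := by
            ext y; simp [dist_comm]
          rw [this]
          exact hν x _ (by positivity)
  have hfin : ∫⁻ l, enW ν s l ∂(lam ν M) ≤ ν Set.univ * A := by
    unfold lam
    rw [lintegral_prod _ (measurable_enW ν s).aemeasurable]
    calc _ ≤ ∫⁻ _, A ∂ν := lintegral_mono hin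
      _ = _ := by rw [lintegral_const, mul_comm]
  rw [Lam, withDensity_apply _ MeasurableSet.univ, Measure.restrict_univ,
    lintegral_add_left measurable_const, lintegral_one]
  exact ENNReal.add_ne_top.2 ⟨measure_ne_top _ _,
    ne_top_of_le_ne_top (ENNReal.mul_ne_top (measure_ne_top _ _) hAt) hfin⟩

/-! ### Covering the slices by finitely many squares -/

lemma tendsto_wt {τ : ℝ} (hτ : 0 < τ) (m : ℕ → ℤ × ℤ) :
    Filter.Tendsto (fun k => wt τ (k, m k)) Filter.atTop (nhds 0) := by
  have hr : Filter.Tendsto (fun n : ℕ => ENNReal.ofReal (1 / 2 ^ n)) Filter.atTop (nhds 0) := by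
    rw [← ENNReal.ofReal_zero]
    refine ENNReal.tendsto_ofReal ?_
    simpa using tendsto_pow_atTop_nhds_zero_of_lt_one (r := (1 / 2 : ℝ)) (by norm_num) (by norm_num)
  have := hr.ennrpow_const τ
  rw [ENNReal.zero_rpow_of_pos hτ] at this
  refine this.congr fun k => ofReal_one_div_two_pow_rpow τ hτ.le k (m k)

lemma exists_box_of_ediam {τ : ℝ} (hτ : 0 < τ) {T : Set (ℝ × ℝ)}
    (hT : ediam T ≤ ENNReal.ofReal (1 / 4)) {δ : ℝ≥0∞} (hδ : 0 < δ) :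
    ∃ i : Idx, T ⊆ box i ∧ wt τ i ≤ ENNReal.ofReal 4 ^ τ * ediam T ^ τ + δ := by
  rcases T.eq_empty_or_nonempty with rfl | ⟨x, hx⟩
  · obtain ⟨k, hk⟩ := ((tendsto_wt hτ fun _ => 0).eventually (gt_mem_nhds hδ)).exists
    exact ⟨_, Set.empty_subset _, hk.le.trans le_add_self⟩
  have htop : ediam T ≠ ⊤ := ne_top_of_le_ne_top ENNReal.ofReal_ne_top hT
  have hbox : ∀ k : ℕ, ediam T < ENNReal.ofReal (1 / 2 ^ k) → T ⊆ box (k, cell k x) := by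
    intro k hk y hy
    refine mem_box_cell ?_
    have := (edist_le_ediam_of_mem hy hx).trans_lt hk
    rw [edist_dist] at this
    exact (ENNReal.ofReal_lt_ofReal_iff (by positivity)).1 this
  rcases eq_or_ne (ediam T) 0 with h0 | h0
  · obtain ⟨k, hk⟩ := ((tendsto_wt hτ fun k => cell k x).eventually (gt_mem_nhds hδ)).exists
    refine ⟨_, hbox k ?_, hk.le.trans le_add_self⟩
    rw [h0]; exact ENNReal.ofReal_pos.2 (by positivity)
  · set d := (ediam T).toReal with hd
    have hd0 : 0 < d := ENNReal.toReal_pos h0 htop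
    have hde : ediam T = ENNReal.ofReal d := (ENNReal.ofReal_toReal htop).symm
    have hd1 : 2 * d ≤ 1 := by
      rw [hde, ENNReal.ofReal_le_ofReal_iff (by norm_num)] at hT
      linarith
    obtain ⟨k, hk1, hk2⟩ := exists_nat_pow_near_of_lt_one (by positivity : 0 < 2 * d) hd1
        (by norm_num : (0 : ℝ) < 1 / 2) (by norm_num)
    rw [one_div, inv_pow, ← one_div] at hk1 hk2
    refine ⟨(k, cell k x), hbox k ?_, le_trans ?_ le_self_add⟩
    · rw [hde, ENNReal.ofReal_lt_ofReal_iff (by positivity)]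
      linarith
    · rw [← ofReal_one_div_two_pow_rpow τ hτ.le, ← ENNReal.mul_rpow_of_nonneg _ _ hτ.le, hde,
        ← ENNReal.ofReal_mul (by norm_num)]
      refine ENNReal.rpow_le_rpow (ENNReal.ofReal_le_ofReal ?_) hτ.le
      have : (1 : ℝ) / 2 ^ (k + 1) = 1 / 2 ^ k / 2 := by rw [pow_succ]; field_simp
      rw [this] at hk1
      linarith

/-- A compact set of dimension less than `τ` has finite covers by squares of arbitrarily small
total weight. -/
lemma exists_finite_cover {τ : ℝ} (hτ : 0 < τ) {S : Set (ℝ × ℝ)} (hS : IsCompact S)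
    (hd : dimH S < ENNReal.ofReal τ) {ε : ℝ≥0∞} (hε : ε ≠ 0) :
    ∃ F : Finset Idx, ∑ i ∈ F, wt τ i ≤ ε ∧ S ⊆ ⋃ i ∈ F, box i := by
  have h0 : μH[τ] S = 0 := by
    have := hausdorffMeasure_of_dimH_lt (d := τ.toNNReal) hd
    rwa [Real.coe_toNNReal _ hτ.le] at this
  have hε2 : ε / 2 ≠ 0 := (ENNReal.half_pos hε).ne'
  obtain ⟨δ, hδ, hδε⟩ := ENNReal.exists_pos_sum_of_countable' hε2 ℕ
  set c : ℝ≥0∞ := ENNReal.ofReal 4 ^ τ with hc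
  have hc0 : c ≠ 0 := by
    rw [hc, Ne, ENNReal.rpow_eq_zero_iff_of_pos hτ]; simp
  have hct : c ≠ ⊤ := ENNReal.rpow_ne_top_of_nonneg hτ.le ENNReal.ofReal_ne_top
  have hlt : 0 < ε / 2 / c := ENNReal.div_pos hε2 hct
  rw [Measure.hausdorffMeasure_apply] at h0
  have h1 : (⨅ (T : ℕ → Set (ℝ × ℝ)) (_ : S ⊆ ⋃ n, T n)
      (_ : ∀ n, ediam (T n) ≤ ENNReal.ofReal (1 / 4)),
      ∑' n, ⨆ _ : (T n).Nonempty, ediam (T n) ^ τ) < ε / 2 / c := by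
    refine lt_of_le_of_lt ?_ hlt
    rw [← h0]
    exact le_iSup₂ (f := fun (r : ℝ≥0∞) (_ : 0 < r) => ⨅ (T : ℕ → Set (ℝ × ℝ))
      (_ : S ⊆ ⋃ n, T n) (_ : ∀ n, ediam (T n) ≤ r),
      ∑' n, ⨆ _ : (T n).Nonempty, ediam (T n) ^ τ) (ENNReal.ofReal (1 / 4))
      (ENNReal.ofReal_pos.2 (by norm_num))
  simp only [iInf_lt_iff] at h1
  obtain ⟨T, hST, hTd, hsum⟩ := h1
  choose i hi hwt using fun n => exists_box_of_ediam hτ (hTd n) (hδ n)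
  have htot : ∑' n, wt τ (i n) ≤ ε := by
    calc ∑' n, wt τ (i n)
        ≤ ∑' n, (c * (⨆ _ : (T n).Nonempty, ediam (T n) ^ τ) + δ n) := by
          refine ENNReal.tsum_le_tsum fun n => (hwt n).trans ?_
          gcongr
          rcases (T n).eq_empty_or_nonempty with h | h
          · simp [h, ENNReal.zero_rpow_of_pos hτ]
          · exact le_iSup (fun _ : (T n).Nonempty => ediam (T n) ^ τ) h
      _ = c * ∑' n, (⨆ _ : (T n).Nonempty, ediam (T n) ^ τ) + ∑' n, δ n := by
          rw [ENNReal.tsum_add, ENNReal.tsum_mul_left]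
      _ ≤ c * (ε / 2 / c) + ε / 2 := by gcongr
      _ = ε := by rw [ENNReal.mul_div_cancel hc0 hct, ENNReal.add_halves]
  obtain ⟨J, hJ⟩ := hS.elim_finite_subcover (fun n => box (i n)) (fun n => isOpen_box _)
    (hST.trans (Set.iUnion_mono hi))
  classical
  refine ⟨J.image i, ?_, ?_⟩
  · calc ∑ j ∈ J.image i, wt τ j ≤ ∑ n ∈ J, wt τ (i n) :=
          Finset.sum_image_le_of_nonneg (fun _ _ => zero_le)
      _ ≤ ∑' n, wt τ (i n) := ENNReal.sum_le_tsum J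
      _ ≤ ε := htot
  · simpa using hJ

/-- The lines whose intersection with `K` is covered by the squares of the finite family `F`. -/
def goodF (K : Set (ℝ × ℝ)) (F : Finset Idx) : Set ((ℝ × ℝ) × ℝ) :=
  {l | ∀ y ∈ K, cdist l y = 0 → y ∈ ⋃ i ∈ F, box i}

/-- The lines whose intersection with `K` is covered by finitely many squares of total weight at
most `ε`. -/
def good (K : Set (ℝ × ℝ)) (τ : ℝ) (ε : ℝ≥0∞) : Set ((ℝ × ℝ) × ℝ) :=
  ⋃ F ∈ {F : Finset Idx | ∑ i ∈ F, wt τ i ≤ ε}, goodF K F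

lemma isOpen_goodF {K : Set (ℝ × ℝ)} (hK : IsCompact K) (F : Finset Idx) :
    IsOpen (goodF K F) := by
  have hU : IsOpen (⋃ i ∈ F, box i) := isOpen_biUnion fun i _ => isOpen_box i
  rw [isOpen_iff_eventually]
  intro l₀ hl₀
  have hcont : Continuous fun z : ((ℝ × ℝ) × ℝ) × (ℝ × ℝ) => cdist z.1 z.2 := by
    unfold cdist; fun_prop
  have := (hK.diff hU).eventually_forall_of_forall_eventually (x₀ := l₀)
    (P := fun l y => cdist l y ≠ 0) (fun y hy => by
      refine hcont.continuousAt.eventually_ne ?_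
      exact fun h => hy.2 (hl₀ y hy.1 h))
  filter_upwards [this] with l hl y hy h0
  by_contra hc
  exact hl y ⟨hy, hc⟩ h0

lemma isOpen_good {K : Set (ℝ × ℝ)} (hK : IsCompact K) (τ : ℝ) (ε : ℝ≥0∞) :
    IsOpen (good K τ ε) := isOpen_biUnion fun F _ => isOpen_goodF hK F

lemma mem_good {K : Set (ℝ × ℝ)} (hK : IsCompact K) {τ : ℝ} (hτ : 0 < τ) {ε : ℝ≥0∞} (hε : ε ≠ 0)
    {l : (ℝ × ℝ) × ℝ} (hl : dimH (K ∩ {y | cdist l y = 0}) < ENNReal.ofReal τ) :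
    l ∈ good K τ ε := by
  have hc : IsClosed {y | cdist l y = 0} :=
    isClosed_eq (by unfold cdist; fun_prop) continuous_const
  obtain ⟨F, hF, hcov⟩ := exists_finite_cover hτ (hK.inter_right hc) hl hε
  exact Set.mem_biUnion (x := F) hF fun y hy h0 => hcov ⟨hy, h0⟩

/-! ### Summation of the incidence estimate -/

/-- The radius of the enlarged square of level `k`. -/
def rad (k : ℕ) : ℝ := (3 / 2) / 2 ^ k

lemma rad_pos (k : ℕ) : 0 < rad k := by unfold rad; positivity

lemma tsum_closedBall_le (μ : Measure (ℝ × ℝ)) (k : ℕ) :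
    ∑' m : ℤ × ℤ, μ (closedBall (ctr (k, m)) (rad k)) ≤ 25 * μ Set.univ := by
  have aux : ∀ (u : ℝ) (m : ℤ), |u - (m + 1 / 2) / 2 ^ k| ≤ rad k →
      m ∈ Finset.Icc (⌊2 ^ k * u⌋ - 2) (⌊2 ^ k * u⌋ + 2) := by
    intro u m hu
    have h2 : (0 : ℝ) < 2 ^ k := by positivity
    have e : u - (m + 1 / 2) / 2 ^ k = (2 ^ k * u - (m + 1 / 2)) / 2 ^ k := by field_simp
    rw [e, abs_div, abs_of_pos h2, rad, div_le_div_iff_of_pos_right h2, abs_le] at hu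
    rw [Finset.mem_Icc]
    have h3 := Int.floor_le (2 ^ k * u)
    have h4 := Int.lt_floor_add_one (2 ^ k * u)
    constructor
    · have : (⌊2 ^ k * u⌋ : ℝ) < m + 2 + 1 := by linarith
      have : ⌊2 ^ k * u⌋ < m + 2 + 1 := by exact_mod_cast this
      lia
    · have : (m : ℝ) < ⌊2 ^ k * u⌋ + 2 + 1 := by linarith
      have : m < ⌊2 ^ k * u⌋ + 2 + 1 := by exact_mod_cast this
      lia
  have hpt : ∀ y : ℝ × ℝ, ∑' m : ℤ × ℤ,
      (closedBall (ctr (k, m)) (rad k)).indicator (1 : ℝ × ℝ → ℝ≥0∞) y ≤ 25 := by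
    intro y
    set N : Finset (ℤ × ℤ) := Finset.Icc (⌊2 ^ k * y.1⌋ - 2) (⌊2 ^ k * y.1⌋ + 2) ×ˢ
      Finset.Icc (⌊2 ^ k * y.2⌋ - 2) (⌊2 ^ k * y.2⌋ + 2) with hN
    have hcard : N.card = 25 := by
      rw [hN, Finset.card_product, Int.card_Icc, Int.card_Icc]
      have : ∀ z : ℤ, (z + 2 + 1 - (z - 2)).toNat = 5 := fun z => by
        rw [show z + 2 + 1 - (z - 2) = 5 by ring]; rfl
      rw [this, this]
    rw [tsum_eq_sum (s := N)]
    · calc ∑ m ∈ N, (closedBall (ctr (k, m)) (rad k)).indicator (1 : ℝ × ℝ → ℝ≥0∞) y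
          ≤ ∑ m ∈ N, 1 := Finset.sum_le_sum fun m _ => Set.indicator_le_self' (by simp) y
        _ = 25 := by simp [hcard]
    · intro m hm
      refine Set.indicator_of_notMem (fun hy => hm ?_) _
      rw [mem_closedBall, Prod.dist_eq, max_le_iff, Real.dist_eq, Real.dist_eq] at hy
      exact Finset.mem_product.2 ⟨aux _ _ hy.1, aux _ _ hy.2⟩
  calc ∑' m : ℤ × ℤ, μ (closedBall (ctr (k, m)) (rad k))
      = ∑' m : ℤ × ℤ, ∫⁻ y, (closedBall (ctr (k, m)) (rad k)).indicator 1 y ∂μ := by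
        refine tsum_congr fun m => ?_
        rw [lintegral_indicator_one isClosed_closedBall.measurableSet]
    _ = ∫⁻ y, ∑' m : ℤ × ℤ, (closedBall (ctr (k, m)) (rad k)).indicator 1 y ∂μ := by
        rw [lintegral_tsum fun m => (measurable_one.indicator
          isClosed_closedBall.measurableSet).aemeasurable]
    _ ≤ ∫⁻ _, 25 ∂μ := lintegral_mono hpt
    _ = _ := lintegral_const _

/-- The incidence estimate in balls, for a measure `Λ` on lines. -/
def BallEst (μ ν : Measure (ℝ × ℝ)) (Λ : Measure ((ℝ × ℝ) × ℝ)) (C c₀ t : ℝ) : Prop :=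
  ∀ (q : ℝ × ℝ) (r η : ℝ) (G : Set ((ℝ × ℝ) × ℝ)), 0 < r → r ≤ 1 → 12 * r ≤ c₀ → 0 < η → η ≤ 1 →
    (ν.prod μ) {p | p.2 ∈ closedBall q r ∧ (p.1, slp p.1 p.2) ∈ G} ≤
      ENNReal.ofReal C * (ENNReal.ofReal η * μ (closedBall q r) +
        ENNReal.ofReal η⁻¹ * ENNReal.ofReal (r ^ (t - 1)) * Λ G)

/-- Almost no pair of points spans a line in a null family of lines. -/
lemma BallEst.null {μ ν : Measure (ℝ × ℝ)} [IsFiniteMeasure μ] [IsFiniteMeasure ν]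
    {Λ : Measure ((ℝ × ℝ) × ℝ)} {C c₀ t : ℝ} (h : BallEst μ ν Λ C c₀ t) (hc₀ : 0 < c₀)
    {K : Set (ℝ × ℝ)} (hK : IsCompact K) (hμK : μ Kᶜ = 0) {G : Set ((ℝ × ℝ) × ℝ)}
    (hG : Λ G = 0) : (ν.prod μ) {p | (p.1, slp p.1 p.2) ∈ G} = 0 := by
  set r : ℝ := min 1 (c₀ / 12) with hr
  have hr0 : 0 < r := by rw [hr]; positivity
  have hball : ∀ q, (ν.prod μ) {p | p.2 ∈ closedBall q r ∧ (p.1, slp p.1 p.2) ∈ G} = 0 := by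
    intro q
    have h1 : ∀ n : ℕ, (ν.prod μ) {p | p.2 ∈ closedBall q r ∧ (p.1, slp p.1 p.2) ∈ G} ≤
        ENNReal.ofReal C * (ENNReal.ofReal (1 / ((n : ℝ) + 1)) * μ (closedBall q r)) := by
      intro n
      have := h q r (1 / ((n : ℝ) + 1)) G hr0 (min_le_left _ _)
        (by have := min_le_right 1 (c₀ / 12); linarith) (by positivity)
        (by rw [div_le_one (by positivity)]; linarith [(Nat.cast_nonneg n : (0 : ℝ) ≤ n)])
      rwa [hG, mul_zero, add_zero] at this
    have hlim : Filter.Tendsto (fun n : ℕ => ENNReal.ofReal C *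
        (ENNReal.ofReal (1 / ((n : ℝ) + 1)) * μ (closedBall q r))) Filter.atTop
        (nhds (ENNReal.ofReal C * (ENNReal.ofReal 0 * μ (closedBall q r)))) := by
      refine ENNReal.Tendsto.const_mul ?_ (Or.inr ENNReal.ofReal_ne_top)
      refine ENNReal.Tendsto.mul_const ?_ (Or.inr (measure_ne_top _ _))
      exact ENNReal.tendsto_ofReal tendsto_one_div_add_atTop_nhds_zero_nat
    rw [ENNReal.ofReal_zero, zero_mul, mul_zero] at hlim
    exact le_antisymm (ge_of_tendsto' hlim h1) zero_le
  obtain ⟨T, -, hT, hcov⟩ := hK.finite_cover_balls hr0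
  have hnull : (ν.prod μ) (Set.univ ×ˢ Kᶜ) = 0 := by rw [Measure.prod_prod, hμK, mul_zero]
  refine measure_mono_null (t := (Set.univ ×ˢ Kᶜ) ∪
    ⋃ q ∈ T, {p | p.2 ∈ closedBall q r ∧ (p.1, slp p.1 p.2) ∈ G}) ?_
    (measure_union_null hnull ((measure_biUnion_null_iff hT.countable).2 fun q _ => hball q))
  intro p hp
  by_cases hpK : p.2 ∈ K
  · right
    obtain ⟨q, hq, hpq⟩ := Set.mem_iUnion₂.1 (hcov hpK)
    exact Set.mem_biUnion hq ⟨ball_subset_closedBall hpq, hp⟩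
  · exact Or.inl ⟨trivial, hpK⟩

/-- A decomposition of the lines with a cheap finite cover, according to the squares that are
used. -/
lemma exists_decomposition {K : Set (ℝ × ℝ)} (hK : IsCompact K) (τ : ℝ) (e : ℝ≥0∞)
    (Λ : Measure ((ℝ × ℝ) × ℝ)) :
    ∃ G : Idx → Set ((ℝ × ℝ) × ℝ), ∑' i, wt τ i * Λ (G i) ≤ e * Λ Set.univ ∧
      (∀ i, (G i).Nonempty → wt τ i ≤ e) ∧
      ∀ l ∈ good K τ e, ∀ y ∈ K, cdist l y = 0 → ∃ i, y ∈ box i ∧ l ∈ G i := by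
  obtain ⟨f, hf⟩ := (Set.to_countable {F : Finset Idx | ∑ i ∈ F, wt τ i ≤ e}).exists_eq_range
    ⟨∅, by simp⟩
  have hfe : ∀ n, ∑ i ∈ f n, wt τ i ≤ e := fun n => by
    have : f n ∈ {F : Finset Idx | ∑ i ∈ F, wt τ i ≤ e} := hf ▸ Set.mem_range_self n
    exact this
  set A : ℕ → Set ((ℝ × ℝ) × ℝ) := fun n => goodF K (f n) with hA
  have hAm : ∀ n, MeasurableSet (disjointed A n) :=
    fun n => MeasurableSet.disjointed (fun n => (isOpen_goodF hK (f n)).measurableSet) n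
  classical
  refine ⟨fun i => ⋃ n ∈ {n | i ∈ f n}, disjointed A n, ?_, ?_, ?_⟩
  · calc ∑' i, wt τ i * Λ (⋃ n ∈ {n | i ∈ f n}, disjointed A n)
        ≤ ∑' i, ∑' n, (if i ∈ f n then wt τ i * Λ (disjointed A n) else 0) := by
          refine ENNReal.tsum_le_tsum fun i => ?_
          calc wt τ i * Λ (⋃ n ∈ {n | i ∈ f n}, disjointed A n)
              ≤ wt τ i * ∑' n : {n | i ∈ f n}, Λ (disjointed A n) := by
                gcongr
                exact measure_biUnion_le _ (Set.to_countable _) _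
            _ = ∑' n : {n | i ∈ f n}, wt τ i * Λ (disjointed A n) := by
                rw [ENNReal.tsum_mul_left]
            _ = ∑' n, (if i ∈ f n then wt τ i * Λ (disjointed A n) else 0) := by
                rw [tsum_subtype {n | i ∈ f n} fun n => wt τ i * Λ (disjointed A n)]
                exact tsum_congr fun n => by simp [Set.indicator]
      _ = ∑' n, ∑' i, (if i ∈ f n then wt τ i * Λ (disjointed A n) else 0) := ENNReal.tsum_comm
      _ ≤ ∑' n, e * Λ (disjointed A n) := by
          refine ENNReal.tsum_le_tsum fun n => ?_
          rw [tsum_eq_sum (s := f n) (fun i hi => if_neg hi)]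
          calc ∑ i ∈ f n, (if i ∈ f n then wt τ i * Λ (disjointed A n) else 0)
              = ∑ i ∈ f n, wt τ i * Λ (disjointed A n) :=
                Finset.sum_congr rfl fun i hi => if_pos hi
            _ = (∑ i ∈ f n, wt τ i) * Λ (disjointed A n) := by rw [Finset.sum_mul]
            _ ≤ _ := by gcongr; exact hfe n
      _ = e * Λ (⋃ n, disjointed A n) := by
          rw [ENNReal.tsum_mul_left, measure_iUnion (disjoint_disjointed A) hAm]
      _ ≤ _ := by gcongr; exact Set.subset_univ _
  · rintro i ⟨l, hl⟩
    obtain ⟨n, hn, -⟩ := Set.mem_iUnion₂.1 hl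
    exact (Finset.single_le_sum (fun _ _ => zero_le) hn).trans (hfe n)
  · intro l hl y hy h0
    obtain ⟨F, hF, hlF⟩ := Set.mem_iUnion₂.1 hl
    obtain ⟨n, rfl⟩ : F ∈ Set.range f := hf ▸ hF
    have h1 : l ∈ ⋃ n, disjointed A n := by
      rw [iUnion_disjointed]; exact Set.mem_iUnion.2 ⟨n, hlF⟩
    obtain ⟨m, hm⟩ := Set.mem_iUnion.1 h1
    have h2 : l ∈ goodF K (f m) := disjointed_subset A m hm
    obtain ⟨i, hi, hyi⟩ := Set.mem_iUnion₂.1 (h2 y hy h0)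
    exact ⟨i, hyi, Set.mem_biUnion (show m ∈ {n | i ∈ f n} from hi) hm⟩

/-- If almost all pairs of points span a line with a cheap finite cover, the total mass is
small. -/
lemma BallEst.total_le {μ ν : Measure (ℝ × ℝ)} [IsFiniteMeasure μ] [IsFiniteMeasure ν]
    {Λ : Measure ((ℝ × ℝ) × ℝ)} {C c₀ t t' ε : ℝ} (h : BallEst μ ν Λ C c₀ t')
    (htt : t < t') (ht2 : t' ≤ 2) {K X : Set (ℝ × ℝ)} (hK : IsCompact K) (hμK : μ Kᶜ = 0)
    (hνX : ν Xᶜ = 0) (hXK : ∀ x ∈ X, ∀ y ∈ K, y.1 ≠ x.1) (hε : 0 < ε) (hε1 : ε ≤ 1) {e : ℝ≥0∞}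
    (he : ∀ i, wt (t - 1) i ≤ e → rad i.1 ≤ 1 ∧ 12 * rad i.1 ≤ c₀)
    (hgood : (ν.prod μ) {p | (p.1, slp p.1 p.2) ∈ (good K (t - 1) e)ᶜ} = 0) :
    (ν.prod μ) Set.univ ≤ ENNReal.ofReal C * (ENNReal.ofReal ε *
      (ENNReal.ofReal (1 - 2 ^ (t - t'))⁻¹ * (25 * μ Set.univ)) +
        ENNReal.ofReal (2 * ε⁻¹) * (e * Λ Set.univ)) := by
  obtain ⟨G, hsum, hGe, hGcov⟩ := exists_decomposition hK (t - 1) e Λ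
  set θ : ℝ := 2 ^ (t - t') with hθ
  have hθ0 : 0 < θ := by positivity
  have hθ1 : θ < 1 := Real.rpow_lt_one_of_one_lt_of_neg (by norm_num) (by linarith)
  have hterm : ∀ i : Idx,
      (ν.prod μ) {p | p.2 ∈ closedBall (ctr i) (rad i.1) ∧ (p.1, slp p.1 p.2) ∈ G i} ≤
      ENNReal.ofReal C * (ENNReal.ofReal (ε * θ ^ i.1) * μ (closedBall (ctr i) (rad i.1)) +
        ENNReal.ofReal (2 * ε⁻¹) * (wt (t - 1) i * Λ (G i))) := by
    intro i
    rcases (G i).eq_empty_or_nonempty with h0 | hne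
    · simp [h0]
    obtain ⟨hr1, hr2⟩ := he i (hGe i hne)
    -- with the parameter `ε * θ ^ k` at level `k` the first terms are summable, and the factor
    -- `θ ^ (-k)` in the second ones is absorbed by the gap between `t` and `t'`
    refine (h (ctr i) (rad i.1) (ε * θ ^ i.1) (G i) (rad_pos _) hr1 hr2 (by positivity)
      (mul_le_one₀ hε1 (by positivity) (pow_le_one₀ hθ0.le hθ1.le))).trans ?_
    refine mul_le_mul' le_rfl (add_le_add le_rfl ?_)
    rw [← mul_assoc (ENNReal.ofReal (2 * ε⁻¹))]
    refine mul_le_mul' ?_ le_rfl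
    rw [wt, ← ENNReal.ofReal_mul (by positivity), ← ENNReal.ofReal_mul (by positivity)]
    apply ENNReal.ofReal_le_ofReal
    have e1 : rad i.1 ^ (t' - 1) = (3 / 2) ^ (t' - 1) * 2 ^ (-((t' - 1) * i.1)) := by
      rw [rad, Real.div_rpow (by norm_num) (by positivity), div_eq_mul_inv,
        Real.rpow_neg (by norm_num), mul_comm (t' - 1), Real.rpow_mul (by norm_num),
        Real.rpow_natCast]
    have e2 : (θ ^ i.1)⁻¹ * (2 : ℝ) ^ (-((t' - 1) * i.1)) = 2 ^ (-((t - 1) * i.1)) := by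
      rw [hθ, ← Real.rpow_natCast, ← Real.rpow_mul (by norm_num), ← Real.rpow_neg (by norm_num),
        ← Real.rpow_add (by norm_num)]
      ring_nf
    have e3 : (3 / 2 : ℝ) ^ (t' - 1) ≤ 2 := by
      calc (3 / 2 : ℝ) ^ (t' - 1) ≤ (3 / 2) ^ (1 : ℝ) :=
            Real.rpow_le_rpow_of_exponent_le (by norm_num) (by linarith)
        _ ≤ 2 := by norm_num
    calc (ε * θ ^ i.1)⁻¹ * rad i.1 ^ (t' - 1)
        = (3 / 2) ^ (t' - 1) * ε⁻¹ * ((θ ^ i.1)⁻¹ * 2 ^ (-((t' - 1) * i.1))) := by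
          rw [e1, mul_inv]; ring
      _ = (3 / 2) ^ (t' - 1) * ε⁻¹ * 2 ^ (-((t - 1) * i.1)) := by rw [e2]
      _ ≤ _ := by gcongr
  have hnull1 : (ν.prod μ) (Set.univ ×ˢ Kᶜ) = 0 := by rw [Measure.prod_prod, hμK, mul_zero]
  have hnull2 : (ν.prod μ) (Xᶜ ×ˢ Set.univ) = 0 := by rw [Measure.prod_prod, hνX, zero_mul]
  have hcov : Set.univ ⊆ ((Set.univ ×ˢ Kᶜ ∪ Xᶜ ×ˢ Set.univ) ∪
      {p | (p.1, slp p.1 p.2) ∈ (good K (t - 1) e)ᶜ}) ∪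
      ⋃ i : Idx, {p | p.2 ∈ closedBall (ctr i) (rad i.1) ∧ (p.1, slp p.1 p.2) ∈ G i} := by
    rintro ⟨x, y⟩ -
    by_cases hy : y ∈ K
    swap
    · exact Or.inl (Or.inl (Or.inl ⟨trivial, hy⟩))
    by_cases hx : x ∈ X
    swap
    · exact Or.inl (Or.inl (Or.inr ⟨hx, trivial⟩))
    by_cases hl : (x, slp x y) ∈ good K (t - 1) e
    swap
    · exact Or.inl (Or.inr hl)
    have hne : y.1 - x.1 ≠ 0 := sub_ne_zero.2 (hXK x hx y hy)
    obtain ⟨i, hi, hGi⟩ := hGcov _ hl y hy (by simp only [cdist, slp]; field_simp; ring)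
    exact Or.inr (Set.mem_iUnion.2 ⟨i, ball_subset_closedBall hi, hGi⟩)
  calc (ν.prod μ) Set.univ
      ≤ 0 + ∑' i : Idx,
        (ν.prod μ) {p | p.2 ∈ closedBall (ctr i) (rad i.1) ∧ (p.1, slp p.1 p.2) ∈ G i} := by
        refine (measure_mono hcov).trans ((measure_union_le _ _).trans ?_)
        refine add_le_add (le_of_eq ?_) (measure_iUnion_le _)
        exact measure_union_null (measure_union_null hnull1 hnull2) hgood
    _ ≤ ∑' i : Idx, ENNReal.ofReal C *
          (ENNReal.ofReal (ε * θ ^ i.1) * μ (closedBall (ctr i) (rad i.1)) +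
          ENNReal.ofReal (2 * ε⁻¹) * (wt (t - 1) i * Λ (G i))) := by
        rw [zero_add]; exact ENNReal.tsum_le_tsum hterm
    _ = ENNReal.ofReal C *
          (∑' i : Idx, ENNReal.ofReal (ε * θ ^ i.1) * μ (closedBall (ctr i) (rad i.1)) +
          ENNReal.ofReal (2 * ε⁻¹) * ∑' i : Idx, (wt (t - 1) i * Λ (G i))) := by
        rw [ENNReal.tsum_mul_left, ENNReal.tsum_add, ENNReal.tsum_mul_left (a := ENNReal.ofReal _)]
    _ ≤ _ := by
        refine mul_le_mul' le_rfl (add_le_add ?_ (mul_le_mul' le_rfl hsum))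
        calc ∑' i : Idx, ENNReal.ofReal (ε * θ ^ i.1) * μ (closedBall (ctr i) (rad i.1))
            = ∑' k : ℕ, ∑' m : ℤ × ℤ, ENNReal.ofReal (ε * θ ^ k) *
                μ (closedBall (ctr (k, m)) (rad k)) := ENNReal.tsum_prod'
          _ ≤ ∑' k : ℕ, ENNReal.ofReal (ε * θ ^ k) * (25 * μ Set.univ) := by
              refine ENNReal.tsum_le_tsum fun k => ?_
              rw [ENNReal.tsum_mul_left]
              exact mul_le_mul' le_rfl (tsum_closedBall_le μ k)
          _ = ENNReal.ofReal (ε * (1 - θ)⁻¹) * (25 * μ Set.univ) := by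
              rw [ENNReal.tsum_mul_right, ← ENNReal.ofReal_tsum_of_nonneg
                (fun k => by positivity)
                ((summable_geometric_of_lt_one hθ0.le hθ1).mul_left _), tsum_mul_left,
                tsum_geometric_of_lt_one hθ0.le hθ1]
          _ = _ := by rw [ENNReal.ofReal_mul hε.le, mul_assoc]

/-! ### The slicing theorem for separated sets in the coordinate plane -/

lemma exists_real_between {a u : ℝ} {b : ℝ≥0∞} (ha : 0 ≤ a) (hab : ENNReal.ofReal a < b)
    (hau : a < u) : ∃ a' : ℝ, a < a' ∧ a' < u ∧ ENNReal.ofReal a' < b := by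
  have hu : 0 < u := by linarith
  obtain ⟨c, h1, h2⟩ := exists_between
    (lt_min hab ((ENNReal.ofReal_lt_ofReal_iff hu).2 hau))
  have hct : c ≠ ⊤ := (h2.trans_le (min_le_right _ _)).ne_top
  have hc : ENNReal.ofReal c.toReal = c := ENNReal.ofReal_toReal hct
  refine ⟨c.toReal, ?_, ?_, ?_⟩
  · rw [← hc] at h1; exact (ENNReal.ofReal_lt_ofReal_iff_of_nonneg ha).1 h1
  · have := h2.trans_le (min_le_right _ _)
    rw [← hc] at this; exact (ENNReal.ofReal_lt_ofReal_iff hu).1 this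
  · rw [hc]; exact h2.trans_le (min_le_left _ _)

/-- If the dimensions of `B` and `E` exceed `t` and `2 - t`, and `B`, `E` are bounded and separated
in the horizontal direction, some point of `E` sees slices of dimension at least `t - 1` for a set
of slopes of positive measure. -/
theorem exists_slices {t c₀ D : ℝ} (ht1 : 1 < t) (ht2 : t < 2) (hc₀ : 0 < c₀) (hD : c₀ ≤ D)
    {B E : Set (ℝ × ℝ)} (hB : MeasurableSet B) (hdB : ENNReal.ofReal t < dimH B)
    (hdE : ENNReal.ofReal (2 - t) < dimH E)
    (hsep : ∀ x ∈ E, ∀ y ∈ B, c₀ ≤ |y.1 - x.1| ∧ |y.1 - x.1| ≤ D ∧ |y.2 - x.2| ≤ D) :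
    ∃ x ∈ E, volume {a : ℝ | ENNReal.ofReal (t - 1) ≤ dimH (B ∩ {y | cdist (x, a) y = 0})} ≠ 0 := by
  by_contra! hE
  obtain ⟨t', htt, ht'2, ht'B⟩ := exists_real_between (by linarith) hdB ht2
  obtain ⟨s, hss, -, hsE⟩ := exists_real_between (by linarith) hdE (lt_add_one _)
  obtain ⟨μ, K, C₀, hμfin, hK, hKB, hμK, hμ0, hC₀, hμ⟩ := frostman (by linarith) hB ht'B
  set τ : ℝ := t - 1 with hτ
  have hτ0 : 0 < τ := by linarith
  -- a Borel set containing `E` with the same covering properties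
  set X : Set (ℝ × ℝ) := {x | ∀ y ∈ K, c₀ ≤ |y.1 - x.1| ∧ |y.1 - x.1| ≤ D ∧ |y.2 - x.2| ≤ D} with hX
  have hXc : IsClosed X := by
    have : X = ⋂ y ∈ K, {x : ℝ × ℝ | c₀ ≤ |y.1 - x.1|} ∩ ({x : ℝ × ℝ | |y.1 - x.1| ≤ D} ∩
        {x : ℝ × ℝ | |y.2 - x.2| ≤ D}) := by
      ext x; simp [hX]
    rw [this]
    refine isClosed_biInter fun y _ => (isClosed_le ?_ ?_).inter
      ((isClosed_le ?_ ?_).inter (isClosed_le ?_ ?_)) <;> fun_prop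
  set e : ℕ → ℝ≥0∞ := fun n => ((n : ℝ≥0∞) + 1)⁻¹ with he
  have he0 : ∀ n, e n ≠ 0 := fun n => by simp [he]
  set E' : Set (ℝ × ℝ) := X ∩ ⋂ n, {x | volume (Prod.mk x ⁻¹' (good K τ (e n))ᶜ) = 0} with hE'
  have hgm : ∀ n, MeasurableSet (good K τ (e n))ᶜ :=
    fun n => (isOpen_good hK τ (e n)).measurableSet.compl
  have hE'm : MeasurableSet E' := by
    refine hXc.measurableSet.inter (MeasurableSet.iInter fun n => ?_)
    exact measurable_measure_prodMk_left (hgm n) (measurableSet_singleton 0)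
  have hEE' : E ⊆ E' := by
    intro x hx
    refine ⟨fun y hy => hsep x hx y (hKB hy), Set.mem_iInter.2 fun n => ?_⟩
    refine measure_mono_null (fun a ha => ?_) (hE x hx)
    by_contra hlt
    refine ha (mem_good hK hτ0 (he0 n) (lt_of_le_of_lt (dimH_mono ?_) (not_le.1 hlt)))
    exact Set.inter_subset_inter_left _ hKB
  obtain ⟨ν, Kν, C₁, hνfin, -, hKE, hνK, hν0, hC₁, hν⟩ := frostman (t := s) (by linarith) hE'm
    (hsE.trans_le (dimH_mono hEE'))
  set M : ℝ := D / c₀ + 1 with hM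
  have hM1 : 1 ≤ M := by
    have : 0 ≤ D / c₀ := div_nonneg (by linarith) hc₀.le
    linarith
  have hfin : Lam ν M (2 - t) Set.univ ≠ ⊤ :=
    Lam_ne_top hM1 (by linarith) (by linarith) hss hC₁.le hν
  obtain ⟨C, hC, hball⟩ := ball_incidence (M := M) (s := 2 - t) hM1 hc₀ hD (by linarith)
    (by linarith) ht'2.le (by linarith) hC₀
  have hest : BallEst μ ν (Lam ν M (2 - t)) C c₀ t' := by
    intro q r η G hr hr1 hrc hη hη1
    refine hball μ ν Kν K q r η G hμ hνK hμK (fun x hx y hy => ?_) hfin hr hr1 hrc hη hη1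
    obtain ⟨h1, h2, h3⟩ := (hKE hx).1 y hy
    refine ⟨h1, h2, ?_⟩
    rw [slp, abs_div, hM, add_sub_cancel_right]
    exact div_le_div₀ (by linarith) h3 hc₀ h1
  have hnull : ∀ n, (ν.prod μ) {p | (p.1, slp p.1 p.2) ∈ (good K τ (e n))ᶜ} = 0 := by
    intro n
    refine hest.null hc₀ hK hμK (withDensity_absolutelyContinuous _ _ ?_)
    rw [lam, Measure.measure_prod_null (hgm n)]
    have : ∀ᵐ x ∂ν, x ∈ Kν := hνK
    filter_upwards [this] with x hx
    exact Measure.absolutelyContinuous_of_le Measure.restrict_le_self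
      (Set.mem_iInter.1 (hKE hx).2 n)
  have hLt := hfin
  set Λ := Lam ν M (2 - t) with hΛ
  have helim : Filter.Tendsto e Filter.atTop (nhds 0) := by
    have := (Filter.tendsto_add_atTop_iff_nat 1).2 ENNReal.tendsto_inv_nat_nhds_zero
    simpa [he] using this
  -- cheap covers only use small squares
  have hsmall : ∀ᶠ n in Filter.atTop, ∀ i, wt τ i ≤ e n → rad i.1 ≤ 1 ∧ 12 * rad i.1 ≤ c₀ := by
    have hrad : Filter.Tendsto rad Filter.atTop (nhds 0) := by
      have := (tendsto_pow_atTop_nhds_zero_of_lt_one (r := (1 / 2 : ℝ)) (by norm_num)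
        (by norm_num)).const_mul (3 / 2)
      rw [mul_zero] at this
      refine this.congr fun k => ?_
      rw [rad, one_div, inv_pow]; rfl
    obtain ⟨k₀, hk₀⟩ := Filter.eventually_atTop.1
      (hrad.eventually (ge_mem_nhds (by positivity : 0 < min 1 (c₀ / 12))))
    have hw : 0 < wt τ (k₀, 0) := ENNReal.ofReal_pos.2 (by positivity)
    filter_upwards [helim.eventually (gt_mem_nhds hw)] with n hn i hi
    have hk : k₀ ≤ i.1 := by
      have := hi.trans_lt hn
      rw [wt, wt, ENNReal.ofReal_lt_ofReal_iff (by positivity),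
        Real.rpow_lt_rpow_left_iff (by norm_num)] at this
      have h1 : τ * (k₀ : ℝ) < τ * (i.1 : ℝ) := by simpa using this
      exact_mod_cast (lt_of_mul_lt_mul_left h1 hτ0.le).le
    have := hk₀ i.1 hk
    rw [le_min_iff] at this
    exact ⟨this.1, by linarith [this.2]⟩
  set Z : ℝ≥0∞ := ENNReal.ofReal (1 - 2 ^ (t - t'))⁻¹ * (25 * μ Set.univ) with hZ
  have hZt : Z ≠ ⊤ := ENNReal.mul_ne_top ENNReal.ofReal_ne_top
    (ENNReal.mul_ne_top (by norm_num) (measure_ne_top _ _))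
  have hstep : ∀ m : ℕ, (ν.prod μ) Set.univ ≤
      ENNReal.ofReal C * (ENNReal.ofReal (1 / ((m : ℝ) + 1)) * Z) := by
    intro m
    set ε : ℝ := 1 / ((m : ℝ) + 1) with hε
    have hlim : Filter.Tendsto (fun n => ENNReal.ofReal C * (ENNReal.ofReal ε * Z +
        ENNReal.ofReal (2 * ε⁻¹) * (e n * Λ Set.univ))) Filter.atTop
        (nhds (ENNReal.ofReal C * (ENNReal.ofReal ε * Z +
          ENNReal.ofReal (2 * ε⁻¹) * (0 * Λ Set.univ)))) := by
      refine ENNReal.Tendsto.const_mul ?_ (Or.inr ENNReal.ofReal_ne_top)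
      refine tendsto_const_nhds.add ?_
      refine ENNReal.Tendsto.const_mul ?_ (Or.inr ENNReal.ofReal_ne_top)
      exact ENNReal.Tendsto.mul_const helim (Or.inr hLt)
    rw [zero_mul, mul_zero, add_zero] at hlim
    refine ge_of_tendsto hlim ?_
    filter_upwards [hsmall] with n hn
    refine hest.total_le htt ht'2.le hK hμK hνK (fun x hx y hy h0 => ?_) (by positivity) ?_ hn
      (hnull n)
    · have := ((hKE hx).1 y hy).1
      rw [h0, sub_self, abs_zero] at this
      linarith
    · rw [hε, div_le_one (by positivity)]; linarith [(Nat.cast_nonneg m : (0 : ℝ) ≤ m)]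
  have hlim : Filter.Tendsto (fun m : ℕ => ENNReal.ofReal C *
      (ENNReal.ofReal (1 / ((m : ℝ) + 1)) * Z)) Filter.atTop
      (nhds (ENNReal.ofReal C * (ENNReal.ofReal 0 * Z))) := by
    refine ENNReal.Tendsto.const_mul ?_ (Or.inr ENNReal.ofReal_ne_top)
    refine ENNReal.Tendsto.mul_const ?_ (Or.inr hZt)
    exact ENNReal.tendsto_ofReal tendsto_one_div_add_atTop_nhds_zero_nat
  rw [ENNReal.ofReal_zero, zero_mul, mul_zero] at hlim
  have h0 : (ν.prod μ) Set.univ = 0 := le_antisymm (ge_of_tendsto' hlim hstep) zero_le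
  rw [← Set.univ_prod_univ, Measure.prod_prod, mul_eq_zero] at h0
  exact h0.elim hν0 hμ0

/-! ### Transfer to the Euclidean plane -/

/-- The two coordinates of a point of the plane, in a prescribed order. -/
def coord (i j : Fin 2) (hij : i ≠ j) : E2 ≃L[ℝ] ℝ × ℝ :=
  LinearEquiv.toContinuousLinearEquiv
    { toFun := fun v => (v i, v j)
      invFun := fun p => WithLp.toLp 2 fun k => if k = i then p.1 else p.2
      map_add' := fun v w => by simp
      map_smul' := fun c v => by simp
      left_inv := fun v => by
        ext k
        by_cases hk : k = i
        · simp [hk]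
        · have : k = j := by lia
          simp [this, hij.symm]
      right_inv := fun p => by simp [hij.symm] }

lemma coord_apply {i j : Fin 2} (hij : i ≠ j) (v : E2) : coord i j hij v = (v i, v j) := rfl

lemma abs_apply_le (v : E2) (i : Fin 2) : |v i| ≤ ‖v‖ := by
  simpa using PiLp.norm_apply_le v i

/-- Null sets of directions correspond to null sets of slopes. -/
lemma volume_slopes_eq_zero {i j : Fin 2} {S : Set E2} (hS : S ⊆ sphere (0 : E2) 1)
    (h0 : μH[1] S = 0) : volume ((fun e : E2 => e j / e i) '' (S ∩ {e | e i ≠ 0})) = 0 := by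
  have hlip : ∀ n : ℕ, LipschitzOnWith (2 * ((n : NNReal) + 1) ^ 2) (fun e : E2 => e j / e i)
      (S ∩ {e | 1 / ((n : ℝ) + 1) < |e i|}) := by
    intro n
    refine LipschitzOnWith.of_dist_le_mul fun e he f hf => ?_
    have hn : (0 : ℝ) < 1 / ((n : ℝ) + 1) := by positivity
    have he1 : 1 / ((n : ℝ) + 1) < |e i| := he.2
    have hf1 : 1 / ((n : ℝ) + 1) < |f i| := hf.2
    have he0 : 0 < |e i| := hn.trans he1
    have hf0 : 0 < |f i| := hn.trans hf1
    have hej : |e j| ≤ 1 := (abs_apply_le e j).trans (by simpa using (hS he.1).le)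
    have hei : |e i| ≤ 1 := (abs_apply_le e i).trans (by simpa using (hS he.1).le)
    have hdi : |f i - e i| ≤ dist e f := by
      rw [dist_comm, dist_eq_norm]; exact abs_apply_le (f - e) i
    have hdj : |e j - f j| ≤ dist e f := by
      rw [dist_eq_norm]; exact abs_apply_le (e - f) j
    have e1 : e j / e i - f j / f i = (e j * (f i - e i) + e i * (e j - f j)) / (e i * f i) := by
      have := abs_pos.1 he0
      have := abs_pos.1 hf0
      field_simp
      ring
    rw [Real.dist_eq, e1, abs_div, abs_mul (e i) (f i)]
    have hnum : |e j * (f i - e i) + e i * (e j - f j)| ≤ 2 * dist e f := by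
      refine (abs_add_le _ _).trans ?_
      rw [abs_mul, abs_mul]
      have := mul_le_mul hej hdi (abs_nonneg _) zero_le_one
      have := mul_le_mul hei hdj (abs_nonneg _) zero_le_one
      linarith
    have hden : 1 / ((n : ℝ) + 1) * (1 / ((n : ℝ) + 1)) ≤ |e i| * |f i| :=
      mul_le_mul he1.le hf1.le hn.le he0.le
    calc |e j * (f i - e i) + e i * (e j - f j)| / (|e i| * |f i|)
        ≤ 2 * dist e f / (1 / ((n : ℝ) + 1) * (1 / ((n : ℝ) + 1))) := by
          gcongr
      _ = ((2 * ((n : NNReal) + 1) ^ 2 : NNReal) : ℝ) * dist e f := by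
          push_cast; field_simp
  have hsub : (fun e : E2 => e j / e i) '' (S ∩ {e | e i ≠ 0}) ⊆
      ⋃ n : ℕ, (fun e : E2 => e j / e i) '' (S ∩ {e | 1 / ((n : ℝ) + 1) < |e i|}) := by
    rintro _ ⟨e, ⟨heS, he⟩, rfl⟩
    obtain ⟨n, hn⟩ := exists_nat_one_div_lt (abs_pos.2 he)
    exact Set.mem_iUnion.2 ⟨n, e, ⟨heS, hn⟩, rfl⟩
  refine measure_mono_null hsub (measure_iUnion_null fun n => ?_)
  rw [← hausdorffMeasure_real]
  refine le_antisymm (((hlip n).hausdorffMeasure_image_le zero_le_one).trans ?_) zero_le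
  rw [measure_mono_null Set.inter_subset_left h0, mul_zero]

/-- The slicing theorem for sets separated in the direction of the coordinate `i`, in terms of unit
vectors instead of slopes. -/
lemma exists_directions {t c₀ D : ℝ} (ht1 : 1 < t) (ht2 : t < 2) (hc₀ : 0 < c₀) (hD : c₀ ≤ D)
    {i j : Fin 2} (hij : i ≠ j) {B E : Set E2} (hB : MeasurableSet B)
    (hdB : ENNReal.ofReal t < dimH B) (hdE : ENNReal.ofReal (2 - t) < dimH E)
    (hsep : ∀ x ∈ E, ∀ y ∈ B, c₀ ≤ |y i - x i| ∧ |y i - x i| ≤ D ∧ |y j - x j| ≤ D) :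
    ∃ x ∈ E, μH[1] {e : E2 | e ∈ sphere (0 : E2) 1 ∧
      ENNReal.ofReal (t - 1) ≤ dimH (B ∩ lineThrough x e)} ≠ 0 := by
  set φ := coord i j hij with hφ
  obtain ⟨_, ⟨x, hx, rfl⟩, hvol⟩ := exists_slices (B := φ '' B) (E := φ '' E) ht1 ht2 hc₀ hD
    (φ.toHomeomorph.measurableEmbedding.measurableSet_image.2 hB)
    (by rwa [ContinuousLinearEquiv.dimH_image]) (by rwa [ContinuousLinearEquiv.dimH_image]) (by
      rintro _ ⟨x, hx, rfl⟩ _ ⟨y, hy, rfl⟩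
      exact hsep x hx y hy)
  refine ⟨x, hx, fun h0 => hvol ?_⟩
  refine measure_mono_null ?_ (volume_slopes_eq_zero (i := i) (j := j) (fun e he => he.1) h0)
  intro a ha
  -- the unit vector of slope `a`
  set v : E2 := φ.symm (1, a) with hv
  have hφv : φ v = (1, a) := φ.apply_symm_apply _
  have hvi : v i = 1 := congrArg Prod.fst hφv
  have hvj : v j = a := congrArg Prod.snd hφv
  have hv0 : v ≠ 0 := fun h => by rw [h] at hvi; simp at hvi
  have hn : 0 < ‖v‖ := norm_pos_iff.2 hv0
  refine ⟨‖v‖⁻¹ • v, ⟨⟨?_, ?_⟩, ?_⟩, ?_⟩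
  · rw [mem_sphere_zero_iff_norm, norm_smul, norm_inv, norm_norm, inv_mul_cancel₀ hn.ne']
  · refine le_trans ha ?_
    rw [← ContinuousLinearEquiv.dimH_image φ]
    refine dimH_mono ?_
    rintro _ ⟨⟨w, hw, rfl⟩, h⟩
    have h1 : w j - x j - a * (w i - x i) = 0 := h
    refine ⟨w, ⟨hw, (w i - x i) * ‖v‖, ?_⟩, rfl⟩
    rw [smul_smul, mul_assoc, mul_inv_cancel₀ hn.ne', mul_one]
    apply φ.injective
    rw [map_add, map_smul, hφv, hφ, coord_apply, coord_apply]
    ext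
    · simp
    · simp; linarith
  · simp [hvi, hv0]
  · simp [hvi, hvj]
    field_simp

/-- Main theorem: if `B ⊆ ℝ²` is Borel with `dim_H B > t ∈ (1,2)`, then the set `E` of
points `x` for which positively many radial slices `B ∩ ℓ_{x,e}` fail to have dimension
`≥ t - 1` satisfies `dim_H E ≤ 2 - t`. -/
theorem stmt18 (t : ℝ) (ht : t ∈ Set.Ioo (1:ℝ) 2) (B : Set E2) (hB : MeasurableSet B)
    (hdim : ENNReal.ofReal t < dimH B) :
    dimH {x : E2 | μH[1] {e : E2 | e ∈ sphere (0:E2) 1 ∧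
        ENNReal.ofReal (t - 1) ≤ dimH (B ∩ lineThrough x e)} = 0}
      ≤ ENNReal.ofReal (2 - t) := by
  by_contra! hlt
  set E := {x : E2 | μH[1] {e : E2 | e ∈ sphere (0:E2) 1 ∧
    ENNReal.ofReal (t - 1) ≤ dimH (B ∩ lineThrough x e)} = 0} with hE
  -- localise around distinct points of `E` and `B`
  obtain ⟨x₀, -, hx₀⟩ := exists_mem_nhdsWithin_lt_dimH_of_lt_dimH hlt
  have hdim' : ENNReal.ofReal t < dimH (B \ {x₀}) := by
    have h1 : dimH B ≤ dimH ((B \ {x₀}) ∪ {x₀}) := dimH_mono (by simp)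
    rw [dimH_union, dimH_singleton, max_eq_left zero_le] at h1
    exact hdim.trans_le h1
  obtain ⟨y₀, hy₀, hy₀'⟩ := exists_mem_nhdsWithin_lt_dimH_of_lt_dimH hdim'
  obtain ⟨i, hi⟩ : ∃ i, y₀ i ≠ x₀ i := by
    by_contra! h
    exact hy₀.2 (by ext i; exact h i)
  obtain ⟨j, hij⟩ : ∃ j, i ≠ j := ⟨i + 1, by fin_cases i <;> decide⟩
  set c : ℝ := |y₀ i - x₀ i| with hc
  have hc0 : 0 < c := abs_pos.2 (sub_ne_zero.2 hi)
  have hbx : E ∩ ball x₀ (c / 4) ∈ nhdsWithin x₀ E :=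
    Filter.inter_mem self_mem_nhdsWithin (mem_nhdsWithin_of_mem_nhds (ball_mem_nhds _ (by positivity)))
  have hby : (B \ {x₀}) ∩ ball y₀ (c / 4) ∈ nhdsWithin y₀ (B \ {x₀}) :=
    Filter.inter_mem self_mem_nhdsWithin (mem_nhdsWithin_of_mem_nhds (ball_mem_nhds _ (by positivity)))
  have hclose : ∀ (k : Fin 2) (x y : E2), x ∈ ball x₀ (c / 4) → y ∈ ball y₀ (c / 4) →
      |(y k - x k) - (y₀ k - x₀ k)| ≤ c / 2 := by
    intro k x y hx hy
    rw [mem_ball, dist_eq_norm] at hx hy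
    have h1 : |y k - y₀ k| ≤ ‖y - y₀‖ := abs_apply_le (y - y₀) k
    have h2 : |x k - x₀ k| ≤ ‖x - x₀‖ := abs_apply_le (x - x₀) k
    have h3 := abs_sub (y k - y₀ k) (x k - x₀ k)
    rw [show (y k - x k) - (y₀ k - x₀ k) = (y k - y₀ k) - (x k - x₀ k) by ring]
    linarith
  obtain ⟨x, hx, hne⟩ := exists_directions (c₀ := c / 2) (D := 2 * c + |y₀ j - x₀ j|) ht.1 ht.2
    (by positivity) (by have := abs_nonneg (y₀ j - x₀ j); linarith) hij
    (B := (B \ {x₀}) ∩ ball y₀ (c / 4)) (E := E ∩ ball x₀ (c / 4))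
    ((hB.diff (measurableSet_singleton x₀)).inter measurableSet_ball) (hy₀' _ hby) (hx₀ _ hbx) (by
      intro x hx y hy
      have h1 := hclose i x y hx.2 hy.2
      have h2 := hclose j x y hx.2 hy.2
      have h3 := abs_sub_abs_le_abs_sub (y i - x i) (y₀ i - x₀ i)
      have h4 := abs_sub_abs_le_abs_sub (y₀ i - x₀ i) (y i - x i)
      rw [abs_sub_comm (y₀ i - x₀ i) (y i - x i)] at h4
      have h5 := abs_sub_abs_le_abs_sub (y j - x j) (y₀ j - x₀ j)
      have h6 := abs_nonneg (y₀ j - x₀ j)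
      refine ⟨?_, ?_, ?_⟩ <;> linarith)
  have hsub : {e : E2 | e ∈ sphere (0:E2) 1 ∧ ENNReal.ofReal (t - 1) ≤
        dimH (((B \ {x₀}) ∩ ball y₀ (c / 4)) ∩ lineThrough x e)} ⊆
      {e : E2 | e ∈ sphere (0:E2) 1 ∧ ENNReal.ofReal (t - 1) ≤ dimH (B ∩ lineThrough x e)} :=
    fun e he => ⟨he.1, he.2.trans
      (dimH_mono (Set.inter_subset_inter_left _ fun z hz => hz.1.1))⟩
  exact hne (measure_mono_null hsub hx.1)
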